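/- arXiv:0901.4232 — 6 statements merged into one kernel-verified Lean document; each statement's English description precedes it below -/
import Mathlib

section
/- Let E be a real interval with nonempty interior and n ≥ 2. A function M : Eⁿ → E is continuous, strictly increasing in each variable, and bisymmetric if and only if there exist a continuous strictly monotonic function f : E → ℝ, real numbers p₁,…,pₙ > 0, and q ∈ ℝ such that M(x) = f⁻¹( ∑_{i=1}^n pᵢ f(xᵢ) + q ) for all x ∈ Eⁿ. -/
/-! Bisymmetric, continuous, strictly increasing operations are quasi-linear.

That quasi-linear functions have the listed properties is a direct computation. Conversely, let
`M` be bisymmetric. The diagonal `m t = M (t, …, t)` is strictly increasing, so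
`m (B x y) = M (x, y, …, y)` defines a binary operation `B` on the interval; `B` is an idempotent,
continuous, strictly increasing bisymmetric mean, and bisymmetry of `M` makes `B` commute with `M`
(`exists_mean`).

The mean `B` is symmetrized by the iteration `(x, y) ↦ (B x y, B y x)`, whose two components have
a common limit `S x y` (`IsBisymMean.sym`). Everything continuous that commutes with `B` commutes
with `S`; in particular `S` is bisymmetric and commutes with `M`. Strict monotonicity, which could
be lost in the limit, is recovered from the fact that `S` commutes with `B`
(`IsBisymMean.sym_left`).

A symmetric bisymmetric mean `S` has a generator `f`, that is, `f (S x y) = (f x + f y) / 2`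
(`IsBisymMean.exists_generator`). On a compact interval `[c, b]` the contractions `S c` and `S b`
cover the interval, and `f` reads off binary digits; a deviation from the desired identity would
be at most half of another deviation, so it vanishes. The contraction `S a` for a point `a` inside
`[c, b]` then spreads `f` over the whole interval.

Finally `f ∘ M` turns `S` into the arithmetic mean in each variable separately, so it is an affine
function of `f (x i)` by uniqueness of generators (`IsBisymMean.avg_unique`), and the symmetry of
`S` shows that the slope does not depend on the other variables. -/

open Set Filter Topology

/-! ### Bisymmetric means -/

/-- `B` is a (not necessarily symmetric) bisymmetric mean on `E`: an idempotent, bisymmetric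
binary operation on `E`, strictly increasing in each argument and jointly continuous. -/
structure IsBisymMean (E : Set ℝ) (B : ℝ → ℝ → ℝ) : Prop where
  maps : ∀ x ∈ E, ∀ y ∈ E, B x y ∈ E
  idem : ∀ x ∈ E, B x x = x
  left : ∀ x ∈ E, ∀ x' ∈ E, ∀ y ∈ E, x < x' → B x y < B x' y
  right : ∀ x ∈ E, ∀ y ∈ E, ∀ y' ∈ E, y < y' → B x y < B x y'
  cont : ContinuousOn (fun z : ℝ × ℝ => B z.1 z.2) (E ×ˢ E)
  bisym : ∀ a ∈ E, ∀ b ∈ E, ∀ c ∈ E, ∀ d ∈ E, B (B a b) (B c d) = B (B a c) (B b d)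

/-- Continuity of `g` follows from continuity of `m ∘ g` for strictly increasing `m`, continuous
or not: only order intervals are needed. -/
theorem continuousOn_of_strictMonoOn_comp {X : Type*} [TopologicalSpace X] {E : Set ℝ}
    (hE : E.OrdConnected) {m : ℝ → ℝ} (hm : StrictMonoOn m E) {s : Set X} {g : X → ℝ}
    (hg : ∀ x ∈ s, g x ∈ E) (h : ContinuousOn (fun x => m (g x)) s) : ContinuousOn g s := by
  intro x hx
  refine tendsto_order.2 ⟨fun u hu => ?_, fun u hu => ?_⟩
  · by_cases huE : u ∈ E
    · have h1 := (tendsto_order.1 (h x hx)).1 _ (hm huE (hg x hx) hu)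
      filter_upwards [h1, self_mem_nhdsWithin] with y hy hys
      exact (hm.lt_iff_lt huE (hg y hys)).1 hy
    · filter_upwards [self_mem_nhdsWithin] with y hys
      by_contra! hc
      exact huE (hE.out (hg y hys) (hg x hx) ⟨hc, hu.le⟩)
  · by_cases huE : u ∈ E
    · have h1 := (tendsto_order.1 (h x hx)).2 _ (hm (hg x hx) huE hu)
      filter_upwards [h1, self_mem_nhdsWithin] with y hy hys
      exact (hm.lt_iff_lt (hg y hys) huE).1 hy
    · filter_upwards [self_mem_nhdsWithin] with y hys
      by_contra! hc
      exact huE (hE.out (hg x hx) (hg y hys) ⟨hu.le, hc⟩)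

namespace IsBisymMean
variable {E : Set ℝ} {B : ℝ → ℝ → ℝ}

theorem left_le (hB : IsBisymMean E B) {x x' y : ℝ} (hx : x ∈ E) (hx' : x' ∈ E) (hy : y ∈ E)
    (h : x ≤ x') : B x y ≤ B x' y := by
  rcases h.eq_or_lt with rfl | h
  · rfl
  · exact (hB.left x hx x' hx' y hy h).le

theorem right_le (hB : IsBisymMean E B) {x y y' : ℝ} (hx : x ∈ E) (hy : y ∈ E) (hy' : y' ∈ E)
    (h : y ≤ y') : B x y ≤ B x y' := by
  rcases h.eq_or_lt with rfl | h
  · rfl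
  · exact (hB.right x hx y hy y' hy' h).le

theorem mono (hB : IsBisymMean E B) {x x' y y' : ℝ} (hx : x ∈ E) (hx' : x' ∈ E) (hy : y ∈ E)
    (hy' : y' ∈ E) (h : x ≤ x') (h' : y ≤ y') : B x y ≤ B x' y' :=
  (hB.left_le hx hx' hy h).trans (hB.right_le hx' hy hy' h')

theorem cont_right (hB : IsBisymMean E B) {a : ℝ} (ha : a ∈ E) :
    ContinuousOn (fun y => B a y) E :=
  hB.cont.comp (f := fun y => (a, y)) (by fun_prop) (fun y hy => ⟨ha, hy⟩)

theorem cont_left (hB : IsBisymMean E B) {a : ℝ} (ha : a ∈ E) :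
    ContinuousOn (fun y => B y a) E :=
  hB.cont.comp (f := fun y => (y, a)) (by fun_prop) (fun y hy => ⟨hy, ha⟩)

/-! ### Symmetrization of a bisymmetric mean -/

/-- The Gauss-type iteration `(x, y) ↦ (B x y, B y x)`; both components converge to the
symmetrized mean of `x` and `y`. -/
def gauss (B : ℝ → ℝ → ℝ) (z : ℝ × ℝ) : ℝ × ℝ := (B z.1 z.2, B z.2 z.1)

theorem gauss_iter_mem (hB : IsBisymMean E B) {z : ℝ × ℝ} (hz : z ∈ E ×ˢ E) (k : ℕ) :
    (gauss B)^[k] z ∈ E ×ˢ E := by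
  induction k with
  | zero => exact hz
  | succ k ih =>
    rw [Function.iterate_succ_apply']
    exact ⟨hB.maps _ ih.1 _ ih.2, hB.maps _ ih.2 _ ih.1⟩

theorem gauss_iter_cont (hB : IsBisymMean E B) (k : ℕ) :
    ContinuousOn ((gauss B)^[k]) (E ×ˢ E) := by
  induction k with
  | zero => exact continuousOn_id
  | succ k ih =>
    have hT : ContinuousOn (gauss B) (E ×ˢ E) :=
      hB.cont.prodMk (hB.cont.comp (f := Prod.swap) (by fun_prop) (fun z hz => ⟨hz.2, hz.1⟩))
    rw [Function.iterate_succ']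
    exact hT.comp ih (fun z hz => hB.gauss_iter_mem hz k)

theorem gauss_iter_swap (z : ℝ × ℝ) (k : ℕ) :
    (gauss B)^[k] z.swap = ((gauss B)^[k] z).swap := by
  induction k with
  | zero => rfl
  | succ k ih => rw [Function.iterate_succ_apply', Function.iterate_succ_apply', ih]; rfl

theorem gauss_iter_mono (hB : IsBisymMean E B) {z w : ℝ × ℝ} (hz : z ∈ E ×ˢ E)
    (hw : w ∈ E ×ˢ E) (h : z ≤ w) (k : ℕ) : (gauss B)^[k] z ≤ (gauss B)^[k] w := by
  induction k with
  | zero => exact h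
  | succ k ih =>
    rw [Function.iterate_succ_apply', Function.iterate_succ_apply']
    have h1 := hB.gauss_iter_mem hz k
    have h2 := hB.gauss_iter_mem hw k
    exact ⟨hB.mono h1.1 h2.1 h1.2 h2.2 ih.1 ih.2, hB.mono h1.2 h2.2 h1.1 h2.1 ih.2 ih.1⟩

theorem min_le_gauss (hB : IsBisymMean E B) {z : ℝ × ℝ} (hz : z ∈ E ×ˢ E) :
    min z.1 z.2 ≤ min (gauss B z).1 (gauss B z).2 := by
  have hm : min z.1 z.2 ∈ E := by rcases min_choice z.1 z.2 with h | h <;> rw [h]; exacts [hz.1, hz.2]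
  rw [← hB.idem _ hm]
  exact le_min (hB.mono hm hz.1 hm hz.2 (min_le_left _ _) (min_le_right _ _))
    (hB.mono hm hz.2 hm hz.1 (min_le_right _ _) (min_le_left _ _))

theorem gauss_le_max (hB : IsBisymMean E B) {z : ℝ × ℝ} (hz : z ∈ E ×ˢ E) :
    max (gauss B z).1 (gauss B z).2 ≤ max z.1 z.2 := by
  have hm : max z.1 z.2 ∈ E := by rcases max_choice z.1 z.2 with h | h <;> rw [h]; exacts [hz.1, hz.2]
  rw [← hB.idem _ hm]
  exact max_le (hB.mono hz.1 hm hz.2 hm (le_max_left _ _) (le_max_right _ _))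
    (hB.mono hz.2 hm hz.1 hm (le_max_right _ _) (le_max_left _ _))

theorem gauss_lt_max (hB : IsBisymMean E B) {l u : ℝ} (hl : l ∈ E) (hu : u ∈ E) (h : l < u) :
    max (gauss B (l, u)).1 (gauss B (l, u)).2 < u := by
  refine max_lt ?_ ?_
  · simpa [gauss, hB.idem u hu] using hB.left l hl u hu u hu h
  · simpa [gauss, hB.idem u hu] using hB.right u hu l hl u hu h

/-- Lower and upper envelopes of the iteration have a common limit `s`: the upper envelope map
`l, u ↦ max (B l u) (B u l)` fixes `u` in the limit, which forces `l = u`. -/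
theorem exists_gauss_limit (hE : E.OrdConnected) (hB : IsBisymMean E B) {z : ℝ × ℝ}
    (hz : z ∈ E ×ˢ E) :
    ∃ s ∈ E, (∀ k, min ((gauss B)^[k] z).1 ((gauss B)^[k] z).2 ≤ s) ∧
      (∀ k, s ≤ max ((gauss B)^[k] z).1 ((gauss B)^[k] z).2) ∧
      Tendsto (fun k => min ((gauss B)^[k] z).1 ((gauss B)^[k] z).2) atTop (𝓝 s) ∧
      Tendsto (fun k => max ((gauss B)^[k] z).1 ((gauss B)^[k] z).2) atTop (𝓝 s) := by
  set l : ℕ → ℝ := fun k => min ((gauss B)^[k] z).1 ((gauss B)^[k] z).2 with hl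
  set u : ℕ → ℝ := fun k => max ((gauss B)^[k] z).1 ((gauss B)^[k] z).2 with hu
  have hlm : Monotone l := monotone_nat_of_le_succ fun k => by
    simp only [hl, Function.iterate_succ_apply']
    exact hB.min_le_gauss (hB.gauss_iter_mem hz k)
  have hum : Antitone u := antitone_nat_of_succ_le fun k => by
    simp only [hu, Function.iterate_succ_apply']
    exact hB.gauss_le_max (hB.gauss_iter_mem hz k)
  have hlu : ∀ k, l k ≤ u k := fun k => min_le_max
  have hlE : ∀ k, l k ∈ E := fun k => by
    have := hB.gauss_iter_mem hz k
    rcases min_choice ((gauss B)^[k] z).1 ((gauss B)^[k] z).2 with h | h <;>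
      simp only [hl, h]; exacts [this.1, this.2]
  have huE : ∀ k, u k ∈ E := fun k => by
    have := hB.gauss_iter_mem hz k
    rcases max_choice ((gauss B)^[k] z).1 ((gauss B)^[k] z).2 with h | h <;>
      simp only [hu, h]; exacts [this.1, this.2]
  have hlu' : ∀ j k, l j ≤ u k := fun j k =>
    (hlm (le_max_left j k)).trans ((hlu _).trans (hum (le_max_right j k)))
  have hbl : BddAbove (range l) := ⟨u 0, by rintro _ ⟨k, rfl⟩; exact hlu' k 0⟩
  have hbu : BddBelow (range u) := ⟨l 0, by rintro _ ⟨k, rfl⟩; exact hlu' 0 k⟩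
  have hL := tendsto_atTop_ciSup hlm hbl
  have hU := tendsto_atTop_ciInf hum hbu
  set L := ⨆ k, l k with hLdef
  set U := ⨅ k, u k with hUdef
  have hlL : ∀ k, l k ≤ L := fun k => le_ciSup hbl k
  have hUu : ∀ k, U ≤ u k := fun k => ciInf_le hbu k
  have hLU : L ≤ U := le_of_tendsto_of_tendsto' hL hU hlu
  have hLE : L ∈ E := hE.out (hlE 0) (huE 0) ⟨hlL 0, hLU.trans (hUu 0)⟩
  have hUE : U ∈ E := hE.out (hlE 0) (huE 0) ⟨(hlL 0).trans hLU, hUu 0⟩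
  have hstep : ∀ k, u (k + 1) = max (B (l k) (u k)) (B (u k) (l k)) := fun k => by
    simp only [hu, hl, Function.iterate_succ_apply']
    rcases le_total ((gauss B)^[k] z).1 ((gauss B)^[k] z).2 with h | h
    · simp [gauss, min_eq_left h, max_eq_right h]
    · rw [min_eq_right h, max_eq_left h, max_comm]; rfl
  have hEq : L = U := by
    by_contra hne
    have hlt : L < U := lt_of_le_of_ne hLU hne
    have h1 : Tendsto (fun k => B (l k) (u k)) atTop (𝓝 (B L U)) :=
      (hB.cont (L, U) ⟨hLE, hUE⟩).tendsto.comp (tendsto_nhdsWithin_iff.2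
        ⟨hL.prodMk_nhds hU, Eventually.of_forall fun k => ⟨hlE k, huE k⟩⟩)
    have h2 : Tendsto (fun k => B (u k) (l k)) atTop (𝓝 (B U L)) :=
      (hB.cont (U, L) ⟨hUE, hLE⟩).tendsto.comp (tendsto_nhdsWithin_iff.2
        ⟨hU.prodMk_nhds hL, Eventually.of_forall fun k => ⟨huE k, hlE k⟩⟩)
    have h3 := h1.max h2
    have h4 := (tendsto_add_atTop_iff_nat 1).2 hU
    simp only [hstep] at h4
    have h5 := tendsto_nhds_unique h3 h4
    exact absurd h5 (hB.gauss_lt_max hLE hUE hlt).ne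
  exact ⟨L, hLE, hlL, fun k => hEq ▸ hUu k, hL, hEq ▸ hU⟩

/-- The symmetrized mean: the common limit of the iteration `(x, y) ↦ (B x y, B y x)`. -/
noncomputable def sym (B : ℝ → ℝ → ℝ) (x y : ℝ) : ℝ :=
  limUnder atTop (fun k => min ((gauss B)^[k] (x, y)).1 ((gauss B)^[k] (x, y)).2)

theorem sym_spec (hE : E.OrdConnected) (hB : IsBisymMean E B) {x y : ℝ} (hx : x ∈ E)
    (hy : y ∈ E) :
    sym B x y ∈ E ∧ (∀ k, min ((gauss B)^[k] (x, y)).1 ((gauss B)^[k] (x, y)).2 ≤ sym B x y) ∧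
      (∀ k, sym B x y ≤ max ((gauss B)^[k] (x, y)).1 ((gauss B)^[k] (x, y)).2) ∧
      Tendsto (fun k => min ((gauss B)^[k] (x, y)).1 ((gauss B)^[k] (x, y)).2) atTop
        (𝓝 (sym B x y)) ∧
      Tendsto (fun k => max ((gauss B)^[k] (x, y)).1 ((gauss B)^[k] (x, y)).2) atTop
        (𝓝 (sym B x y)) := by
  obtain ⟨s, h1, h2, h3, h4, h5⟩ := hB.exists_gauss_limit hE (z := (x, y)) ⟨hx, hy⟩
  have : sym B x y = s := h4.limUnder_eq
  rw [this]
  exact ⟨h1, h2, h3, h4, h5⟩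

theorem tendsto_sym (hE : E.OrdConnected) (hB : IsBisymMean E B) {x y : ℝ} (hx : x ∈ E)
    (hy : y ∈ E) : Tendsto (fun k => ((gauss B)^[k] (x, y)).1) atTop (𝓝 (sym B x y)) :=
  tendsto_of_tendsto_of_tendsto_of_le_of_le (hB.sym_spec hE hx hy).2.2.2.1
    (hB.sym_spec hE hx hy).2.2.2.2 (fun _ => min_le_left _ _) (fun _ => le_max_left _ _)

theorem sym_comm (x y : ℝ) : sym B x y = sym B y x := by
  unfold sym
  congr 1
  funext k
  have := gauss_iter_swap (B := B) (x, y) k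
  simp only [Prod.swap_prod_mk] at this
  rw [this, min_comm]; rfl

theorem sym_gauss (hE : E.OrdConnected) (hB : IsBisymMean E B) {x y : ℝ} (hx : x ∈ E)
    (hy : y ∈ E) : sym B (B x y) (B y x) = sym B x y := by
  have h1 := hB.tendsto_sym hE (hB.maps x hx y hy) (hB.maps y hy x hx)
  have h2 := (tendsto_add_atTop_iff_nat 1).2 (hB.tendsto_sym hE hx hy)
  simp only [Function.iterate_succ_apply] at h2
  exact tendsto_nhds_unique h1 h2

theorem sym_idem (hE : E.OrdConnected) (hB : IsBisymMean E B) {x : ℝ} (hx : x ∈ E) :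
    sym B x x = x := by
  have h := hB.sym_spec hE hx hx
  exact le_antisymm (by simpa using h.2.2.1 0) (by simpa using h.2.1 0)

theorem sym_cont (hE : E.OrdConnected) (hB : IsBisymMean E B) :
    ContinuousOn (fun z : ℝ × ℝ => sym B z.1 z.2) (E ×ˢ E) := by
  intro z hz
  have h := hB.sym_spec hE hz.1 hz.2
  refine tendsto_order.2 ⟨fun u hu => ?_, fun u hu => ?_⟩
  · obtain ⟨k, hk⟩ := ((tendsto_order.1 h.2.2.2.1).1 u hu).exists
    have hc := hB.gauss_iter_cont k z hz
    have hc' := hc.fst.min hc.snd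
    filter_upwards [(tendsto_order.1 hc').1 u hk, self_mem_nhdsWithin] with w hw hwE
    exact hw.trans_le ((hB.sym_spec hE hwE.1 hwE.2).2.1 k)
  · obtain ⟨k, hk⟩ := ((tendsto_order.1 h.2.2.2.2).2 u hu).exists
    have hc := hB.gauss_iter_cont k z hz
    have hc' := hc.fst.max hc.snd
    filter_upwards [(tendsto_order.1 hc').2 u hk, self_mem_nhdsWithin] with w hw hwE
    exact ((hB.sym_spec hE hwE.1 hwE.2).2.2.1 k).trans_lt hw

/-- An operation commuting with `B` commutes with every iterate of the Gauss map, hence with its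
limit. -/
theorem comm_sym (hE : E.OrdConnected) (hB : IsBisymMean E B) {ι : Type*}
    {F : (ι → ℝ) → ℝ} (hF : ∀ x, (∀ i, x i ∈ E) → F x ∈ E)
    (hFc : ContinuousOn F {x | ∀ i, x i ∈ E})
    (hFB : ∀ x y, (∀ i, x i ∈ E) → (∀ i, y i ∈ E) → F (fun i => B (x i) (y i)) = B (F x) (F y))
    (x y : ι → ℝ) (hx : ∀ i, x i ∈ E) (hy : ∀ i, y i ∈ E) :
    F (fun i => sym B (x i) (y i)) = sym B (F x) (F y) := by
  have key : ∀ k, (F (fun i => ((gauss B)^[k] (x i, y i)).1),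
      F (fun i => ((gauss B)^[k] (x i, y i)).2)) = (gauss B)^[k] (F x, F y) := by
    intro k
    induction k with
    | zero => rfl
    | succ k ih =>
      simp only [Function.iterate_succ_apply', ← ih]
      have hm := fun i => hB.gauss_iter_mem (z := (x i, y i)) ⟨hx i, hy i⟩ k
      exact Prod.ext (hFB _ _ (fun i => (hm i).1) fun i => (hm i).2)
        (hFB _ _ (fun i => (hm i).2) fun i => (hm i).1)
  have h1 := hB.tendsto_sym hE (hF x hx) (hF y hy)
  simp only [← key] at h1
  refine tendsto_nhds_unique ?_ h1
  refine (hFc (fun i => sym B (x i) (y i))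
    (fun i => (hB.sym_spec hE (hx i) (hy i)).1)).tendsto.comp (tendsto_nhdsWithin_iff.2 ⟨?_, ?_⟩)
  · exact tendsto_pi_nhds.2 fun i => hB.tendsto_sym hE (hx i) (hy i)
  · exact Eventually.of_forall fun k i => (hB.gauss_iter_mem ⟨hx i, hy i⟩ k).1

/-- The two-argument case of `comm_sym`. -/
theorem comm_sym₂ (hE : E.OrdConnected) (hB : IsBisymMean E B) {C : ℝ → ℝ → ℝ}
    (hC : ∀ x ∈ E, ∀ y ∈ E, C x y ∈ E)
    (hCc : ContinuousOn (fun z : ℝ × ℝ => C z.1 z.2) (E ×ˢ E))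
    (hCB : ∀ a ∈ E, ∀ b ∈ E, ∀ c ∈ E, ∀ d ∈ E, C (B a b) (B c d) = B (C a c) (C b d))
    {a b c d : ℝ} (ha : a ∈ E) (hb : b ∈ E) (hc : c ∈ E) (hd : d ∈ E) :
    C (sym B a b) (sym B c d) = sym B (C a c) (C b d) := by
  have := hB.comm_sym hE (ι := Fin 2) (F := fun x => C (x 0) (x 1))
    (fun x hx => hC _ (hx 0) _ (hx 1))
    (hCc.comp (f := fun x : Fin 2 → ℝ => (x 0, x 1)) (by fun_prop) fun x hx => ⟨hx 0, hx 1⟩)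
    (fun x y hx hy => hCB _ (hx 0) _ (hy 0) _ (hx 1) _ (hy 1)) ![a, c] ![b, d]
    (by simp [Fin.forall_fin_two, ha, hc]) (by simp [Fin.forall_fin_two, hb, hd])
  simpa using this

theorem lt_sym (hE : E.OrdConnected) (hB : IsBisymMean E B) {w u : ℝ} (hw : w ∈ E) (hu : u ∈ E)
    (h : w < u) : w < sym B u w := by
  rw [← hB.sym_gauss hE hu hw]
  have h1 := (hB.sym_spec hE (hB.maps u hu w hw) (hB.maps w hw u hu)).2.1 0
  refine lt_of_lt_of_le (lt_min ?_ ?_) h1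
  · simpa [hB.idem w hw] using hB.left w hw u hu w hw h
  · simpa [hB.idem w hw] using hB.right w hw w hw u hu h

/-- Either `B x s = B y t` or `B s x = B t y` is solvable, according to which of `B x y`, `B y x`
is nearer to `y`. -/
theorem exists_balance (hE : E.OrdConnected) (hB : IsBisymMean E B) {x y : ℝ} (hx : x ∈ E)
    (hy : y ∈ E) : ∃ s ∈ E, ∃ t ∈ E, B x s = B y t ∨ B s x = B t y := by
  have hsub : uIcc x y ⊆ E := hE.uIcc_subset hx hy
  have key : B y x ∈ uIcc (B x x) (B x y) ∨ B x y ∈ uIcc (B x x) (B y x) := by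
    rw [hB.idem x hx]
    rcases le_total x y with h | h
    · have h1 := hB.left_le hx hy hx h
      have h2 := hB.right_le hx hx hy h
      rw [hB.idem x hx] at h1 h2
      rw [uIcc_of_le h1, uIcc_of_le h2]
      rcases le_total (B x y) (B y x) with h3 | h3
      · exact Or.inr ⟨h2, h3⟩
      · exact Or.inl ⟨h1, h3⟩
    · have h1 := hB.left_le hy hx hx h
      have h2 := hB.right_le hx hy hx h
      rw [hB.idem x hx] at h1 h2
      rw [uIcc_of_ge h1, uIcc_of_ge h2]
      rcases le_total (B x y) (B y x) with h3 | h3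
      · exact Or.inl ⟨h3, h1⟩
      · exact Or.inr ⟨h3, h2⟩
  rcases key with key | key
  · obtain ⟨s, hs, hs'⟩ := intermediate_value_uIcc ((hB.cont_right hx).mono hsub) key
    exact ⟨s, hsub hs, x, hx, Or.inl hs'⟩
  · obtain ⟨s, hs, hs'⟩ := intermediate_value_uIcc ((hB.cont_left hx).mono hsub) key
    exact ⟨s, hsub hs, x, hx, Or.inr hs'⟩

/-- If `sym B x y = sym B x' y` with `x < x'`, commuting with `B` transports this coincidence
to one of the form `sym B w w = sym B w' w` with `w < w'`, which is impossible. -/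
theorem sym_left (hE : E.OrdConnected) (hB : IsBisymMean E B) {x x' y : ℝ} (hx : x ∈ E)
    (hx' : x' ∈ E) (hy : y ∈ E) (h : x < x') : sym B x y < sym B x' y := by
  have hle : sym B x y ≤ sym B x' y :=
    le_of_tendsto_of_tendsto' (hB.tendsto_sym hE hx hy) (hB.tendsto_sym hE hx' hy) fun k =>
      (hB.gauss_iter_mono (z := (x, y)) (w := (x', y)) ⟨hx, hy⟩ ⟨hx', hy⟩ ⟨h.le, le_rfl⟩ k).1
  refine lt_of_le_of_ne hle fun heq => ?_
  obtain ⟨s, hs, t, ht, hst⟩ := hB.exists_balance hE hx hy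
  have hc : ∀ {a b c d : ℝ}, a ∈ E → b ∈ E → c ∈ E → d ∈ E →
      B (sym B a b) (sym B c d) = sym B (B a c) (B b d) := fun ha hb hc hd =>
    hB.comm_sym₂ hE hB.maps hB.cont hB.bisym ha hb hc hd
  rcases hst with hst | hst
  · have h1 := hc hx hy hs ht
    rw [heq, hc hx' hy hs ht, ← hst, hB.sym_idem hE (hB.maps x hx s hs)] at h1
    exact (hB.lt_sym hE (hB.maps x hx s hs) (hB.maps x' hx' s hs)
      (hB.left x hx x' hx' s hs h)).ne' h1
  · have h1 := hc hs ht hx hy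
    rw [heq, hc hs ht hx' hy, ← hst, hB.sym_idem hE (hB.maps s hs x hx)] at h1
    exact (hB.lt_sym hE (hB.maps s hs x hx) (hB.maps s hs x' hx')
      (hB.right s hs x hx x' hx' h)).ne' h1

theorem isBisymMean_sym (hE : E.OrdConnected) (hB : IsBisymMean E B) :
    IsBisymMean E (sym B) where
  maps x hx y hy := (hB.sym_spec hE hx hy).1
  idem x hx := hB.sym_idem hE hx
  left x hx x' hx' y hy h := hB.sym_left hE hx hx' hy h
  right x hx y hy y' hy' h := by
    rw [sym_comm x y, sym_comm x y']; exact hB.sym_left hE hy hy' hx h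
  cont := hB.sym_cont hE
  bisym a ha b hb c hc d hd :=
    hB.comm_sym₂ hE (fun x hx y hy => (hB.sym_spec hE hx hy).1) (hB.sym_cont hE)
      (fun a ha b hb c hc d hd => (hB.comm_sym₂ hE hB.maps hB.cont hB.bisym ha hc hb hd).symm)
      ha hb hc hd

end IsBisymMean

/-! ### Generators of symmetric bisymmetric means -/

/-- `f` is affine for the mean `S`: it turns `S` into the arithmetic mean. -/
def IsAvg (E : Set ℝ) (S : ℝ → ℝ → ℝ) (f : ℝ → ℝ) : Prop :=
  ∀ x ∈ E, ∀ y ∈ E, f (S x y) = (f x + f y) / 2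

/-- A function bounded above that is at each point nonpositive or at most half one of its values
is nonpositive. -/
theorem nonpos_of_halving {α : Type*} {P : Set α} {D : α → ℝ} {K : ℝ} (hK : ∀ x ∈ P, D x ≤ K)
    (h : ∀ x ∈ P, D x ≤ 0 ∨ ∃ y ∈ P, D x ≤ D y / 2) : ∀ x ∈ P, D x ≤ 0 := by
  have key : ∀ k : ℕ, ∀ x ∈ P, D x ≤ max K 0 * (1 / 2) ^ k := by
    intro k
    induction k with
    | zero => intro x hx; simpa using Or.inl (hK x hx)
    | succ k ih =>
      intro x hx
      rcases h x hx with h0 | ⟨y, hy, hxy⟩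
      · exact h0.trans (mul_nonneg (le_max_right _ _) (by positivity))
      · have := ih y hy
        rw [pow_succ]; linarith
  intro x hx
  have ht : Tendsto (fun k : ℕ => max K 0 * (1 / 2 : ℝ) ^ k) atTop (𝓝 (max K 0 * 0)) :=
    (tendsto_pow_atTop_nhds_zero_of_lt_one (by norm_num) (by norm_num)).const_mul _
  rw [mul_zero] at ht
  exact ge_of_tendsto' ht fun k => key k x hx

/-- Binary expansions: given a digit function and a shift, the number whose binary digits are read
off along the orbit of the shift. -/
theorem exists_binary_expansion {α : Type*} (e : α → α) (d : α → ℝ) (hd : ∀ x, d x ∈ Icc (0 : ℝ) 1) :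
    ∃ f : α → ℝ, (∀ x, f x ∈ Icc (0 : ℝ) 1) ∧ ∀ x, f x = (d x + f (e x)) / 2 := by
  have hg : HasSum (fun k : ℕ => (1 / 2 : ℝ) ^ k / 2) 1 := by
    simpa using hasSum_geometric_two.div_const 2
  have h0 : ∀ x k, 0 ≤ d (e^[k] x) * ((1 / 2 : ℝ) ^ k / 2) := fun x k =>
    mul_nonneg (hd _).1 (by positivity)
  have h1 : ∀ x k, d (e^[k] x) * ((1 / 2 : ℝ) ^ k / 2) ≤ (1 / 2 : ℝ) ^ k / 2 := fun x k =>
    mul_le_of_le_one_left (by positivity) (hd _).2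
  have hs : ∀ x, Summable fun k => d (e^[k] x) * ((1 / 2 : ℝ) ^ k / 2) := fun x =>
    Summable.of_nonneg_of_le (h0 x) (h1 x) hg.summable
  refine ⟨fun x => ∑' k, d (e^[k] x) * ((1 / 2 : ℝ) ^ k / 2), fun x => ⟨tsum_nonneg (h0 x), ?_⟩,
    fun x => ?_⟩
  · exact (hs x).tsum_le_tsum (h1 x) hg.summable |>.trans hg.tsum_eq.le
  · simp only
    rw [(hs x).tsum_eq_zero_add]
    have : ∀ k, d (e^[k + 1] x) * ((1 / 2 : ℝ) ^ (k + 1) / 2) =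
        d (e^[k] (e x)) * ((1 / 2 : ℝ) ^ k / 2) * (1 / 2) := fun k => by
      rw [Function.iterate_succ_apply, pow_succ]; ring
    simp only [this, tsum_mul_right]
    simp only [Function.iterate_zero, id, pow_zero]
    ring

namespace IsBisymMean
variable {E : Set ℝ} {S : ℝ → ℝ → ℝ}

theorem restrict_Icc (hS : IsBisymMean E S) {c b : ℝ} (hcb : c ≤ b) (h : Icc c b ⊆ E) :
    IsBisymMean (Icc c b) S where
  maps x hx y hy := by
    have hc := h (left_mem_Icc.2 hcb)
    have hb := h (right_mem_Icc.2 hcb)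
    constructor
    · rw [← hS.idem c hc]; exact hS.mono hc (h hx) hc (h hy) hx.1 hy.1
    · rw [← hS.idem b hb]; exact hS.mono (h hx) hb (h hy) hb hx.2 hy.2
  idem x hx := hS.idem x (h hx)
  left x hx x' hx' y hy := hS.left x (h hx) x' (h hx') y (h hy)
  right x hx y hy y' hy' := hS.right x (h hx) y (h hy) y' (h hy')
  cont := hS.cont.mono (prod_mono h h)
  bisym a ha b hb c hc d hd := hS.bisym a (h ha) b (h hb) c (h hc) d (h hd)

theorem right_inj (hS : IsBisymMean E S) {a x y : ℝ} (ha : a ∈ E) (hx : x ∈ E) (hy : y ∈ E)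
    (h : S a x = S a y) : x = y :=
  (StrictMonoOn.injOn (f := fun y => S a y)
    fun x hx y hy hxy => hS.right a ha x hx y hy hxy) hx hy h

theorem iter_mem (hS : IsBisymMean E S) {a w : ℝ} (ha : a ∈ E) (hw : w ∈ E) (k : ℕ) :
    (S a)^[k] w ∈ E := by
  induction k with
  | zero => exact hw
  | succ k ih => rw [Function.iterate_succ_apply']; exact hS.maps a ha _ ih

theorem iter_mono (hS : IsBisymMean E S) {a x y : ℝ} (ha : a ∈ E) (hx : x ∈ E) (hy : y ∈ E)
    (h : x ≤ y) (k : ℕ) : (S a)^[k] x ≤ (S a)^[k] y := by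
  induction k with
  | zero => exact h
  | succ k ih =>
    rw [Function.iterate_succ_apply', Function.iterate_succ_apply']
    exact hS.right_le ha (hS.iter_mem ha hx k) (hS.iter_mem ha hy k) ih

theorem iter_self (hS : IsBisymMean E S) {a : ℝ} (ha : a ∈ E) (k : ℕ) : (S a)^[k] a = a :=
  Function.iterate_fixed (hS.idem a ha) k

theorem tendsto_iter (hE : E.OrdConnected) (hS : IsBisymMean E S) {a w : ℝ} (ha : a ∈ E)
    (hw : w ∈ E) : Tendsto (fun k => (S a)^[k] w) atTop (𝓝 a) := by
  -- any limit in `E` is a fixed point of `S a`, and `a` is the only one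
  have fix : ∀ L ∈ E, Tendsto (fun k => (S a)^[k] w) atTop (𝓝 L) → L = a := by
    intro L hL h
    have h1 : Tendsto (fun k => S a ((S a)^[k] w)) atTop (𝓝 (S a L)) :=
      (hS.cont_right ha L hL).tendsto.comp (tendsto_nhdsWithin_iff.2
        ⟨h, Eventually.of_forall fun k => hS.iter_mem ha hw k⟩)
    have h2 := (tendsto_add_atTop_iff_nat 1).2 h
    simp only [Function.iterate_succ_apply'] at h2
    have h3 := tendsto_nhds_unique h1 h2
    rcases lt_trichotomy L a with h4 | h4 | h4
    · have := hS.left L hL a ha L hL h4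
      rw [hS.idem L hL, h3] at this; exact absurd this (lt_irrefl _)
    · exact h4
    · have := hS.left a ha L hL L hL h4
      rw [hS.idem L hL, h3] at this; exact absurd this (lt_irrefl _)
  rcases le_total a w with h | h
  · have hge : ∀ k, a ≤ (S a)^[k] w := fun k => by
      have := hS.iter_mono ha ha hw h k
      rwa [hS.iter_self ha] at this
    have hanti : Antitone fun k => (S a)^[k] w := antitone_nat_of_succ_le fun k => by
      rw [Function.iterate_succ_apply']
      have := hS.left_le ha (hS.iter_mem ha hw k) (hS.iter_mem ha hw k) (hge k)
      rwa [hS.idem _ (hS.iter_mem ha hw k)] at this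
    have hbdd : BddBelow (range fun k => (S a)^[k] w) := ⟨a, by rintro _ ⟨k, rfl⟩; exact hge k⟩
    have ht := tendsto_atTop_ciInf hanti hbdd
    have hL := hE.out ha hw ⟨le_ciInf hge, ciInf_le hbdd 0⟩
    rwa [fix _ hL ht] at ht
  · have hge : ∀ k, (S a)^[k] w ≤ a := fun k => by
      have := hS.iter_mono ha hw ha h k
      rwa [hS.iter_self ha] at this
    have hmono : Monotone fun k => (S a)^[k] w := monotone_nat_of_le_succ fun k => by
      rw [Function.iterate_succ_apply']
      have := hS.left_le (hS.iter_mem ha hw k) ha (hS.iter_mem ha hw k) (hge k)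
      rwa [hS.idem _ (hS.iter_mem ha hw k)] at this
    have hbdd : BddAbove (range fun k => (S a)^[k] w) := ⟨a, by rintro _ ⟨k, rfl⟩; exact hge k⟩
    have ht := tendsto_atTop_ciSup hmono hbdd
    have hL := hE.out hw ha ⟨le_ciSup hbdd 0, ciSup_le hge⟩
    rwa [fix _ hL ht] at ht

theorem avg_iter (hS : IsBisymMean E S) {f : ℝ → ℝ} (hf : IsAvg E S f) {a w : ℝ} (ha : a ∈ E)
    (hw : w ∈ E) (k : ℕ) : f ((S a)^[k] w) - f a = (f w - f a) / 2 ^ k := by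
  induction k with
  | zero => simp
  | succ k ih =>
    rw [Function.iterate_succ_apply', hf a ha _ (hS.iter_mem ha hw k), pow_succ]
    have : (f w - f a) / (2 ^ k * 2) = (f w - f a) / 2 ^ k / 2 := by rw [div_div]
    rw [this, ← ih]; ring

theorem iter_comm (hS : IsBisymMean E S) {a x y : ℝ} (ha : a ∈ E) (hx : x ∈ E) (hy : y ∈ E)
    (k : ℕ) : (S a)^[k] (S x y) = S ((S a)^[k] x) ((S a)^[k] y) := by
  induction k with
  | zero => rfl
  | succ k ih =>
    simp only [Function.iterate_succ_apply', ih]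
    have := hS.bisym a ha a ha _ (hS.iter_mem ha hx k) _ (hS.iter_mem ha hy k)
    rwa [hS.idem a ha] at this

/-- The two contractions `S c` and `S b` of `[c, b]` cover the interval, meeting at `S c b`. -/
theorem exists_half (hsymm : ∀ x y, S x y = S y x) {c b : ℝ} (hcb : c ≤ b)
    (hS : IsBisymMean (Icc c b) S) {x : ℝ} (hx : x ∈ Icc c b) :
    (x ≤ S c b ∧ ∃ y ∈ Icc c b, x = S c y) ∨ (S c b < x ∧ ∃ y ∈ Icc c b, x = S b y) := by
  have hc : c ∈ Icc c b := left_mem_Icc.2 hcb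
  have hb : b ∈ Icc c b := right_mem_Icc.2 hcb
  rcases le_or_gt x (S c b) with h | h
  · left
    obtain ⟨y, hy, hxy⟩ := intermediate_value_Icc hcb (hS.cont_right hc)
      (show x ∈ Icc (S c c) (S c b) from ⟨by rw [hS.idem c hc]; exact hx.1, h⟩)
    exact ⟨h, y, hy, hxy.symm⟩
  · right
    obtain ⟨y, hy, hxy⟩ := intermediate_value_Icc hcb (hS.cont_right hb)
      (show x ∈ Icc (S b c) (S b b) from
        ⟨by rw [hsymm b c]; exact h.le, by rw [hS.idem b hb]; exact hx.2⟩)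
    exact ⟨h, y, hy, hxy.symm⟩

/-- A generator on a compact interval, obtained from binary expansions with respect to the two
contractions `S c` and `S b`. -/
theorem exists_avg_Icc (hsymm : ∀ x y, S x y = S y x) {c b : ℝ} (hcb : c < b)
    (hS : IsBisymMean (Icc c b) S) :
    ∃ f : ℝ → ℝ, MonotoneOn f (Icc c b) ∧ IsAvg (Icc c b) S f ∧ f c < f b := by
  have hc : c ∈ Icc c b := left_mem_Icc.2 hcb.le
  have hb : b ∈ Icc c b := right_mem_Icc.2 hcb.le
  have hex : ∀ x, ∃ y, x ∈ Icc c b → (x ≤ S c b → y ∈ Icc c b ∧ x = S c y) ∧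
      (S c b < x → y ∈ Icc c b ∧ x = S b y) := by
    intro x
    by_cases hx : x ∈ Icc c b
    · rcases hS.exists_half hsymm hcb.le hx with ⟨h, y, hy⟩ | ⟨h, y, hy⟩
      · exact ⟨y, fun _ => ⟨fun _ => hy, fun h' => absurd h h'.not_ge⟩⟩
      · exact ⟨y, fun _ => ⟨fun h' => absurd h h'.not_gt, fun _ => hy⟩⟩
    · exact ⟨0, fun h => absurd h hx⟩
  choose e he using hex
  obtain ⟨f, hf01, hf⟩ := exists_binary_expansion e (fun x => if x ≤ S c b then 0 else 1)
    (fun x => by split_ifs <;> simp)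
  have hSc : ∀ y ∈ Icc c b, f (S c y) = f y / 2 := by
    intro y hy
    have h1 : S c y ≤ S c b := hS.right_le hc hy hb hy.2
    have h2 := (he _ (hS.maps c hc y hy)).1 h1
    have h3 := hS.right_inj hc hy h2.1 h2.2
    rw [hf, if_pos h1, ← h3, zero_add]
  have hfc : f c = 0 := by
    have := hSc c hc
    rw [hS.idem c hc] at this; linarith
  have hmid : S c b < b := by
    have := hS.left c hc b hb b hb hcb
    rwa [hS.idem b hb] at this
  have hfb : f b = 1 := by
    have h2 := (he b hb).2 hmid
    have h3 : b = e b := hS.right_inj hb hb h2.1 (by rw [hS.idem b hb]; exact h2.2)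
    have := hf b
    rw [if_neg hmid.not_ge, ← h3] at this; linarith
  have hSb : ∀ y ∈ Icc c b, f (S b y) = (1 + f y) / 2 := by
    intro y hy
    rcases hy.1.eq_or_lt with rfl | hlt
    · rw [hsymm, hSc b hb, hfb, hfc]; norm_num
    · have h1 : S c b < S b y := by rw [hsymm c b]; exact hS.right b hb c hc y hy hlt
      have h2 := (he _ (hS.maps b hb y hy)).2 h1
      have h3 := hS.right_inj hb hy h2.1 h2.2
      rw [hf, if_neg h1.not_ge, ← h3]
  have hhalf : ∀ x ∈ Icc c b, ∃ y ∈ Icc c b, x = S c y ∨ x = S b y := by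
    intro x hx
    rcases hS.exists_half hsymm hcb.le hx with ⟨h, y, hy, hxy⟩ | ⟨h, y, hy, hxy⟩
    · exact ⟨y, hy, Or.inl hxy⟩
    · exact ⟨y, hy, Or.inr hxy⟩
  refine ⟨f, ?_, ?_, by rw [hfc, hfb]; norm_num⟩
  · have := nonpos_of_halving (P := {z : ℝ × ℝ | z.1 ∈ Icc c b ∧ z.2 ∈ Icc c b ∧ z.1 ≤ z.2})
      (D := fun z => f z.1 - f z.2) (K := 1)
      (fun z _ => by have := (hf01 z.1).2; have := (hf01 z.2).1; linarith) ?_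
    · intro x hx y hy hxy
      have := this (x, y) ⟨hx, hy, hxy⟩
      simpa using this
    · rintro ⟨x, y⟩ ⟨hx, hy, hxy⟩
      simp only at hx hy hxy ⊢
      have le_of : ∀ a ∈ Icc c b, ∀ u ∈ Icc c b, ∀ v ∈ Icc c b, S a u ≤ S a v → u ≤ v :=
        fun a ha u hu v hv h => by
          by_contra! hlt
          exact absurd (hS.right a ha v hv u hu hlt) h.not_gt
      rcases hS.exists_half hsymm hcb.le hx with ⟨h, x', hx', rfl⟩ | ⟨h, x', hx', rfl⟩ <;>
      rcases hS.exists_half hsymm hcb.le hy with ⟨h', y', hy', rfl⟩ | ⟨h', y', hy', rfl⟩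
      · right
        refine ⟨(x', y'), ⟨hx', hy', le_of c hc _ hx' _ hy' hxy⟩, ?_⟩
        rw [hSc x' hx', hSc y' hy']; linarith
      · left
        rw [hSc x' hx', hSb y' hy']
        have := (hf01 x').2; have := (hf01 y').1; linarith
      · exact absurd (hxy.trans h') h.not_ge
      · right
        refine ⟨(x', y'), ⟨hx', hy', le_of b hb _ hx' _ hy' hxy⟩, ?_⟩
        rw [hSb x' hx', hSb y' hy']; linarith
  · have hcent : ∀ z ∈ Icc c b, f (S (S c b) z) = (1 / 2 + f z) / 2 := by
      intro z hz
      obtain ⟨z', hz', rfl | rfl⟩ := hhalf z hz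
      · rw [hS.bisym c hc b hb c hc z' hz', hS.idem c hc, hSc _ (hS.maps b hb z' hz'), hSb z' hz',
          hSc z' hz']
        ring
      · rw [hsymm c b, hS.bisym b hb c hc b hb z' hz', hS.idem b hb, hSb _ (hS.maps c hc z' hz'),
          hSb z' hz', hSc z' hz']
        ring
    have := nonpos_of_halving (P := Icc c b ×ˢ Icc c b)
      (D := fun z => |f (S z.1 z.2) - (f z.1 + f z.2) / 2|) (K := 1)
      (fun z _ => by
        have h1 := hf01 z.1; have h2 := hf01 z.2; have h3 := hf01 (S z.1 z.2)
        rw [abs_le]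
        constructor <;> linarith [h1.1, h1.2, h2.1, h2.2, h3.1, h3.2]) ?_
    · intro x hx y hy
      have := abs_nonpos_iff.1 (this (x, y) ⟨hx, hy⟩)
      simp only at this
      linarith
    · rintro ⟨x, y⟩ ⟨hx, hy⟩
      simp only at hx hy ⊢
      right
      obtain ⟨x', hx', hxx⟩ := hhalf x hx
      obtain ⟨y', hy', hyy⟩ := hhalf y hy
      refine ⟨(x', y'), ⟨hx', hy'⟩, le_of_eq ?_⟩
      have hm := hS.maps x' hx' y' hy'
      have fin : ∀ u v : ℝ, u = v / 2 → |u| = |v| / 2 := fun u v h => by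
        rw [h, abs_div, abs_two]
      apply fin
      rcases hxx with rfl | rfl <;> rcases hyy with rfl | rfl
      · rw [hS.bisym c hc x' hx' c hc y' hy', hS.idem c hc, hSc _ hm, hSc x' hx', hSc y' hy']
        ring
      · rw [hS.bisym c hc x' hx' b hb y' hy', hcent _ hm, hSc x' hx', hSb y' hy']
        ring
      · rw [hS.bisym b hb x' hx' c hc y' hy', hsymm b c, hcent _ hm, hSb x' hx', hSc y' hy']
        ring
      · rw [hS.bisym b hb x' hx' b hb y' hy', hS.idem b hb, hSb _ hm, hSb x' hx', hSb y' hy']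
        ring

theorem strictMonoOn_of_avg (hE : E.OrdConnected) (hS : IsBisymMean E S) {f : ℝ → ℝ}
    (hmono : MonotoneOn f E) (hf : IsAvg E S f) {c b : ℝ} (hc : c ∈ E) (hb : b ∈ E)
    (hcb : f c < f b) : StrictMonoOn f E := by
  intro x hx y hy hxy
  refine lt_of_le_of_ne (hmono hx hy hxy.le) fun heq => ?_
  -- a nontrivial level interval `[x, y]` swallows every point contracted into it
  have key : ∀ w ∈ E, f w = f x := by
    intro w hw
    rcases le_total w x with h | h
    · obtain ⟨k, hk⟩ := ((tendsto_order.1 (hS.tendsto_iter hE hy hw)).1 x hxy).exists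
      have hle := hS.iter_mono hy hw hy (h.trans hxy.le) k
      rw [hS.iter_self hy] at hle
      have h1 := hmono hx (hS.iter_mem hy hw k) hk.le
      have h2 := hmono (hS.iter_mem hy hw k) hy hle
      have h3 := hS.avg_iter hf hy hw k
      have h4 : (f w - f y) / 2 ^ k = 0 := by rw [← h3]; linarith
      have h5 : f w - f y = 0 := by simpa using h4
      linarith
    · obtain ⟨k, hk⟩ := ((tendsto_order.1 (hS.tendsto_iter hE hx hw)).2 y hxy).exists
      have hle := hS.iter_mono hx hx hw h k
      rw [hS.iter_self hx] at hle
      have h1 := hmono (hS.iter_mem hx hw k) hy hk.le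
      have h2 := hmono hx (hS.iter_mem hx hw k) hle
      have h3 := hS.avg_iter hf hx hw k
      have h4 : (f w - f x) / 2 ^ k = 0 := by rw [← h3]; linarith
      have h5 : f w - f x = 0 := by simpa using h4
      linarith
  rw [key c hc, key b hb] at hcb
  exact lt_irrefl _ hcb

theorem continuousOn_of_avg (hS : IsBisymMean E S) {f : ℝ → ℝ}
    (hmono : StrictMonoOn f E) (hf : IsAvg E S f) : ContinuousOn f E := by
  intro t ht
  -- iterating `S t` from `w` stays on the side of `w` and halves the distance of `f` to `f t`
  have lim : ∀ w ∈ E, Tendsto (fun k => f ((S t)^[k] w)) atTop (𝓝 (f t)) := by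
    intro w hw
    have h1 : Tendsto (fun k : ℕ => f t + (f w - f t) * (1 / 2 : ℝ) ^ k) atTop
        (𝓝 (f t + (f w - f t) * 0)) :=
      ((tendsto_pow_atTop_nhds_zero_of_lt_one (by norm_num) (by norm_num)).const_mul _).const_add _
    rw [mul_zero, add_zero] at h1
    refine h1.congr fun k => ?_
    have := hS.avg_iter hf ht hw k
    rw [one_div, inv_pow, ← div_eq_mul_inv, ← this]; ring
  refine tendsto_order.2 ⟨fun u hu => ?_, fun u hu => ?_⟩
  · by_cases hex : ∃ w ∈ E, w < t
    · obtain ⟨w, hw, hwt⟩ := hex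
      obtain ⟨k, hk⟩ := ((tendsto_order.1 (lim w hw)).1 u hu).exists
      have hm := hS.iter_mem ht hw k
      have hlt : (S t)^[k] w < t := by
        rw [← hmono.lt_iff_lt hm ht, ← sub_neg, hS.avg_iter hf ht hw k]
        exact div_neg_of_neg_of_pos (sub_neg.2 (hmono hw ht hwt)) (by positivity)
      filter_upwards [nhdsWithin_le_nhds (Ioi_mem_nhds hlt), self_mem_nhdsWithin] with y hy hyE
      exact hk.trans (hmono hm hyE hy)
    · push Not at hex
      filter_upwards [self_mem_nhdsWithin] with y hyE
      exact hu.trans_le (hmono.monotoneOn ht hyE (hex y hyE))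
  · by_cases hex : ∃ w ∈ E, t < w
    · obtain ⟨w, hw, hwt⟩ := hex
      obtain ⟨k, hk⟩ := ((tendsto_order.1 (lim w hw)).2 u hu).exists
      have hm := hS.iter_mem ht hw k
      have hlt : t < (S t)^[k] w := by
        rw [← hmono.lt_iff_lt ht hm, ← sub_pos, hS.avg_iter hf ht hw k]
        exact div_pos (sub_pos.2 (hmono ht hw hwt)) (by positivity)
      filter_upwards [nhdsWithin_le_nhds (Iio_mem_nhds hlt), self_mem_nhdsWithin] with y hy hyE
      exact (hmono hyE hm hy).trans hk
    · push Not at hex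
      filter_upwards [self_mem_nhdsWithin] with y hyE
      exact (hmono.monotoneOn hyE ht (hex y hyE)).trans_lt hu

/-- A symmetric bisymmetric mean is quasi-arithmetic. The generator on `[c, b]` is extended to `E`
by the rule `f x = 2 ^ k * f (h^[k] x)`, where `h = S a` contracts `E` to an interior point `a`
of `[c, b]`. -/
theorem exists_generator (hE : E.OrdConnected) (hS : IsBisymMean E S)
    (hsymm : ∀ x y, S x y = S y x) {c b : ℝ} (hc : c ∈ E) (hb : b ∈ E) (hcb : c < b) :
    ∃ f : ℝ → ℝ, StrictMonoOn f E ∧ ContinuousOn f E ∧ IsAvg E S f := by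
  have hsub : Icc c b ⊆ E := hE.out hc hb
  have hS' := hS.restrict_Icc hcb.le hsub
  obtain ⟨f₀, hm₀, hf₀, hlt₀⟩ := hS'.exists_avg_Icc hsymm hcb
  set a := S c b with ha_def
  have ha : a ∈ E := hS.maps c hc b hb
  have hca : c < a := by
    have := hS.right c hc c hc b hb hcb
    rwa [hS.idem c hc] at this
  have hab : a < b := by
    have := hS.left c hc b hb b hb hcb
    rwa [hS.idem b hb] at this
  have haI : a ∈ Icc c b := ⟨hca.le, hab.le⟩
  have hK : ∀ x, ∃ K : ℕ, x ∈ E → ∀ k ≥ K, (S a)^[k] x ∈ Icc c b := by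
    intro x
    by_cases hx : x ∈ E
    · obtain ⟨K, hK⟩ := eventually_atTop.1
        ((hS.tendsto_iter hE ha hx).eventually (Icc_mem_nhds hca hab))
      exact ⟨K, fun _ => hK⟩
    · exact ⟨0, fun h => absurd h hx⟩
  choose K hK using hK
  let f : ℝ → ℝ := fun x => 2 ^ K x * (f₀ ((S a)^[K x] x) - f₀ a)
  have hf : ∀ x ∈ E, ∀ k ≥ K x, f x = 2 ^ k * (f₀ ((S a)^[k] x) - f₀ a) := by
    intro x hx k hk
    induction k, hk using Nat.le_induction with
    | base => rfl
    | succ k hk ih =>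
      rw [ih, Function.iterate_succ_apply', hf₀ a haI _ (hK x hx k hk), pow_succ]
      ring
  have hmono : MonotoneOn f E := by
    intro x hx y hy hxy
    set k := max (K x) (K y)
    rw [hf x hx k (le_max_left _ _), hf y hy k (le_max_right _ _)]
    have := hm₀ (hK x hx k (le_max_left _ _)) (hK y hy k (le_max_right _ _))
      (hS.iter_mono ha hx hy hxy k)
    have h2 : (0 : ℝ) < 2 ^ k := by positivity
    nlinarith
  have hagree : ∀ x ∈ Icc c b, f x = f₀ x - f₀ a := by
    intro x hx
    have := hS'.avg_iter hf₀ haI hx (K x)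
    simp only [f, this]
    field_simp
  have havg : IsAvg E S f := by
    intro x hx y hy
    have hxy := hS.maps x hx y hy
    set k := max (K (S x y)) (max (K x) (K y))
    have hkx : k ≥ K x := (le_max_left _ _).trans (le_max_right _ _)
    have hky : k ≥ K y := (le_max_right _ _).trans (le_max_right _ _)
    rw [hf x hx k hkx, hf y hy k hky, hf _ hxy k (le_max_left _ _), hS.iter_comm ha hx hy,
      hf₀ _ (hK x hx k hkx) _ (hK y hy k hky)]
    ring
  have hstrict := hS.strictMonoOn_of_avg hE hmono havg hc hb (by
    rw [hagree c (left_mem_Icc.2 hcb.le), hagree b (right_mem_Icc.2 hcb.le)]; linarith)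
  exact ⟨f, hstrict, hS.continuousOn_of_avg hstrict havg, havg⟩

/-- Generators are unique up to affine maps. -/
theorem avg_unique (hE : E.OrdConnected) (hS : IsBisymMean E S) (hsymm : ∀ x y, S x y = S y x)
    {f g : ℝ → ℝ} (hfm : StrictMonoOn f E) (hf : IsAvg E S f) (hgm : MonotoneOn g E)
    (hg : IsAvg E S g) {c b : ℝ} (hc : c ∈ E) (hb : b ∈ E) (hcb : c < b) {x : ℝ} (hx : x ∈ E) :
    g x - g c = (g b - g c) / (f b - f c) * (f x - f c) := by
  have hsub : Icc c b ⊆ E := hE.out hc hb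
  have hS' := hS.restrict_Icc hcb.le hsub
  have hne : f b - f c ≠ 0 := (sub_pos.2 (hfm hc hb hcb)).ne'
  set α := (g b - g c) / (f b - f c) with hα
  set D : ℝ → ℝ := fun x => g x - g c - α * (f x - f c) with hD
  have hDavg : IsAvg E S D := by
    intro x hx y hy
    simp only [hD, hf x hx y hy, hg x hx y hy]; ring
  have hDc : D c = 0 := by simp [hD]
  have hDb : D b = 0 := by simp only [hD, hα]; field_simp; ring
  have hI : ∀ x ∈ Icc c b, D x = 0 := by
    have := nonpos_of_halving (P := Icc c b) (D := fun x => |D x|)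
      (K := (g b - g c) + |α| * (f b - f c)) ?_ ?_
    · intro x hx
      exact abs_nonpos_iff.1 (this x hx)
    · intro x hx
      have h1 := hgm hc (hsub hx) hx.1
      have h2 := hgm (hsub hx) hb hx.2
      have h3 := hfm.monotoneOn hc (hsub hx) hx.1
      have h4 := hfm.monotoneOn (hsub hx) hb hx.2
      refine (abs_sub _ _).trans (add_le_add ?_ ?_)
      · rw [abs_of_nonneg (by linarith)]; linarith
      · rw [abs_mul, abs_of_nonneg (sub_nonneg.2 h3)]
        exact mul_le_mul_of_nonneg_left (by linarith) (abs_nonneg _)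
    · intro x hx
      right
      rcases hS'.exists_half hsymm hcb.le hx with ⟨_, y, hy, rfl⟩ | ⟨_, y, hy, rfl⟩
      · refine ⟨y, hy, le_of_eq ?_⟩
        rw [hDavg c hc y (hsub hy), hDc, zero_add, abs_div, abs_two]
      · refine ⟨y, hy, le_of_eq ?_⟩
        rw [hDavg b hb y (hsub hy), hDb, zero_add, abs_div, abs_two]
  suffices h : D x = 0 by simp only [hD] at h; linarith
  rcases le_total c x with h | h
  · obtain ⟨k, hk⟩ := ((tendsto_order.1 (hS.tendsto_iter hE hc hx)).2 b hcb).exists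
    have h1 := hS.iter_mono hc hc hx h k
    rw [hS.iter_self hc] at h1
    have h2 := hS.avg_iter hDavg hc hx k
    rw [hI _ ⟨h1, hk.le⟩, hDc] at h2
    simpa using h2.symm
  · obtain ⟨k, hk⟩ := ((tendsto_order.1 (hS.tendsto_iter hE hb hx)).1 c hcb).exists
    have h1 := hS.iter_mono hb hx hb (h.trans hcb.le) k
    rw [hS.iter_self hb] at h1
    have h2 := hS.avg_iter hDavg hb hx k
    rw [hI _ ⟨hk.le, h1⟩, hDb] at h2
    simpa using h2.symm

end IsBisymMean

/-! ### Reduction of the `n`-ary operation to a mean -/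

section Nary
variable {E : Set ℝ} {n : ℕ} {M : (Fin n → ℝ) → ℝ}

theorem nary_le
    (hM : ∀ (i : Fin n) (x : Fin n → ℝ), (∀ j, x j ∈ E) →
      StrictMonoOn (fun t => M (Function.update x i t)) E)
    {x y : Fin n → ℝ} (hx : ∀ i, x i ∈ E) (hy : ∀ i, y i ∈ E) (h : ∀ i, x i ≤ y i) :
    M x ≤ M y := by
  have key : ∀ s : Finset (Fin n), M x ≤ M (s.piecewise y x) := by
    intro s
    induction s using Finset.induction_on with
    | empty => simp
    | insert i s hi ih =>
      refine ih.trans ?_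
      have hp : ∀ j, s.piecewise y x j ∈ E := fun j => by
        by_cases hj : j ∈ s <;> simp [hj, hx, hy]
      have := (hM i _ hp).monotoneOn (hx i) (hy i) (h i)
      rw [Finset.piecewise_insert]
      convert this using 2
      rw [eq_comm, Function.update_eq_self_iff]
      simp [hi]
  simpa using key Finset.univ

theorem nary_lt
    (hM : ∀ (i : Fin n) (x : Fin n → ℝ), (∀ j, x j ∈ E) →
      StrictMonoOn (fun t => M (Function.update x i t)) E)
    {x y : Fin n → ℝ} (hx : ∀ i, x i ∈ E) (hy : ∀ i, y i ∈ E) (h : ∀ i, x i ≤ y i)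
    (i : Fin n) (hi : x i < y i) : M x < M y := by
  have h1 := hM i x hx (hx i) (hy i) hi
  simp only [Function.update_eq_self] at h1
  refine h1.trans_le (nary_le hM (fun j => ?_) hy fun j => ?_)
  · by_cases hj : j = i
    · subst hj; simp [hy]
    · simp [hj, hx]
  · by_cases hj : j = i
    · subst hj; simp
    · simp [hj, h]

/-- From `M` one gets a bisymmetric mean `B` commuting with `M`: `B x y` is the point whose
diagonal value `M (B x y, …, B x y)` equals `M (x, y, …, y)`. -/
theorem exists_mean (hE : E.OrdConnected) (hn : 2 ≤ n)
    (hMmaps : ∀ x : Fin n → ℝ, (∀ i, x i ∈ E) → M x ∈ E)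
    (hMc : ContinuousOn M {x : Fin n → ℝ | ∀ i, x i ∈ E})
    (hM : ∀ (i : Fin n) (x : Fin n → ℝ), (∀ j, x j ∈ E) →
      StrictMonoOn (fun t => M (Function.update x i t)) E)
    (hbi : ∀ x : Fin n → Fin n → ℝ, (∀ i j, x i j ∈ E) →
      M (fun i => M (x i)) = M (fun j => M (fun i => x i j))) :
    ∃ B : ℝ → ℝ → ℝ, IsBisymMean E B ∧ ∀ x y : Fin n → ℝ, (∀ i, x i ∈ E) → (∀ i, y i ∈ E) →
      M (fun i => B (x i) (y i)) = B (M x) (M y) := by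
  let i₀ : Fin n := ⟨0, by omega⟩
  let i₁ : Fin n := ⟨1, by omega⟩
  have hi : i₁ ≠ i₀ := by simp [i₀, i₁]
  let v : ℝ → ℝ → Fin n → ℝ := fun x y i => if i = i₀ then x else y
  have hv : ∀ {x y}, x ∈ E → y ∈ E → ∀ i, v x y i ∈ E := fun hx hy i => by
    simp only [v]; split_ifs <;> assumption
  let m : ℝ → ℝ := fun t => M fun _ => t
  have hm : StrictMonoOn m E := fun x hx y hy hxy =>
    nary_lt hM (fun _ => hx) (fun _ => hy) (fun _ => hxy.le) i₀ hxy
  have hmc : ContinuousOn m E :=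
    hMc.comp (f := fun t (_ : Fin n) => t) (by fun_prop) fun t ht _ => ht
  have hmE : ∀ {t}, t ∈ E → m t ∈ E := fun ht => hMmaps _ fun _ => ht
  have hex : ∀ x y, ∃ z, x ∈ E → y ∈ E → z ∈ E ∧ m z = M (v x y) := by
    intro x y
    by_cases hxy : x ∈ E ∧ y ∈ E
    · obtain ⟨hx, hy⟩ := hxy
      have hsub : Icc (min x y) (max x y) ⊆ E := hE.uIcc_subset hx hy
      have h1 : min x y ∈ E := hsub (left_mem_Icc.2 min_le_max)
      have h2 : max x y ∈ E := hsub (right_mem_Icc.2 min_le_max)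
      obtain ⟨z, hz, hz'⟩ := intermediate_value_Icc min_le_max (hmc.mono hsub)
        (show M (v x y) ∈ Icc (m (min x y)) (m (max x y)) from
          ⟨nary_le hM (fun _ => h1) (hv hx hy) fun i => by simp only [v]; split_ifs <;> simp,
            nary_le hM (hv hx hy) (fun _ => h2) fun i => by simp only [v]; split_ifs <;> simp⟩)
      exact ⟨z, fun _ _ => ⟨hsub hz, hz'⟩⟩
    · exact ⟨0, fun hx hy => absurd ⟨hx, hy⟩ hxy⟩
  choose B hB using hex
  have hBE : ∀ {x y}, x ∈ E → y ∈ E → B x y ∈ E := fun hx hy => (hB _ _ hx hy).1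
  have hBm : ∀ {x y}, x ∈ E → y ∈ E → m (B x y) = M (v x y) := fun hx hy => (hB _ _ hx hy).2
  have hcomm : ∀ x y : Fin n → ℝ, (∀ i, x i ∈ E) → (∀ i, y i ∈ E) →
      M (fun i => B (x i) (y i)) = B (M x) (M y) := by
    intro x y hx hy
    have hBxy := fun i => hBE (hx i) (hy i)
    refine hm.injOn (hMmaps _ hBxy) (hBE (hMmaps x hx) (hMmaps y hy)) ?_
    rw [hBm (hMmaps x hx) (hMmaps y hy)]
    have h1 := hbi (fun _ j => B (x j) (y j)) fun _ j => hBxy j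
    have h2 := hbi (fun i => if i = i₀ then x else y) fun i j => by
      split_ifs; exacts [hx j, hy j]
    have h3 : (fun i => M (if i = i₀ then x else y)) = v (M x) (M y) := by
      funext i; simp only [v]; split_ifs <;> rfl
    have h4 : ∀ j, M (fun i => (if i = i₀ then x else y) j) = m (B (x j) (y j)) := by
      intro j
      rw [hBm (hx j) (hy j)]
      congr 1; funext i; simp only [v]; split_ifs <;> rfl
    rw [h3] at h2
    simp only [h4] at h2
    rw [h2]
    exact h1
  refine ⟨B, ?_, hcomm⟩
  refine ⟨fun x hx y hy => hBE hx hy, ?_, ?_, ?_, ?_, ?_⟩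
  · intro x hx
    refine hm.injOn (hBE hx hx) hx ?_
    rw [hBm hx hx]
    congr 1; funext i; simp [v]
  · intro x hx x' hx' y hy h
    rw [← hm.lt_iff_lt (hBE hx hy) (hBE hx' hy), hBm hx hy, hBm hx' hy]
    exact nary_lt hM (hv hx hy) (hv hx' hy) (fun i => by simp only [v]; split_ifs <;> simp [h.le])
      i₀ (by simpa [v] using h)
  · intro x hx y hy y' hy' h
    rw [← hm.lt_iff_lt (hBE hx hy) (hBE hx hy'), hBm hx hy, hBm hx hy']
    exact nary_lt hM (hv hx hy) (hv hx hy') (fun i => by simp only [v]; split_ifs <;> simp [h.le])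
      i₁ (by simpa [v, hi] using h)
  · refine continuousOn_of_strictMonoOn_comp hE hm (fun z hz => hBE hz.1 hz.2) ?_
    refine ContinuousOn.congr (f := fun z : ℝ × ℝ => M (v z.1 z.2)) ?_
      fun z hz => hBm hz.1 hz.2
    refine hMc.comp (f := fun z : ℝ × ℝ => v z.1 z.2) ?_ fun z hz => hv hz.1 hz.2
    refine (continuous_pi fun i => ?_).continuousOn
    by_cases h : i = i₀
    · simpa [v, h] using continuous_fst
    · simpa [v, h] using continuous_snd
  · intro a ha b hb c hc d hd
    have hab := hBE ha hb
    have hcd := hBE hc hd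
    have hac := hBE ha hc
    have hbd := hBE hb hd
    refine hm.injOn (hBE hab hcd) (hBE hac hbd) ?_
    rw [hBm hab hcd]
    have h1 : v (B a b) (B c d) = fun i => B (v a c i) (v b d i) := by
      funext i; simp only [v]; split_ifs <;> rfl
    rw [h1, hcomm _ _ (hv ha hc) (hv hb hd), ← hBm ha hc, ← hBm hb hd]
    exact (hcomm (fun _ => B a c) (fun _ => B b d) (fun _ => hac) fun _ => hbd).symm

/-- The hard direction: the generator `f` of the symmetrized mean makes `f ∘ M` affine in each
variable, with slopes independent of the remaining variables. -/
theorem quasiLinear_of_bisymmetric (hE : E.OrdConnected) (hEint : (interior E).Nonempty)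
    (hn : 2 ≤ n)
    (hMmaps : ∀ x : Fin n → ℝ, (∀ i, x i ∈ E) → M x ∈ E)
    (hMc : ContinuousOn M {x : Fin n → ℝ | ∀ i, x i ∈ E})
    (hM : ∀ (i : Fin n) (x : Fin n → ℝ), (∀ j, x j ∈ E) →
      StrictMonoOn (fun t => M (Function.update x i t)) E)
    (hbi : ∀ x : Fin n → Fin n → ℝ, (∀ i j, x i j ∈ E) →
      M (fun i => M (x i)) = M (fun j => M (fun i => x i j))) :
    ∃ (f : ℝ → ℝ) (p : Fin n → ℝ) (q : ℝ), ContinuousOn f E ∧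
       (StrictMonoOn f E ∨ StrictAntiOn f E) ∧
       (∀ i, 0 < p i) ∧
       ∀ x : Fin n → ℝ, (∀ i, x i ∈ E) →
         f (M x) = (∑ i, p i * f (x i)) + q := by
  obtain ⟨B, hB, hMB⟩ := exists_mean hE hn hMmaps hMc hM hbi
  obtain ⟨c, hc⟩ := hEint
  obtain ⟨b, hcbE, hcb⟩ : ∃ b ∈ E, c < b := by
    obtain ⟨ε, hε, hball⟩ := Metric.isOpen_iff.1 isOpen_interior c hc
    refine ⟨c + ε / 2, interior_subset (hball ?_), by linarith⟩
    rw [Metric.mem_ball, Real.dist_eq, add_sub_cancel_left, abs_of_pos (by positivity)]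
    linarith
  have hcE : c ∈ E := interior_subset hc
  have hS := hB.isBisymMean_sym hE
  have hMS := hB.comm_sym hE hMmaps hMc hMB
  have hsymm : ∀ x y, IsBisymMean.sym B x y = IsBisymMean.sym B y x := IsBisymMean.sym_comm
  set S := IsBisymMean.sym B with hSdef
  clear_value S
  obtain ⟨f, hfm, hfc, hf⟩ := hS.exists_generator hE hsymm hcE hcbE hcb
  have hup : ∀ {x : Fin n → ℝ} {i t}, (∀ j, x j ∈ E) → t ∈ E → ∀ j, Function.update x i t j ∈ E := by
    intro x i t hx ht j
    by_cases hj : j = i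
    · subst hj; simpa
    · simpa [hj] using hx j
  have hSup : ∀ (x y : Fin n → ℝ) (i : Fin n) (s t : ℝ), (∀ j, x j ∈ E) → (∀ j, y j ∈ E) → s ∈ E →
      t ∈ E → (f (M (Function.update x i s)) + f (M (Function.update y i t))) / 2 =
        f (M (Function.update (fun j => S (x j) (y j)) i (S s t))) := by
    intro x y i s t hx hy hs ht
    rw [← hf _ (hMmaps _ (hup hx hs)) _ (hMmaps _ (hup hy ht)), ← hMS _ _ (hup hx hs) (hup hy ht)]
    congr 2
    funext j
    by_cases hj : j = i
    · subst hj; simp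
    · simp [hj]
  have hgm : ∀ (x : Fin n → ℝ) (i : Fin n), (∀ j, x j ∈ E) →
      StrictMonoOn (fun t => f (M (Function.update x i t))) E := fun x i hx s hs t ht hst =>
    hfm (hMmaps _ (hup hx hs)) (hMmaps _ (hup hx ht)) (hM i x hx hs ht hst)
  let p : Fin n → ℝ := fun i =>
    (f (M (Function.update (fun _ => c) i b)) - f (M (Function.update (fun _ => c) i c))) /
      (f b - f c)
  have hfcb : 0 < f b - f c := sub_pos.2 (hfm hcE hcbE hcb)
  have hp : ∀ i, 0 < p i := fun i =>
    div_pos (sub_pos.2 (hgm _ i (fun _ => hcE) hcE hcbE hcb)) hfcb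
  have hslope : ∀ (x : Fin n → ℝ) (i : Fin n) (t : ℝ), (∀ j, x j ∈ E) → t ∈ E →
      f (M (Function.update x i t)) - f (M (Function.update x i c)) = p i * (f t - f c) := by
    intro x i t hx ht
    have h1 := hS.avg_unique hE hsymm hfm hf (hgm x i hx).monotoneOn
      (fun s hs t ht => by
        have := hSup x x i s t hx hx hs ht
        simp only [hS.idem _ (hx _)] at this
        exact this.symm) hcE hcbE hcb ht
    -- exchanging the `i`-th coordinates of two vectors preserves the sum of the values of `f ∘ M`
    have h2 := hSup x (fun _ => c) i b c hx (fun _ => hcE) hcbE hcE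
    have h3 := hSup x (fun _ => c) i c b hx (fun _ => hcE) hcE hcbE
    rw [hsymm c b] at h3
    have h4 : f (M (Function.update x i b)) - f (M (Function.update x i c)) =
        f (M (Function.update (fun _ => c) i b)) - f (M (Function.update (fun _ => c) i c)) := by
      linarith
    rw [h1, h4]
  refine ⟨f, p, f (M fun _ => c) - ∑ i, p i * f c, hfc, Or.inl hfm, hp, fun x hx => ?_⟩
  have key : ∀ s : Finset (Fin n),
      f (M (s.piecewise x fun _ => c)) = f (M fun _ => c) + ∑ i ∈ s, p i * (f (x i) - f c) := by
    intro s
    induction s using Finset.induction_on with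
    | empty => simp
    | insert i s hi ih =>
      have hpw : ∀ j, s.piecewise x (fun _ => c) j ∈ E := fun j => by
        by_cases hj : j ∈ s <;> simp [hj, hx, hcE]
      have h1 := hslope _ i (x i) hpw (hx i)
      have h2 : Function.update (s.piecewise x fun _ => c) i c = s.piecewise x fun _ => c := by
        rw [Function.update_eq_self_iff]; simp [hi]
      rw [h2] at h1
      rw [Finset.piecewise_insert, Finset.sum_insert hi]
      linarith
  have := key Finset.univ
  rw [Finset.piecewise_univ] at this
  rw [this]
  simp only [mul_sub, Finset.sum_sub_distrib]
  ring

/-- The easy direction for an increasing generator. -/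
theorem bisymmetric_of_quasiLinear (hE : E.OrdConnected)
    (hMmaps : ∀ x : Fin n → ℝ, (∀ i, x i ∈ E) → M x ∈ E)
    {f : ℝ → ℝ} {p : Fin n → ℝ} {q : ℝ} (hfc : ContinuousOn f E) (hfm : StrictMonoOn f E)
    (hp : ∀ i, 0 < p i)
    (hf : ∀ x : Fin n → ℝ, (∀ i, x i ∈ E) → f (M x) = (∑ i, p i * f (x i)) + q) :
    ContinuousOn M {x : Fin n → ℝ | ∀ i, x i ∈ E} ∧
     (∀ (i : Fin n) (x : Fin n → ℝ), (∀ j, x j ∈ E) →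
        StrictMonoOn (fun t => M (Function.update x i t)) E) ∧
     (∀ x : Fin n → Fin n → ℝ, (∀ i j, x i j ∈ E) →
        M (fun i => M (x i)) = M (fun j => M (fun i => x i j))) := by
  refine ⟨?_, ?_, ?_⟩
  · refine continuousOn_of_strictMonoOn_comp hE hfm hMmaps ?_
    refine ContinuousOn.congr ?_ fun x hx => hf x hx
    refine ContinuousOn.add (continuousOn_finsetSum _ fun i _ => ?_) continuousOn_const
    exact continuousOn_const.mul
      (hfc.comp (f := fun x : Fin n → ℝ => x i) (by fun_prop) fun x hx => hx i)
  · intro i x hx s hs t ht hst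
    have hup : ∀ t ∈ E, ∀ j, Function.update x i t j ∈ E := by
      intro t ht j
      by_cases hj : j = i
      · subst hj; simpa
      · simpa [hj] using hx j
    simp only
    rw [← hfm.lt_iff_lt (hMmaps _ (hup s hs)) (hMmaps _ (hup t ht)), hf _ (hup s hs),
      hf _ (hup t ht), add_lt_add_iff_right]
    refine Finset.sum_lt_sum (fun j _ => ?_) ⟨i, Finset.mem_univ i, ?_⟩
    · by_cases hj : j = i
      · subst hj
        simpa using mul_le_mul_of_nonneg_left (hfm hs ht hst).le (hp j).le
      · simp [hj]
    · simpa using mul_lt_mul_of_pos_left (hfm hs ht hst) (hp i)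
  · intro x hx
    have hr := fun i => hMmaps (x i) (hx i)
    have hc := fun j => hMmaps (fun i => x i j) fun i => hx i j
    refine hfm.injOn (hMmaps _ hr) (hMmaps _ hc) ?_
    rw [hf _ hr, hf _ hc]
    simp only [fun i => hf (x i) (hx i), fun j => hf (fun i => x i j) fun i => hx i j, mul_add,
      Finset.mul_sum, Finset.sum_add_distrib]
    rw [Finset.sum_comm]
    congr 2
    exact Finset.sum_congr rfl fun j _ => Finset.sum_congr rfl fun i _ => by ring

end Nary

/-- **Aczél's theorem without symmetry and idempotency (quasi-linear functions).**
Let `E` be a real interval with nonempty interior and `n ≥ 2`. A function `M : Eⁿ → E`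
is continuous, strictly increasing in each variable, and bisymmetric iff there are a
continuous strictly monotonic `f : E → ℝ`, reals `pᵢ > 0` and `q ∈ ℝ` with
`M(x) = f⁻¹(∑ pᵢ f(xᵢ) + q)` (stated via `f (M x) = ∑ pᵢ f (x i) + q`). -/
theorem quasiLinear_function_characterization
    (E : Set ℝ) (hE : E.OrdConnected) (hEint : (interior E).Nonempty)
    (n : ℕ) (hn : 2 ≤ n) (M : (Fin n → ℝ) → ℝ)
    (hMmaps : ∀ x : Fin n → ℝ, (∀ i, x i ∈ E) → M x ∈ E) :
    (ContinuousOn M {x : Fin n → ℝ | ∀ i, x i ∈ E} ∧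
     (∀ (i : Fin n) (x : Fin n → ℝ), (∀ j, x j ∈ E) →
        StrictMonoOn (fun t => M (Function.update x i t)) E) ∧
     (∀ x : Fin n → Fin n → ℝ, (∀ i j, x i j ∈ E) →
        M (fun i => M (x i)) = M (fun j => M (fun i => x i j)))) ↔
    (∃ (f : ℝ → ℝ) (p : Fin n → ℝ) (q : ℝ), ContinuousOn f E ∧
       (StrictMonoOn f E ∨ StrictAntiOn f E) ∧
       (∀ i, 0 < p i) ∧
       ∀ x : Fin n → ℝ, (∀ i, x i ∈ E) →
         f (M x) = (∑ i, p i * f (x i)) + q) := by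
  constructor
  · rintro ⟨hMc, hM, hbi⟩
    exact quasiLinear_of_bisymmetric hE hEint hn hMmaps hMc hM hbi
  · rintro ⟨f, p, q, hfc, hfm | hfm, hp, hf⟩
    · exact bisymmetric_of_quasiLinear hE hMmaps hfc hfm hp hf
    · -- a decreasing generator may be replaced by its negative
      refine bisymmetric_of_quasiLinear (f := fun t => -f t) (q := -q) hE hMmaps hfc.neg hfm.neg hp
        fun x hx => ?_
      rw [hf x hx]
      simp only [mul_neg, Finset.sum_neg_distrib]
      ring
end

section
/- Let E be a real interval, bounded or not, which is open on at least one side. A function A : E² → E is continuous, strictly increasing in each variable, and associative (A(A(x,y),z) = A(x,A(y,z)) for all x,y,z ∈ E) if and only if there exists a continuous strictly monotonic function f : E → ℝ such that A(x,y) = f⁻¹( f(x) + f(y) ) for all (x,y) ∈ E². -/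
/-!
The converse direction transports strict monotonicity, associativity and continuity through `f`,
which is a homeomorphism from the interval `E` onto the interval `f(E)`.

For the direct one, regard `E` as a linearly ordered topological semigroup `S`, connected and with
strictly increasing translations. Two distinct elements cannot both be idempotent, since a
cancellative semigroup has at most one idempotent, so, up to reversing the order, there is an `a`
with `a < a * a`. Then `y < a * y` for all `y`, and connectedness makes `a` Archimedean:
`a ^ n * x` eventually exceeds any given element (`exists_lt_pw_mul`).

* On elements `x` with `x < x * x`, comparing the powers of `x` with those of `a`, as in Hölder's
  theorem, gives a real number `g x`. Commutativity is not needed for `g (x * y) = g x + g y`,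
  because `(x * y) ^ n` always lies between `x ^ n * y ^ n` and `y ^ n * x ^ n`
  (`exists_additive_on_pos`).
* The formula `f x = g (a ^ n * x) - n`, with `n` large, extends `g` to a monotone additive function
  on all of `S` (`exists_additive`).
* If `f x = f y` with `x < y`, then `x * s < y * s` and continuity of the product show that `f` is
  locally constant at every `s`, hence constant, which contradicts `f (a * a) = 2 * f a`. So `f` is
  strictly monotone (`strictMono_of_additive`).
* A discontinuity of `f` at `s` would propagate to a discontinuity at `x * s` for each of the
  uncountably many `x`, whereas a monotone function has only countably many
  (`continuous_of_additive`).
-/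

namespace Aczel

open Filter Topology

/-! ### Ordered semigroups with Archimedean elements -/

section Algebra

variable {S : Type*} [Semigroup S]

/-- `pw x n` is the power `x ^ (n + 1)`; the exponent is shifted because a semigroup need not have
an identity. -/
def pw (x : S) : ℕ → S
  | 0 => x
  | n + 1 => x * pw x n

lemma pw_mul (x : S) (m n : ℕ) : pw x m * pw x n = pw x (m + n + 1) := by
  induction m with
  | zero => simp [pw]
  | succ m ih =>
    rw [show m + 1 + n + 1 = (m + n + 1) + 1 by ring]
    simp only [pw, mul_assoc, ih]

lemma pw_succ' (x : S) (n : ℕ) : pw x (n + 1) = pw x n * x := (pw_mul x n 0).symm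

lemma pw_pw (x : S) (m n : ℕ) : pw (pw x m) n = pw x (m * n + m + n) := by
  induction n with
  | zero => simp [pw]
  | succ n ih =>
    rw [pw, ih, pw_mul]
    congr 1
    ring

lemma pw_mul_succ (x y : S) (n : ℕ) : pw (x * y) (n + 1) = x * pw (y * x) n * y := by
  induction n with
  | zero => simp [pw, mul_assoc]
  | succ n ih =>
    rw [pw, ih]
    simp only [pw, mul_assoc]

set_option linter.unusedSectionVars false

variable [LinearOrder S] [MulLeftStrictMono S] [MulRightStrictMono S]

lemma lt_left (x : S) {y z : S} (h : y < z) : x * y < x * z :=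
  (mul_right_strictMono : StrictMono (x * ·)) h

lemma lt_right (x : S) {y z : S} (h : y < z) : y * x < z * x :=
  (mul_left_strictMono : StrictMono (· * x)) h

lemma le_left (x : S) {y z : S} (h : y ≤ z) : x * y ≤ x * z :=
  (mul_right_strictMono : StrictMono (x * ·)).monotone h

lemma le_right (x : S) {y z : S} (h : y ≤ z) : y * x ≤ z * x :=
  (mul_left_strictMono : StrictMono (· * x)).monotone h

lemma lt_of_left {x y z : S} (h : x * y < x * z) : y < z :=
  (mul_right_strictMono : StrictMono (x * ·)).lt_iff_lt.1 h

lemma lt_of_right {x y z : S} (h : y * x < z * x) : y < z :=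
  (mul_left_strictMono : StrictMono (· * x)).lt_iff_lt.1 h

lemma pw_le_pw {x y : S} (h : x ≤ y) (n : ℕ) : pw x n ≤ pw y n := by
  induction n with
  | zero => exact h
  | succ n ih => exact (le_left _ ih).trans (le_right _ h)

lemma lt_mul_left {a : S} (ha : a < a * a) (y : S) : y < a * y :=
  lt_of_left (x := a) (by rw [← mul_assoc]; exact lt_right _ ha)

lemma lt_mul_right {a : S} (ha : a < a * a) (y : S) : y < y * a :=
  lt_of_right (x := a) (by rw [mul_assoc]; exact lt_left _ ha)

lemma pw_strictMono {a : S} (ha : a < a * a) : StrictMono (pw a) :=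
  strictMono_nat_of_lt_succ fun _ => lt_mul_left ha _

lemma pos_of_le {a z : S} (ha : a < a * a) (h : a ≤ z) : z < z * z :=
  (lt_mul_left ha z).trans_le (le_right _ h)

lemma pos_mul {x y : S} (hx : x < x * x) (hy : y < y * y) : x * y < (x * y) * (x * y) :=
  pos_of_le hx (lt_mul_right hy x).le

/-- Since `(x * y) ^ n ≤ (y * x) ^ n` as well, the powers of `x * y` and of `y * x` all lie between
`x ^ n * y ^ n` and `y ^ n * x ^ n`. -/
lemma pw_mul_bounds {x y : S} (h : x * y ≤ y * x) (n : ℕ) :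
    pw x n * pw y n ≤ pw (x * y) n ∧ pw (y * x) n ≤ pw y n * pw x n := by
  induction n with
  | zero => exact ⟨le_rfl, le_rfl⟩
  | succ n ih =>
    constructor
    · calc pw x (n + 1) * pw y (n + 1) = x * (pw x n * pw y n) * y := by
            rw [pw_succ' y]; simp only [pw, mul_assoc]
        _ ≤ x * pw (y * x) n * y := le_right _ (le_left _ (ih.1.trans (pw_le_pw h n)))
        _ = _ := (pw_mul_succ x y n).symm
    · calc pw (y * x) (n + 1) = y * pw (x * y) n * x := pw_mul_succ y x n
        _ ≤ y * (pw y n * pw x n) * x := le_right _ (le_left _ ((pw_le_pw h n).trans ih.2))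
        _ = _ := by rw [pw_succ' x]; simp only [pw, mul_assoc]

/-- The real number measuring `x` in units of `a`, obtained as a cut between the rational lower and
upper estimates. -/
lemma exists_ratio {a x : S} (ha : a < a * a)
    (hl : ∃ n, a ≤ pw x n) (hu : ∃ n, x ≤ pw a n) :
    ∃ r : ℝ, ∀ k n : ℕ, (pw a k ≤ pw x n → (k + 1 : ℝ) ≤ (n + 1) * r) ∧
      (pw x n ≤ pw a k → (n + 1) * r ≤ (k + 1 : ℝ)) := by
  let L : Set ℝ := {q | ∃ k n : ℕ, pw a k ≤ pw x n ∧ q = (k + 1 : ℝ) / (n + 1)}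
  let U : Set ℝ := {q | ∃ k n : ℕ, pw x n ≤ pw a k ∧ q = (k + 1 : ℝ) / (n + 1)}
  have hLU : ∀ q ∈ L, ∀ q' ∈ U, q ≤ q' := by
    rintro _ ⟨k, n, h, rfl⟩ _ ⟨l, m, h', rfl⟩
    rw [div_le_div_iff₀ (by positivity) (by positivity)]
    have h1 := pw_le_pw h m
    have h2 := pw_le_pw h' n
    rw [pw_pw, pw_pw] at h1 h2
    rw [show n * m + n + m = m * n + m + n by ring] at h1
    have h3 := (pw_strictMono ha).le_iff_le.1 (h1.trans h2)
    have h4 : (k + 1) * (m + 1) ≤ (l + 1) * (n + 1) := by nlinarith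
    exact_mod_cast h4
  obtain ⟨n, hn⟩ := hl
  obtain ⟨m, hm⟩ := hu
  obtain ⟨r, hr1, hr2⟩ := exists_between_of_forall_le (s := L) (t := U)
    ⟨_, 0, n, hn, rfl⟩ ⟨_, m, 0, hm, rfl⟩ hLU
  refine ⟨r, fun k n => ⟨fun h => ?_, fun h => ?_⟩⟩
  · have := hr1 ⟨k, n, h, rfl⟩
    rwa [div_le_iff₀ (by positivity), mul_comm] at this
  · have := hr2 ⟨k, n, h, rfl⟩
    rwa [le_div_iff₀ (by positivity), mul_comm] at this

lemma nonpos_of_bounded {c C : ℝ} {N : ℕ} (h : ∀ n : ℕ, N ≤ n → (n + 1 : ℝ) * c ≤ C) :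
    c ≤ 0 := by
  by_contra! hc
  obtain ⟨n, hn⟩ := exists_nat_gt (C / c)
  have h1 := h (max N n) (le_max_left _ _)
  have h2 : (n : ℝ) ≤ ((max N n : ℕ) : ℝ) := by exact_mod_cast le_max_right _ _
  rw [div_lt_iff₀ hc] at hn
  nlinarith

/-- An additive monotone function on the elements `x` with `x < x * x`, normalized by `g a = 1`. -/
lemma exists_additive_on_pos {a : S} (ha : a < a * a)
    (harch : ∀ x : S, x < x * x → ∀ y, ∃ n, y < pw x n) :
    ∃ g : S → ℝ, g a = 1 ∧
      (∀ x y, x < x * x → y < y * y → g (x * y) = g x + g y) ∧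
      (∀ x y, x < x * x → y < y * y → x ≤ y → g x ≤ g y) := by
  have hex : ∀ x : S, ∃ r : ℝ, x < x * x → ∀ k n : ℕ,
      (pw a k ≤ pw x n → (k + 1 : ℝ) ≤ (n + 1) * r) ∧
      (pw x n ≤ pw a k → (n + 1) * r ≤ (k + 1 : ℝ)) := by
    intro x
    by_cases hx : x < x * x
    · obtain ⟨n, hn⟩ := harch x hx a
      obtain ⟨m, hm⟩ := harch a ha x
      obtain ⟨r, hr⟩ := exists_ratio ha ⟨n, hn.le⟩ ⟨m, hm.le⟩
      exact ⟨r, fun _ => hr⟩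
    · exact ⟨0, fun h => absurd h hx⟩
  choose g hg using hex
  have hfloor : ∀ x : S, x < x * x → ∃ N, ∀ n, N ≤ n →
      ∃ k, pw a k ≤ pw x n ∧ pw x n ≤ pw a (k + 1) := by
    intro x hx
    obtain ⟨N, hN⟩ := harch x hx a
    refine ⟨N, fun n hn => ?_⟩
    have h0 : a < pw x n := hN.trans_le ((pw_strictMono hx).monotone hn)
    have hE := harch a ha (pw x n)
    classical
    obtain ⟨k, hk⟩ : ∃ k, Nat.find hE = k + 1 := by
      refine Nat.exists_eq_succ_of_ne_zero fun h => ?_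
      have := Nat.find_spec hE
      rw [h] at this
      exact lt_asymm this h0
    refine ⟨k, ?_, ?_⟩
    · exact not_lt.1 (Nat.find_min hE (by omega))
    · rw [← hk]
      exact (Nat.find_spec hE).le
  refine ⟨g, ?_, ?_, ?_⟩
  · have h := hg a ha 0 0
    have h1 := h.1 le_rfl
    have h2 := h.2 le_rfl
    norm_num at h1 h2
    linarith
  · intro x y hx hy
    obtain ⟨N, hN⟩ := hfloor x hx
    obtain ⟨M, hM⟩ := hfloor y hy
    have hxy := pos_mul hx hy
    have key : ∀ n : ℕ, max N M ≤ n → (n + 1 : ℝ) * (g (x * y) - (g x + g y)) ≤ 2 ∧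
        (n + 1 : ℝ) * ((g x + g y) - g (x * y)) ≤ 2 := by
      intro n hn
      obtain ⟨k, hk1, hk2⟩ := hN n (le_of_max_le_left hn)
      obtain ⟨l, hl1, hl2⟩ := hM n (le_of_max_le_right hn)
      have b1 := (hg x hx k n).1 hk1
      have b2 := (hg x hx (k + 1) n).2 hk2
      have b3 := (hg y hy l n).1 hl1
      have b4 := (hg y hy (l + 1) n).2 hl2
      have hlow : pw a (k + l + 1) ≤ pw (x * y) n := by
        rcases le_total (x * y) (y * x) with h | h
        · rw [← pw_mul]
          exact ((le_left _ hl1).trans (le_right _ hk1)).trans (pw_mul_bounds h n).1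
        · rw [add_comm k l, ← pw_mul]
          exact ((le_left _ hk1).trans (le_right _ hl1)).trans
            ((pw_mul_bounds h n).1.trans (pw_le_pw h n))
      have hupp : pw (x * y) n ≤ pw a ((k + 1) + (l + 1) + 1) := by
        rcases le_total (x * y) (y * x) with h | h
        · rw [add_comm (k + 1), ← pw_mul]
          exact ((pw_le_pw h n).trans (pw_mul_bounds h n).2).trans
            ((le_left _ hk2).trans (le_right _ hl2))
        · rw [← pw_mul]
          exact (pw_mul_bounds h n).2.trans ((le_left _ hl2).trans (le_right _ hk2))
      have b5 := (hg _ hxy _ n).1 hlow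
      have b6 := (hg _ hxy _ n).2 hupp
      push_cast at *
      constructor <;> nlinarith
    have h1 := nonpos_of_bounded fun n hn => (key n hn).1
    have h2 := nonpos_of_bounded fun n hn => (key n hn).2
    linarith
  · intro x y hx hy hxy
    obtain ⟨N, hN⟩ := hfloor x hx
    have key : ∀ n : ℕ, N ≤ n → (n + 1 : ℝ) * (g x - g y) ≤ 1 := by
      intro n hn
      obtain ⟨k, hk1, hk2⟩ := hN n hn
      have b1 := (hg y hy k n).1 (hk1.trans (pw_le_pw hxy n))
      have b2 := (hg x hx (k + 1) n).2 hk2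
      push_cast at *
      nlinarith
    linarith [nonpos_of_bounded key]

/-- An additive monotone function on the whole semigroup: `g` is extended by
`f x = g (a ^ (n + 1) * x) - (n + 1)` for `n` large. -/
lemma exists_additive {a : S} (ha : a < a * a)
    (harch : ∀ b : S, b < b * b → ∀ x y : S, ∃ n, y < pw b n * x) :
    ∃ f : S → ℝ, f a = 1 ∧ (∀ x y, f (x * y) = f x + f y) ∧ Monotone f := by
  obtain ⟨g, g1, gadd, gmono⟩ := exists_additive_on_pos ha fun x hx y => by
    obtain ⟨n, hn⟩ := harch x hx x y
    exact ⟨n + 1, by rwa [pw_succ']⟩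
  have ppos : ∀ n, pw a n < pw a n * pw a n := fun n =>
    pos_of_le ha ((pw_strictMono ha).monotone (Nat.zero_le n))
  have gpw : ∀ n : ℕ, g (pw a n) = n + 1 := by
    intro n
    induction n with
    | zero => simpa [pw] using g1
    | succ n ih => rw [pw, gadd _ _ ha (ppos n), ih, g1]; push_cast; ring
  choose N hN using fun x => harch a ha x a
  have grow : ∀ {x : S} {m n : ℕ}, a < pw a m * x → m ≤ n → a < pw a n * x := fun h hmn =>
    h.trans_le (le_right _ ((pw_strictMono ha).monotone hmn))
  have indep : ∀ (x : S) (m n : ℕ), a < pw a m * x → a < pw a n * x →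
      g (pw a m * x) - (m + 1) = g (pw a n * x) - (n + 1) := by
    intro x m n hm hn
    have e1 := gadd _ _ (ppos n) (pos_of_le ha hm.le)
    have e2 := gadd _ _ (ppos m) (pos_of_le ha hn.le)
    rw [← mul_assoc, pw_mul, gpw] at e1 e2
    rw [add_comm m n] at e2
    linarith
  let f : S → ℝ := fun x => g (pw a (N x) * x) - (N x + 1)
  have hf : ∀ (x : S) (n : ℕ), a < pw a n * x → f x = g (pw a n * x) - (n + 1) :=
    fun x n h => indep x _ n (hN x) h
  refine ⟨f, ?_, ?_, ?_⟩
  · rw [hf a 0 ha]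
    simp only [pw]
    rw [gadd a a ha ha, g1]
    norm_num
  · intro x y
    let n := max (N x) (max (N y) (N (x * y)))
    have hx : a < pw a n * x := grow (hN x) (by omega)
    have hy : a < pw a n * y := grow (hN y) (by omega)
    have hxy : a < pw a n * (x * y) := grow (hN (x * y)) (by omega)
    -- `a` commutes with its powers, so the shift may as well be applied on the right of `y`
    have hy' : a < y * pw a n := by
      apply lt_of_left (x := pw a n)
      rw [← mul_assoc, ← pw_succ', pw]
      exact lt_right _ hy
    rw [hf x n hx, hf y n hy, hf (x * y) n hxy]
    have e1 := gadd _ _ (pos_of_le ha hx.le) (pos_of_le ha hy'.le)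
    have e2 := gadd _ _ (pos_of_le ha hxy.le) (ppos n)
    have e3 := gadd _ _ (ppos n) (pos_of_le ha hy'.le)
    have e4 := gadd _ _ (pos_of_le ha hy.le) (ppos n)
    simp only [mul_assoc, gpw] at e1 e2 e3 e4
    linarith
  · intro x y hxy
    let n := max (N x) (N y)
    have hx : a < pw a n * x := grow (hN x) (by omega)
    have hy : a < pw a n * y := grow (hN y) (by omega)
    rw [hf x n hx, hf y n hy]
    have := gmono _ _ (pos_of_le ha hx.le) (pos_of_le ha hy.le) (le_left _ hxy)
    linarith

end Algebra

/-! ### Connected ordered topological semigroups -/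

section Topology

set_option linter.unusedSectionVars false

variable {S : Type*} [Semigroup S] [LinearOrder S] [MulLeftStrictMono S] [MulRightStrictMono S]
  [TopologicalSpace S] [OrderTopology S] [ContinuousMul S]

/-- The set of elements exceeding all `a ^ n * x` is clopen and misses `x`. -/
lemma exists_lt_pw_mul [PreconnectedSpace S] {a : S} (ha : a < a * a) (x y : S) :
    ∃ n, y < pw a n * x := by
  let V : Set S := {z | ∃ n, z < pw a n * x}
  have hVo : IsOpen V := by
    have : V = ⋃ n, Set.Iio (pw a n * x) := by ext; simp [V]
    rw [this]
    exact isOpen_iUnion fun _ => isOpen_Iio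
  have hVc : IsClosed V := by
    rw [← isOpen_compl_iff, isOpen_iff_mem_nhds]
    intro z hz
    have hnear : ∀ᶠ w in 𝓝 z, z < a * w :=
      ((continuous_const_mul a).tendsto z).eventually (lt_mem_nhds (lt_mul_left ha z))
    filter_upwards [hnear] with w hw
    rintro ⟨n, hn⟩
    refine hz ⟨n + 1, hw.trans ?_⟩
    rw [pw, mul_assoc]
    exact lt_left _ hn
  have hV : V = Set.univ := IsClopen.eq_univ ⟨hVc, hVo⟩ ⟨x, 0, lt_mul_left ha x⟩
  exact hV.ge (Set.mem_univ y)

lemma strictMono_of_additive [PreconnectedSpace S] {f : S → ℝ} {a : S} (h1 : f a = 1)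
    (hadd : ∀ x y, f (x * y) = f x + f y) (hmono : Monotone f) : StrictMono f := by
  refine hmono.strictMono_of_injective fun x y hxy => ?_
  by_contra hne
  wlog hlt : x < y generalizing x y
  · exact this y x hxy.symm (Ne.symm hne) (lt_of_le_of_ne (not_lt.1 hlt) (Ne.symm hne))
  have hloc : IsLocallyConstant f := by
    rw [IsLocallyConstant.iff_eventually_eq]
    intro s
    have e1 : ∀ᶠ w in 𝓝 s, x * w < y * s :=
      ((continuous_const_mul x).tendsto s).eventually (gt_mem_nhds (lt_right s hlt))
    have e2 : ∀ᶠ w in 𝓝 s, x * s < y * w :=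
      ((continuous_const_mul y).tendsto s).eventually (lt_mem_nhds (lt_right s hlt))
    filter_upwards [e1, e2] with w hw1 hw2
    have b1 := hmono hw1.le
    have b2 := hmono hw2.le
    rw [hadd, hadd] at b1 b2
    linarith
  have := hloc.apply_eq_of_preconnectedSpace a (a * a)
  rw [hadd, h1] at this
  norm_num at this

lemma continuous_of_additive [SecondCountableTopology S] [Uncountable S] {f : S → ℝ}
    (hadd : ∀ x y, f (x * y) = f x + f y) (hmono : Monotone f) : Continuous f := by
  rw [continuous_iff_continuousAt]
  intro s
  by_contra hs
  have hsub : ∀ x : S, ¬ ContinuousAt f (x * s) := by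
    intro x hx
    have h : ContinuousAt (fun w => f (x * w) - f x) s :=
      (ContinuousAt.comp (g := f) (f := fun w => x * w) hx
        (continuous_const_mul x).continuousAt).sub continuousAt_const
    exact hs (by simpa [hadd] using h)
  have hinj : Function.Injective (· * s : S → S) :=
    (mul_left_strictMono : StrictMono (· * s)).injective
  have hcount := hmono.countable_not_continuousAt.preimage hinj
  have : (Set.univ : Set S).Countable := hcount.mono fun x _ => hsub x
  exact Set.not_countable_univ this

lemma exists_additive_homeo_of_pos [PreconnectedSpace S] [SecondCountableTopology S]
    [Uncountable S] {a : S} (ha : a < a * a) :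
    ∃ f : S → ℝ, Continuous f ∧ StrictMono f ∧ ∀ x y, f (x * y) = f x + f y := by
  obtain ⟨f, h1, hadd, hmono⟩ := exists_additive ha fun b hb => exists_lt_pw_mul hb
  exact ⟨f, continuous_of_additive hadd hmono, strictMono_of_additive h1 hadd hmono, hadd⟩

lemma exists_additive_homeo [PreconnectedSpace S] [SecondCountableTopology S] [Uncountable S] :
    ∃ f : S → ℝ, Continuous f ∧ (StrictMono f ∨ StrictAnti f) ∧
      ∀ x y, f (x * y) = f x + f y := by
  by_cases hpos : ∃ a : S, a < a * a
  · obtain ⟨a, ha⟩ := hpos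
    obtain ⟨f, hc, hm, hadd⟩ := exists_additive_homeo_of_pos ha
    exact ⟨f, hc, Or.inl hm, hadd⟩
  by_cases hneg : ∃ a : S, a * a < a
  · obtain ⟨a, ha⟩ := hneg
    have : PreconnectedSpace Sᵒᵈ := ‹PreconnectedSpace S›
    have : SecondCountableTopology Sᵒᵈ := ‹SecondCountableTopology S›
    have : Uncountable Sᵒᵈ := ‹Uncountable S›
    obtain ⟨f, hc, hm, hadd⟩ := exists_additive_homeo_of_pos (S := Sᵒᵈ)
      (a := OrderDual.toDual a) ha
    exact ⟨fun x => f (OrderDual.toDual x), hc, Or.inr fun x y h => hm h, fun x y => hadd _ _⟩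
  push Not at hpos hneg
  have hidem : ∀ a : S, a * a = a := fun a => le_antisymm (hpos a) (hneg a)
  obtain ⟨a, b, hab⟩ := exists_pair_ne S
  have h1 : a * b = b := by
    apply (mul_right_strictMono : StrictMono (a * ·)).injective
    simp only [← mul_assoc, hidem]
  have h2 : a * b = a := by
    apply (mul_left_strictMono : StrictMono (· * b)).injective
    simp only [mul_assoc, hidem]
  exact absurd (h2.symm.trans h1) hab

end Topology

/-! ### Real intervals -/

lemma uncountable_of_not_Icc {E : Set ℝ} (hE : E.OrdConnected) (hEne : E.Nonempty)
    (hopen : ¬ ∃ a b : ℝ, E = Set.Icc a b) : Uncountable E := by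
  obtain ⟨x, hx⟩ := hEne
  obtain ⟨y, hy, z, hz, hyz⟩ : E.Nontrivial := by
    rw [← Set.not_subsingleton_iff]
    exact fun h => hopen ⟨x, x, by rw [Set.Icc_self]; exact h.eq_singleton_of_mem hx⟩
  rw [← not_countable_iff, Set.countable_coe_iff]
  intro hc
  have h0 := (hc.mono (hE.uIcc_subset hy hz)).measure_zero MeasureTheory.volume
  rw [Set.uIcc, Real.volume_Icc, ENNReal.ofReal_eq_zero] at h0
  have := inf_lt_sup.2 hyz
  linarith

/-- The operation `A` is `f⁻¹(f x + f y)`, with `f` a homeomorphism onto the interval `f(E)`. -/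
lemma continuousOn_of_additive {E : Set ℝ} (hE : E.OrdConnected) {A : ℝ → ℝ → ℝ}
    (hmaps : ∀ x ∈ E, ∀ y ∈ E, A x y ∈ E) {f : ℝ → ℝ} (hc : ContinuousOn f E)
    (hm : StrictMonoOn f E) (hadd : ∀ x ∈ E, ∀ y ∈ E, f (A x y) = f x + f y) :
    ContinuousOn (fun p : ℝ × ℝ => A p.1 p.2) (E ×ˢ E) := by
  have himg : (f '' E).OrdConnected := (hE.isPreconnected.image f hc).ordConnected
  let φ : E ≃o f '' E := hm.orderIso f E
  have hφ : ∀ x : E, (φ x : ℝ) = f x := fun _ => rfl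
  have hcr := continuousOn_iff_continuous_domRestrict.1 hc
  have hsum : Continuous fun p : (E ×ˢ E : Set (ℝ × ℝ)) =>
      (⟨f p.1.1 + f p.1.2, A p.1.1 p.1.2, hmaps _ p.2.1 _ p.2.2, hadd _ p.2.1 _ p.2.2⟩ : f '' E) := by
    refine Continuous.subtype_mk ?_ _
    have h1 : Continuous fun p : (E ×ˢ E : Set (ℝ × ℝ)) => (⟨p.1.1, p.2.1⟩ : E) := by fun_prop
    have h2 : Continuous fun p : (E ×ˢ E : Set (ℝ × ℝ)) => (⟨p.1.2, p.2.2⟩ : E) := by fun_prop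
    exact (hcr.comp h1).add (hcr.comp h2)
  rw [continuousOn_iff_continuous_domRestrict]
  refine (continuous_subtype_val.comp (φ.symm.continuous.comp hsum)).congr fun p => ?_
  have : (⟨f p.1.1 + f p.1.2, A p.1.1 p.1.2, hmaps _ p.2.1 _ p.2.2, hadd _ p.2.1 _ p.2.2⟩ : f '' E)
      = φ ⟨A p.1.1 p.1.2, hmaps _ p.2.1 _ p.2.2⟩ := by
    apply Subtype.ext
    rw [hφ]
    exact (hadd _ p.2.1 _ p.2.2).symm
  simp only [Function.comp, this, OrderIso.symm_apply_apply, Set.domRestrict]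

lemma of_additive {E : Set ℝ} (hE : E.OrdConnected) {A : ℝ → ℝ → ℝ}
    (hmaps : ∀ x ∈ E, ∀ y ∈ E, A x y ∈ E) {f : ℝ → ℝ} (hc : ContinuousOn f E)
    (hm : StrictMonoOn f E) (hadd : ∀ x ∈ E, ∀ y ∈ E, f (A x y) = f x + f y) :
    ContinuousOn (fun p : ℝ × ℝ => A p.1 p.2) (E ×ˢ E) ∧
     (∀ y ∈ E, StrictMonoOn (fun x => A x y) E) ∧
     (∀ x ∈ E, StrictMonoOn (fun y => A x y) E) ∧
     (∀ x ∈ E, ∀ y ∈ E, ∀ z ∈ E, A (A x y) z = A x (A y z)) := by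
  refine ⟨continuousOn_of_additive hE hmaps hc hm hadd, ?_, ?_, ?_⟩
  · intro y hy x hx x' hx' h
    apply (hm.lt_iff_lt (hmaps _ hx _ hy) (hmaps _ hx' _ hy)).1
    rw [hadd _ hx _ hy, hadd _ hx' _ hy]
    linarith [hm hx hx' h]
  · intro x hx y hy y' hy' h
    apply (hm.lt_iff_lt (hmaps _ hx _ hy) (hmaps _ hx _ hy')).1
    rw [hadd _ hx _ hy, hadd _ hx _ hy']
    linarith [hm hy hy' h]
  · intro x hx y hy z hz
    have hxy := hmaps x hx y hy
    have hyz := hmaps y hy z hz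
    apply hm.injOn (hmaps _ hxy _ hz) (hmaps _ hx _ hyz)
    rw [hadd _ hxy _ hz, hadd _ hx _ hyz, hadd _ hx _ hy, hadd _ hy _ hz, add_assoc]

end Aczel

/-- **Aczél's associativity theorem.**
Let `E` be a real interval, bounded or not, open on at least one side (i.e. not of the
form `[a,b]`). A function `A : E² → E` is continuous, strictly increasing in each
variable, and associative iff there is a continuous strictly monotonic `f : E → ℝ`
with `A(x,y) = f⁻¹(f(x) + f(y))` (stated via `f (A x y) = f x + f y`). -/
theorem aczel_associativity
    (E : Set ℝ) (hE : E.OrdConnected) (hEne : E.Nonempty)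
    (hopen : ¬ ∃ a b : ℝ, E = Set.Icc a b)
    (A : ℝ → ℝ → ℝ)
    (hmaps : ∀ x ∈ E, ∀ y ∈ E, A x y ∈ E) :
    (ContinuousOn (fun p : ℝ × ℝ => A p.1 p.2) (E ×ˢ E) ∧
     (∀ y ∈ E, StrictMonoOn (fun x => A x y) E) ∧
     (∀ x ∈ E, StrictMonoOn (fun y => A x y) E) ∧
     (∀ x ∈ E, ∀ y ∈ E, ∀ z ∈ E, A (A x y) z = A x (A y z))) ↔
    (∃ f : ℝ → ℝ, ContinuousOn f E ∧ (StrictMonoOn f E ∨ StrictAntiOn f E) ∧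
       ∀ x ∈ E, ∀ y ∈ E, f (A x y) = f x + f y) := by
  constructor
  · rintro ⟨hcont, hl, hr, hassoc⟩
    let _ : Semigroup E :=
      { mul := fun x y => ⟨A x y, hmaps x x.2 y y.2⟩
        mul_assoc := fun x y z => Subtype.ext (hassoc x x.2 y y.2 z z.2) }
    have : MulLeftStrictMono E := ⟨fun x y z h => hr x x.2 y.2 z.2 h⟩
    have : MulRightStrictMono E := ⟨fun x y z h => hl x x.2 y.2 z.2 h⟩
    have : ContinuousMul E := ⟨by
      refine Continuous.subtype_mk (f := fun p : E × E => A p.1 p.2) ?_ _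
      exact hcont.comp_continuous (f := fun p : E × E => ((p.1 : ℝ), (p.2 : ℝ)))
        (by fun_prop) fun p => ⟨p.1.2, p.2.2⟩⟩
    have : PreconnectedSpace E := Subtype.preconnectedSpace hE.isPreconnected
    have : Uncountable E := Aczel.uncountable_of_not_Icc hE hEne hopen
    obtain ⟨f, hc, hm, hadd⟩ := Aczel.exists_additive_homeo (S := E)
    classical
    let F : ℝ → ℝ := fun x => if h : x ∈ E then f ⟨x, h⟩ else 0
    have hF : ∀ x (h : x ∈ E), F x = f ⟨x, h⟩ := fun x h => dif_pos h
    refine ⟨F, ?_, ?_, ?_⟩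
    · rw [continuousOn_iff_continuous_domRestrict]
      exact hc.congr fun x => (hF x x.2).symm
    · refine hm.imp (fun hm x hx y hy h => ?_) (fun hm x hx y hy h => ?_)
      · rw [hF x hx, hF y hy]
        exact hm h
      · rw [hF x hx, hF y hy]
        exact hm h
    · intro x hx y hy
      rw [hF x hx, hF y hy, hF _ (hmaps x hx y hy), ← hadd]
      rfl
  · rintro ⟨f, hc, hm | hm, hadd⟩
    · exact Aczel.of_additive hE hmaps hc hm hadd
    · refine Aczel.of_additive (f := fun x => -f x) hE hmaps hc.neg
        (fun x hx y hy h => neg_lt_neg (hm hx hy h)) fun x hx y hy => ?_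
      rw [hadd x hx y hy, neg_add]
end

section
/- Let E be a real interval, bounded or not, open on at least one side. A sequence of functions (A⁽ⁿ⁾ : Eⁿ → E)_{n≥1} is an associative sequence of continuous functions that are strictly increasing in each variable if and only if there exists a continuous strictly monotonic function f : E → ℝ such that for every n ≥ 1 and all x ∈ Eⁿ, A⁽ⁿ⁾(x) = f⁻¹( ∑_{i=1}^n f(xᵢ) ). -/
/-!
The operation `x * y = A⁽²⁾(x, y)` makes `E` a semigroup, strictly monotone and continuous for the
order topology, and `A⁽ⁿ⁾` is its `n`-fold product; so the point is to embed such a semigroup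
additively in `ℝ`. Commutativity is not assumed and no identity need exist.

Up to reversing the order there is an element `a < a * a` (otherwise every element is idempotent,
hence an identity, and `E` is a point). By completeness, `y * a ^ n` is unbounded
(`exists_lt_mul_spow`), so each `u` has an integer part `N u` with `a ^ N u ≤ u < a ^ (N u + 1)`,
negative powers being moved to the other side (`exists_integer_part`). Since
`N u + N v ≤ N (u * v) ≤ N u + N v + 1`, there is a unique real `f x` with
`N (x ^ n) ≤ n * f x ≤ N (x ^ n) + 1` for all `n` (`exists_slope`).

* `f` is additive: if `x * y ≤ y * x`, then `(x * y) ^ n` and `(y * x) ^ n` both lie between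
  `x ^ n * y ^ n` and `y ^ n * x ^ n`.
* `f` is continuous, because `N` varies by at most one near each point.
* `f` is strictly increasing: if `f x = f y` with `x < y`, let `s > x` be the largest point of that
  level set. As `x * s < s * s`, some `w > s` has `x * w < s * s`, whence `f w ≤ f s`, which
  contradicts the choice of `s`.

Conversely, a continuous strictly monotone `f` on an interval is an embedding, so continuity of
`A⁽ⁿ⁾` can be tested after composing with `f`; the other properties follow from injectivity and
monotonicity of `f`.
-/

/-- The power `x ^ (n + 1)` in a semigroup. -/
def spow {S : Type*} [Mul S] (x : S) : ℕ → S
  | 0 => x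
  | n + 1 => x * spow x n

/-! ### Powers in a semigroup -/

section Semigroup

variable {S : Type*} [Semigroup S]

lemma spow_mul_spow (x : S) (m n : ℕ) : spow x m * spow x n = spow x (m + n + 1) := by
  induction m with
  | zero => simp [spow]
  | succ m ih =>
    have : m + 1 + n + 1 = (m + n + 1) + 1 := by omega
    rw [this, spow, spow, mul_assoc, ih]

lemma spow_spow (x : S) (m n : ℕ) : spow (spow x m) n = spow x (m * n + m + n) := by
  induction n with
  | zero => simp [spow]
  | succ n ih =>
    rw [spow, ih, spow_mul_spow]
    congr 1
    ring

lemma spow_spow_comm (x : S) (m n : ℕ) : spow (spow x m) n = spow (spow x n) m := by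
  rw [spow_spow, spow_spow]
  congr 1
  ring

lemma continuous_spow [TopologicalSpace S] [ContinuousMul S] (n : ℕ) :
    Continuous fun x : S => spow x n := by
  induction n with
  | zero => exact continuous_id
  | succ n ih => exact continuous_id.mul ih

/-- All the quotients `N (x ^ n) / n` lie below all the `(N (x ^ m) + 1) / m`, as is seen by
comparing both with `N (x ^ (n * m)) / (n * m)`; so a real number separates them. -/
lemma exists_slope (N : S → ℤ) (h1 : ∀ u v, N u + N v ≤ N (u * v))
    (h2 : ∀ u v, N (u * v) ≤ N u + N v + 1) (x : S) :
    ∃ c : ℝ, ∀ n : ℕ, (N (spow x n) : ℝ) ≤ (n + 1) * c ∧ (n + 1) * c ≤ N (spow x n) + 1 := by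
  have lo : ∀ u (k : ℕ), (k + 1) * N u ≤ N (spow u k) := by
    intro u k
    induction k with
    | zero => simp [spow]
    | succ k ih =>
      have := h1 u (spow u k)
      rw [spow]
      push_cast
      linarith
  have hi : ∀ u (k : ℕ), N (spow u k) ≤ (k + 1) * N u + k := by
    intro u k
    induction k with
    | zero => simp [spow]
    | succ k ih =>
      have := h2 u (spow u k)
      rw [spow]
      push_cast
      linarith
  have sep : ∀ n m : ℕ, (N (spow x n) : ℝ) / (n + 1) ≤ (N (spow x m) + 1) / (m + 1) := by
    intro n m
    have e1 := lo (spow x n) m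
    have e2 := hi (spow x m) n
    rw [spow_spow_comm x m n] at e2
    have e3 : ((m : ℝ) + 1) * N (spow x n) ≤ (n + 1) * N (spow x m) + n := by
      exact_mod_cast e1.trans e2
    rw [div_le_div_iff₀ (by positivity) (by positivity)]
    linarith
  have bdd : BddAbove (Set.range fun n : ℕ => (N (spow x n) : ℝ) / (n + 1)) :=
    ⟨_, by rintro _ ⟨n, rfl⟩; exact sep n 0⟩
  refine ⟨⨆ n : ℕ, (N (spow x n) : ℝ) / (n + 1), fun n => ⟨?_, ?_⟩⟩
  · have := le_ciSup bdd n
    rw [div_le_iff₀ (by positivity)] at this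
    linarith
  · have := ciSup_le fun k => sep k n
    rw [le_div_iff₀ (by positivity)] at this
    linarith

end Semigroup

/-! ### Strictly ordered semigroups -/

section Order

attribute [local instance] mulLeftMono_of_mulLeftStrictMono mulRightMono_of_mulRightStrictMono

variable {S : Type*} [LinearOrder S] [Semigroup S] [MulLeftStrictMono S] [MulRightStrictMono S]

lemma lt_mul_of_pos {a : S} (ha : a < a * a) (y : S) : y < y * a := by
  have h : y * a < y * a * a := by
    rw [mul_assoc]
    exact mul_lt_mul_right ha y
  exact lt_of_not_ge fun hle => h.not_ge (mul_le_mul_left hle a)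

lemma spow_strictMono {a : S} (ha : a < a * a) : StrictMono (spow a) := by
  refine strictMono_nat_of_lt_succ fun n => ?_
  have := lt_mul_of_pos ha (spow a n)
  have h := spow_mul_spow a n 0
  rw [spow] at h
  rwa [h] at this

lemma spow_le_spow {x y : S} (h : x ≤ y) (n : ℕ) : spow x n ≤ spow y n := by
  induction n with
  | zero => exact h
  | succ n ih => exact mul_le_mul' h ih

lemma spow_mul_le {x y : S} (h : x * y ≤ y * x) (n : ℕ) : spow x n * y ≤ y * spow x n := by
  induction n with
  | zero => exact h
  | succ n ih =>
    calc x * spow x n * y = x * (spow x n * y) := mul_assoc _ _ _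
      _ ≤ x * (y * spow x n) := mul_le_mul_right ih x
      _ = (x * y) * spow x n := (mul_assoc _ _ _).symm
      _ ≤ (y * x) * spow x n := mul_le_mul_left h _
      _ = y * (x * spow x n) := mul_assoc _ _ _

lemma mul_spow_le {x y : S} (h : x * y ≤ y * x) (n : ℕ) : x * spow y n ≤ spow y n * x := by
  induction n with
  | zero => exact h
  | succ n ih =>
    calc x * (y * spow y n) = (x * y) * spow y n := (mul_assoc _ _ _).symm
      _ ≤ (y * x) * spow y n := mul_le_mul_left h _
      _ = y * (x * spow y n) := mul_assoc _ _ _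
      _ ≤ y * (spow y n * x) := mul_le_mul_right ih y
      _ = y * spow y n * x := (mul_assoc _ _ _).symm

lemma spow_mul_spow_le {x y : S} (h : x * y ≤ y * x) (n : ℕ) :
    spow x n * spow y n ≤ spow (x * y) n := by
  induction n with
  | zero => exact le_rfl
  | succ n ih =>
    calc x * spow x n * (y * spow y n) = x * (spow x n * y) * spow y n := by
          simp only [mul_assoc]
      _ ≤ x * (y * spow x n) * spow y n :=
          mul_le_mul_left (mul_le_mul_right (spow_mul_le h n) x) _
      _ = x * y * (spow x n * spow y n) := by simp only [mul_assoc]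
      _ ≤ x * y * spow (x * y) n := mul_le_mul_right ih _

lemma le_spow_mul_spow {x y : S} (h : x * y ≤ y * x) (n : ℕ) :
    spow (y * x) n ≤ spow y n * spow x n := by
  induction n with
  | zero => exact le_rfl
  | succ n ih =>
    calc y * x * spow (y * x) n ≤ y * x * (spow y n * spow x n) := mul_le_mul_right ih _
      _ = y * (x * spow y n) * spow x n := by simp only [mul_assoc]
      _ ≤ y * (spow y n * x) * spow x n :=
          mul_le_mul_left (mul_le_mul_right (mul_spow_le h n) y) _
      _ = y * spow y n * (x * spow x n) := by simp only [mul_assoc]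

/-- The truth of `a ^ p ≤ u * a ^ q` depends only on `p - q`, antitonically. -/
lemma spow_le_of_sub_le {a : S} (ha : a < a * a) {u : S} {p q p' q' : ℕ}
    (h : spow a p ≤ u * spow a q) (hr : (p' : ℤ) - q' ≤ p - q) :
    spow a p' ≤ u * spow a q' := by
  refine le_of_not_gt fun hlt => (mul_lt_mul_left hlt (spow a q)).not_ge ?_
  calc spow a p' * spow a q = spow a (p' + q + 1) := spow_mul_spow _ _ _
    _ ≤ spow a (p + q' + 1) := (spow_strictMono ha).monotone (by omega)
    _ = spow a p * spow a q' := (spow_mul_spow _ _ _).symm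
    _ ≤ u * spow a q * spow a q' := mul_le_mul_left h _
    _ = u * spow a q' * spow a q := by
      rw [mul_assoc, mul_assoc, spow_mul_spow, spow_mul_spow, add_comm q q']

end Order

/-! ### Additive embedding of a continuous ordered semigroup -/

section Topology

attribute [local instance] mulLeftMono_of_mulLeftStrictMono mulRightMono_of_mulRightStrictMono

variable {S : Type*} [ConditionallyCompleteLinearOrder S] [TopologicalSpace S] [OrderTopology S]
  [Semigroup S] [ContinuousMul S] [MulLeftStrictMono S] [MulRightStrictMono S]

/-- Archimedean property: otherwise the supremum `t` of the `y * a ^ n` would satisfy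
`t * a = t`. -/
lemma exists_lt_mul_spow {a : S} (ha : a < a * a) (y z : S) : ∃ n, z < y * spow a n := by
  by_contra! hcon
  have hmono : Monotone fun n => y * spow a n := fun m n hmn =>
    mul_le_mul_right ((spow_strictMono ha).monotone hmn) y
  have hlim := tendsto_atTop_ciSup hmono ⟨z, by rintro _ ⟨n, rfl⟩; exact hcon n⟩
  set t := ⨆ n, y * spow a n
  have h1 : Filter.Tendsto (fun n => y * spow a n * a) Filter.atTop (nhds (t * a)) :=
    hlim.mul_const a
  have h2 : Filter.Tendsto (fun n => y * spow a n * a) Filter.atTop (nhds t) := by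
    refine (hlim.comp (Filter.tendsto_add_atTop_nat 1)).congr fun n => ?_
    have h := spow_mul_spow a n 0
    rw [spow] at h
    simp only [Function.comp_apply, mul_assoc, h, Nat.add_zero]
  exact (lt_mul_of_pos ha t).ne (tendsto_nhds_unique h2 h1)

/-- Every element `u` lies between two consecutive integer powers of `a`; `N u` is the exponent
of the lower one. Negative exponents are encoded by moving powers of `a` to the other side. -/
lemma exists_integer_part {a : S} (ha : a < a * a) :
    ∃ N : S → ℤ, ∀ u (p q : ℕ), spow a p ≤ u * spow a q ↔ (p : ℤ) - q ≤ N u := by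
  suffices h : ∀ u : S, ∃ N : ℤ, ∀ p q : ℕ, spow a p ≤ u * spow a q ↔ (p : ℤ) - q ≤ N by
    choose N hN using h
    exact ⟨N, hN⟩
  intro u
  obtain ⟨q₀, hq₀⟩ := exists_lt_mul_spow ha u (spow a 0)
  obtain ⟨p₀, hp₀⟩ := exists_lt_mul_spow ha a (u * spow a 0)
  have hp₁ : u * spow a 0 < spow a (p₀ + 1) := hp₀
  obtain ⟨N, ⟨p, q, hpq, hle⟩, hmax⟩ := Int.exists_greatest_of_bdd
    (P := fun r => ∃ p q : ℕ, (p : ℤ) - q = r ∧ spow a p ≤ u * spow a q)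
    ⟨(p₀ + 1 : ℕ), by
      rintro _ ⟨p, q, rfl, h⟩
      by_contra! hlt
      exact absurd (spow_le_of_sub_le ha h (p' := p₀ + 1) (q' := 0) (by omega)) hp₁.not_ge⟩
    ⟨_, 0, q₀, rfl, hq₀.le⟩
  refine ⟨N, fun p' q' => ⟨fun h => hmax _ ⟨p', q', rfl, h⟩, fun h => ?_⟩⟩
  exact spow_le_of_sub_le ha hle (by omega)

/-- A continuous, strictly ordered semigroup with a positive element `a` embeds in `(ℝ, +)`. -/
theorem exists_additive_embedding [DenselyOrdered S] {a : S} (ha : a < a * a) :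
    ∃ f : S → ℝ, Continuous f ∧ StrictMono f ∧ ∀ x y, f (x * y) = f x + f y := by
  obtain ⟨N, hN⟩ := exists_integer_part ha
  have hrep : ∀ r : ℤ, ∃ p q : ℕ, (p : ℤ) - q = r := fun r =>
    ⟨r.toNat, (-r).toNat, by omega⟩
  have hN' : ∀ u (p q : ℕ), u * spow a q < spow a p ↔ N u < (p : ℤ) - q := fun u p q => by
    rw [← not_le, hN, not_le]
  have hmono : ∀ u v, u ≤ v → N u ≤ N v := by
    intro u v huv
    obtain ⟨p, q, h⟩ := hrep (N u)
    rw [← h, ← hN]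
    exact ((hN u p q).2 h.le).trans (mul_le_mul_left huv _)
  have h1 : ∀ u v, N u + N v ≤ N (u * v) := by
    intro u v
    obtain ⟨p, q, h⟩ := hrep (N u)
    obtain ⟨p', q', h'⟩ := hrep (N v)
    have key : spow a (p + p' + 1) ≤ u * v * spow a (q + q' + 1) := by
      calc spow a (p + p' + 1) = spow a p * spow a p' := (spow_mul_spow _ _ _).symm
        _ ≤ u * spow a q * spow a p' := mul_le_mul_left ((hN u p q).2 h.le) _
        _ = u * spow a p' * spow a q := by
          rw [mul_assoc, mul_assoc, spow_mul_spow, spow_mul_spow, add_comm q p']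
        _ ≤ u * (v * spow a q') * spow a q :=
          mul_le_mul_left (mul_le_mul_right ((hN v p' q').2 h'.le) _) _
        _ = u * v * spow a (q + q' + 1) := by
          rw [add_comm q q', ← spow_mul_spow]
          simp only [mul_assoc]
    have := (hN _ _ _).1 key
    push_cast at this
    linarith
  have h2 : ∀ u v, N (u * v) ≤ N u + N v + 1 := by
    intro u v
    obtain ⟨p, q, h⟩ := hrep (N u + 1)
    obtain ⟨p', q', h'⟩ := hrep (N v + 1)
    have key : u * v * spow a (q + q' + 1) < spow a (p + p' + 1) := by
      calc u * v * spow a (q + q' + 1) = u * (v * spow a q') * spow a q := by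
            rw [add_comm q q', ← spow_mul_spow]
            simp only [mul_assoc]
        _ < u * spow a p' * spow a q :=
          mul_lt_mul_left (mul_lt_mul_right ((hN' v p' q').2 (by omega)) _) _
        _ = u * spow a q * spow a p' := by
          rw [mul_assoc, mul_assoc, spow_mul_spow, spow_mul_spow, add_comm q p']
        _ < spow a p * spow a p' := mul_lt_mul_left ((hN' u p q).2 (by omega)) _
        _ = spow a (p + p' + 1) := spow_mul_spow _ _ _
    have := (hN' _ _ _).1 key
    push_cast at this
    omega
  have hloc : ∀ u, ∀ᶠ v in nhds u, N u - 1 ≤ N v ∧ N v ≤ N u := by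
    intro u
    obtain ⟨p, q, h⟩ := hrep (N u)
    obtain ⟨p', q', h'⟩ := hrep (N u + 1)
    have c1 : spow a p < u * spow a (q + 1) :=
      ((hN u p q).2 h.le).trans_lt (mul_lt_mul_right (spow_strictMono ha (Nat.lt_succ_self q)) u)
    have c2 : u * spow a q' < spow a p' := (hN' u p' q').2 (by omega)
    filter_upwards [(continuous_mul_const (spow a (q + 1))).continuousAt.eventually
      (lt_mem_nhds c1), (continuous_mul_const (spow a q')).continuousAt.eventually
      (gt_mem_nhds c2)] with v hv1 hv2
    have e1 := (hN v p (q + 1)).1 hv1.le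
    have e2 := (hN' v p' q').1 hv2
    push_cast at e1
    omega
  choose f hf using exists_slope N h1 h2
  -- used to compare values of `f` through bounds, uniform in `n`, on their `n + 1`-fold multiples
  have small : ∀ c : ℝ, (∀ n : ℕ, (n + 1) * c ≤ 2) → c ≤ 0 := by
    intro c hc
    by_contra! hpos
    obtain ⟨n, hn⟩ := exists_nat_gt (2 / c)
    rw [div_lt_iff₀ hpos] at hn
    nlinarith [hc n]
  have hadd' : ∀ x y, x * y ≤ y * x → f (x * y) = f x + f y ∧ f (y * x) = f x + f y := by
    intro x y hxy
    have main : ∀ z, x * y ≤ z → z ≤ y * x → f z = f x + f y := by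
      intro z hz1 hz2
      have hN1 : ∀ n : ℕ, (N (spow x n) : ℝ) + N (spow y n) ≤ N (spow z n) := fun n => by
        exact_mod_cast (h1 _ _).trans
          (hmono _ _ ((spow_mul_spow_le hxy n).trans (spow_le_spow hz1 n)))
      have hN2 : ∀ n : ℕ, (N (spow z n) : ℝ) ≤ N (spow y n) + N (spow x n) + 1 := fun n => by
        exact_mod_cast (hmono _ _ ((spow_le_spow hz2 n).trans (le_spow_mul_spow hxy n))).trans
          (h2 _ _)
      apply le_antisymm
      · refine sub_nonpos.1 (small _ fun n => ?_)
        linarith [hN2 n, (hf x n).1, (hf y n).1, (hf z n).2]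
      · refine sub_nonpos.1 (small _ fun n => ?_)
        linarith [hN1 n, (hf x n).2, (hf y n).2, (hf z n).1]
    exact ⟨main _ le_rfl hxy, main _ hxy le_rfl⟩
  have hadd : ∀ x y, f (x * y) = f x + f y := by
    intro x y
    rcases le_total (x * y) (y * x) with h | h
    · exact (hadd' x y h).1
    · rw [(hadd' y x h).2, add_comm]
  have hfmono : Monotone f := by
    intro x y hxy
    refine sub_nonpos.1 (small _ fun n => ?_)
    have e1 := (hf x n).2
    have e2 := (hf y n).1
    have e3 : (N (spow x n) : ℝ) ≤ N (spow y n) := by exact_mod_cast hmono _ _ (spow_le_spow hxy n)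
    linarith
  have hcont : Continuous f := by
    rw [continuous_iff_continuousAt]
    intro x
    rw [Metric.continuousAt_iff']
    intro ε hε
    obtain ⟨n, hn⟩ := exists_nat_gt (2 / ε)
    rw [div_lt_iff₀ hε] at hn
    filter_upwards [(continuous_spow n).continuousAt.eventually (hloc (spow x n))] with y hy
    have e1 : (N (spow x n) : ℝ) - 1 ≤ N (spow y n) := by exact_mod_cast hy.1
    have e2 : (N (spow y n) : ℝ) ≤ N (spow x n) := by exact_mod_cast hy.2
    have b1 := hf x n
    have b2 := hf y n
    have hn1 : (0 : ℝ) < n + 1 := by positivity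
    rw [Real.dist_eq, abs_lt]
    constructor <;> nlinarith
  have hfa : 0 < f a := by
    have e1 := (hf a 0).1
    have e2 : 1 ≤ N (spow a 0) := by
      rw [show (1 : ℤ) = ((1 : ℕ) : ℤ) - (0 : ℕ) by simp, ← hN]
      rw [spow_mul_spow]
    have e3 : (1 : ℝ) ≤ N (spow a 0) := by exact_mod_cast e2
    simp only [Nat.cast_zero, zero_add, one_mul] at e1
    linarith
  refine ⟨f, hcont, ?_, hadd⟩
  intro x y hxy
  refine lt_of_le_of_ne (hfmono hxy.le) fun hfxy => ?_
  -- `s` is the right end of the level set of `f` through `x` and `y`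
  have hcomp : IsCompact (Set.Icc x (x * a) ∩ f ⁻¹' {f x}) :=
    isCompact_Icc.inter_right (isClosed_singleton.preimage hcont)
  have hxa : x < x * a := lt_mul_of_pos ha x
  obtain ⟨s, ⟨hs1, hs2⟩, hsmax⟩ := hcomp.exists_isGreatest ⟨x, ⟨le_rfl, hxa.le⟩, rfl⟩
  have hs2 : f s = f x := hs2
  have hle : ∀ w, f w ≤ f x → w ≤ s := by
    intro w hw
    by_contra! hlt
    refine absurd (hsmax ⟨⟨hs1.1.trans hlt.le, ?_⟩, ?_⟩) hlt.not_ge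
    · by_contra! h
      have := hfmono h.le
      rw [hadd] at this
      linarith
    · exact le_antisymm hw (hs2 ▸ hfmono hlt.le)
  have hxs : x < s := hxy.trans_le (hle y hfxy.ge)
  -- moving `s` slightly to the right keeps `x * w < s * s`, so `w` stays in the level set
  have hev : ∀ᶠ w in nhdsWithin s (Set.Ioi s), x * w < s * s :=
    nhdsWithin_le_nhds ((continuous_const_mul x).continuousAt.eventually
      (gt_mem_nhds (mul_lt_mul_left hxs s)))
  have : (nhdsWithin s (Set.Ioi s)).NeBot := nhdsGT_neBot_of_exists_gt ⟨_, lt_mul_of_pos ha s⟩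
  obtain ⟨w, hw, hws⟩ := (hev.and self_mem_nhdsWithin).exists
  have := hfmono hw.le
  rw [hadd, hadd, hs2] at this
  exact absurd (hle w (by linarith)) (not_le.2 hws)

/-- The existence of a positive element is needed only up to reversing the order. -/
theorem exists_additive_embedding' [DenselyOrdered S] [Nontrivial S] :
    ∃ f : S → ℝ, Continuous f ∧ (StrictMono f ∨ StrictAnti f) ∧
      ∀ x y, f (x * y) = f x + f y := by
  by_cases hpos : ∃ a : S, a < a * a
  · obtain ⟨a, ha⟩ := hpos
    obtain ⟨f, h1, h2, h3⟩ := exists_additive_embedding ha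
    exact ⟨f, h1, Or.inl h2, h3⟩
  by_cases hneg : ∃ a : S, a * a < a
  · obtain ⟨a, ha⟩ := hneg
    obtain ⟨f, h1, h2, h3⟩ := exists_additive_embedding (S := Sᵒᵈ) (a := OrderDual.toDual a) ha
    exact ⟨f ∘ OrderDual.toDual, h1.comp continuous_toDual, Or.inr fun x y hxy => h2 hxy,
      fun x y => h3 _ _⟩
  -- an idempotent is a two-sided identity, so two of them coincide
  push Not at hpos hneg
  have hid : ∀ a : S, a * a = a := fun a => le_antisymm (hpos a) (hneg a)
  have hl : ∀ a y : S, a * y = y := fun a y => by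
    have h : a * (a * y) = a * y := by rw [← mul_assoc, hid]
    rcases lt_trichotomy (a * y) y with hlt | heq | hlt
    · exact absurd h (mul_lt_mul_right hlt a).ne
    · exact heq
    · exact absurd h (mul_lt_mul_right hlt a).ne'
  have hr : ∀ a y : S, y * a = y := fun a y => by
    have h : y * a * a = y * a := by rw [mul_assoc, hid]
    rcases lt_trichotomy (y * a) y with hlt | heq | hlt
    · exact absurd h (mul_lt_mul_left hlt a).ne
    · exact heq
    · exact absurd h (mul_lt_mul_left hlt a).ne'
  obtain ⟨x, y, hxy⟩ := exists_pair_ne S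
  exact absurd ((hr y x).symm.trans (hl x y)) hxy

end Topology

/-! ### Sequences generated by an additive function -/

/-- Functions of the form `f⁻¹ (∑ f (x i))` with `f` strictly increasing are continuous. -/
lemma continuousOn_of_sum {E : Set ℝ} (hE : E.OrdConnected) {f : ℝ → ℝ} (hf : ContinuousOn f E)
    (hmono : StrictMonoOn f E) {n : ℕ} {B : (Fin n → ℝ) → ℝ}
    (hmaps : ∀ x : Fin n → ℝ, (∀ i, x i ∈ E) → B x ∈ E)
    (hB : ∀ x : Fin n → ℝ, (∀ i, x i ∈ E) → f (B x) = ∑ i, f (x i)) :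
    ContinuousOn B {x : Fin n → ℝ | ∀ i, x i ∈ E} := by
  have hcont : Continuous (E.domRestrict f) := hf.domRestrict
  have hsm : StrictMono (E.domRestrict f) := fun x y hxy => hmono x.2 y.2 hxy
  have : PreconnectedSpace E := isPreconnected_iff_preconnectedSpace.1 hE.isPreconnected
  have hemb : Topology.IsEmbedding (E.domRestrict f) :=
    hsm.isEmbedding_of_ordConnected (isPreconnected_range hcont).ordConnected
  rw [continuousOn_iff_continuous_domRestrict]
  have key : Continuous fun x : {x : Fin n → ℝ | ∀ i, x i ∈ E} => (⟨B x, hmaps x x.2⟩ : E) := by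
    rw [hemb.continuous_iff]
    have e : (E.domRestrict f ∘ fun x : {x : Fin n → ℝ | ∀ i, x i ∈ E} => (⟨B x, hmaps x x.2⟩ : E))
        = fun x => ∑ i, E.domRestrict f ⟨x.1 i, x.2 i⟩ := by
      funext x
      exact hB x x.2
    rw [e]
    refine continuous_finsetSum _ fun i _ => hcont.comp ?_
    exact ((continuous_apply i).comp continuous_subtype_val).subtype_mk _
  exact continuous_subtype_val.comp key

/-- The sufficiency half of the characterization, for increasing generators. -/
lemma associative_of_sum {E : Set ℝ} (hE : E.OrdConnected)
    {A : (n : ℕ) → (Fin n → ℝ) → ℝ}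
    (hmaps : ∀ n, 1 ≤ n → ∀ x : Fin n → ℝ, (∀ i, x i ∈ E) → A n x ∈ E)
    {f : ℝ → ℝ} (hf : ContinuousOn f E) (hmono : StrictMonoOn f E)
    (hA : ∀ n, 1 ≤ n → ∀ x : Fin n → ℝ, (∀ i, x i ∈ E) → f (A n x) = ∑ i, f (x i)) :
    (∀ x : Fin 1 → ℝ, x 0 ∈ E → A 1 x = x 0) ∧
     (∀ (n k : ℕ) (_ : 1 ≤ k) (h2 : k < n) (x : Fin n → ℝ), (∀ i, x i ∈ E) →
        A n x = A 2 ![A k (fun j : Fin k => x ⟨j, lt_trans j.isLt h2⟩),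
                      A (n - k) (fun j : Fin (n - k) => x ⟨k + j, Nat.add_lt_of_lt_sub' j.isLt⟩)]) ∧
     (∀ n, 1 ≤ n → ContinuousOn (A n) {x : Fin n → ℝ | ∀ i, x i ∈ E}) ∧
     (∀ n, 1 ≤ n → ∀ (i : Fin n) (x : Fin n → ℝ), (∀ j, x j ∈ E) →
        StrictMonoOn (fun t => A n (Function.update x i t)) E) := by
  refine ⟨?_, ?_, fun n hn => continuousOn_of_sum hE hf hmono (hmaps n hn) (hA n hn), ?_⟩
  · intro x hx
    have hx' : ∀ i, x i ∈ E := fun i => by rwa [Subsingleton.elim i 0]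
    refine hmono.injOn (hmaps 1 le_rfl x hx') hx ?_
    rw [hA 1 le_rfl x hx']
    simp
  · intro n k h1 h2 x hx
    obtain ⟨m, rfl⟩ : ∃ m, n = k + m := ⟨n - k, by omega⟩
    have hk := hmaps k h1 (fun j : Fin k => x ⟨j, lt_trans j.isLt h2⟩) fun j => hx _
    have hm := hmaps (k + m - k) (by omega)
      (fun j : Fin (k + m - k) => x ⟨k + j, Nat.add_lt_of_lt_sub' j.isLt⟩) fun j => hx _
    have h2' : ∀ i, (![A k (fun j : Fin k => x ⟨j, lt_trans j.isLt h2⟩),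
        A (k + m - k) (fun j : Fin (k + m - k) => x ⟨k + j, Nat.add_lt_of_lt_sub' j.isLt⟩)] :
          Fin 2 → ℝ) i ∈ E := by
      intro i
      fin_cases i
      · exact hk
      · exact hm
    refine hmono.injOn (hmaps _ (by omega) x hx) (hmaps 2 (by norm_num) _ h2') ?_
    rw [hA _ (by omega) x hx, hA 2 (by norm_num) _ h2', Fin.sum_univ_two]
    simp only [Matrix.cons_val_zero, Matrix.cons_val_one]
    rw [hA k h1 _ fun j => hx _, hA (k + m - k) (by omega) _ fun j => hx _, Fin.sum_univ_add]
    congr 1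
    exact Fintype.sum_equiv (finCongr (by omega : m = k + m - k)) _ _ fun j => rfl
  · intro n hn i x hx s hs t ht hst
    have hu : ∀ r ∈ E, ∀ j, Function.update x i r j ∈ E := fun r hr j => by
      rcases eq_or_ne j i with rfl | hj
      · simpa using hr
      · simpa [hj] using hx j
    refine (hmono.lt_iff_lt (hmaps n hn _ (hu s hs)) (hmaps n hn _ (hu t ht))).1 ?_
    rw [hA n hn _ (hu s hs), hA n hn _ (hu t ht)]
    refine Finset.sum_lt_sum (fun j _ => ?_) ⟨i, Finset.mem_univ i, by simpa using hmono hs ht hst⟩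
    rcases eq_or_ne j i with rfl | hj
    · simpa using (hmono hs ht hst).le
    · simp [hj]


/-- **Associative sequences of continuous strictly increasing functions.**
Let `E` be a real interval, bounded or not, open on at least one side. A sequence
`(A⁽ⁿ⁾ : Eⁿ → E)` is an associative sequence of continuous, strictly increasing (in each
variable) functions iff there is a continuous strictly monotonic `f : E → ℝ` with
`A⁽ⁿ⁾(x) = f⁻¹(∑ f(xᵢ))` for all `n ≥ 1` (stated via `f (A⁽ⁿ⁾ x) = ∑ f (x i)`). -/
theorem associative_sequence_characterization
    (E : Set ℝ) (hE : E.OrdConnected) (hEne : E.Nonempty)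
    (hopen : ¬ ∃ a b : ℝ, E = Set.Icc a b)
    (A : (n : ℕ) → (Fin n → ℝ) → ℝ)
    (hmaps : ∀ n, 1 ≤ n → ∀ x : Fin n → ℝ, (∀ i, x i ∈ E) → A n x ∈ E) :
    ((∀ x : Fin 1 → ℝ, x 0 ∈ E → A 1 x = x 0) ∧
     (∀ (n k : ℕ) (h1 : 1 ≤ k) (h2 : k < n) (x : Fin n → ℝ), (∀ i, x i ∈ E) →
        A n x = A 2 ![A k (fun j : Fin k => x ⟨j, lt_trans j.isLt h2⟩),
                      A (n - k) (fun j : Fin (n - k) => x ⟨k + j, by have := j.isLt; omega⟩)]) ∧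
     (∀ n, 1 ≤ n → ContinuousOn (A n) {x : Fin n → ℝ | ∀ i, x i ∈ E}) ∧
     (∀ n, 1 ≤ n → ∀ (i : Fin n) (x : Fin n → ℝ), (∀ j, x j ∈ E) →
        StrictMonoOn (fun t => A n (Function.update x i t)) E)) ↔
    (∃ f : ℝ → ℝ, ContinuousOn f E ∧ (StrictMonoOn f E ∨ StrictAntiOn f E) ∧
       ∀ n, 1 ≤ n → ∀ x : Fin n → ℝ, (∀ i, x i ∈ E) →
         f (A n x) = ∑ i, f (x i)) := by
  constructor
  · rintro ⟨hone, hassoc, hcont, hmono⟩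
    have hmem : ∀ {x y : ℝ}, x ∈ E → y ∈ E → ∀ i, (![x, y] : Fin 2 → ℝ) i ∈ E := by
      intro x y hx hy i
      fin_cases i
      · exact hx
      · exact hy
    obtain ⟨e, he⟩ := hEne
    let _ : Inhabited E := ⟨⟨e, he⟩⟩
    have : Nontrivial E := by
      rw [Set.nontrivial_coe_sort]
      by_contra hnt
      rw [Set.not_nontrivial_iff] at hnt
      exact hopen ⟨e, e, by rw [Set.Icc_self]; exact hnt.eq_singleton_of_mem he⟩
    let _ : Semigroup E :=
      { mul := fun x y => ⟨A 2 ![x.1, y.1], hmaps 2 (by norm_num) _ (hmem x.2 y.2)⟩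
        mul_assoc := fun x y z => by
          have h3 : ∀ i, (![x.1, y.1, z.1] : Fin 3 → ℝ) i ∈ E := by
            intro i
            fin_cases i
            exacts [x.2, y.2, z.2]
          have e1 := hassoc 3 1 le_rfl (by norm_num) _ h3
          have e2 := hassoc 3 2 (by norm_num) (by norm_num) _ h3
          have s1 : A 1 (fun j : Fin 1 => (![x.1, y.1, z.1] : Fin 3 → ℝ) ⟨j, by omega⟩) = x.1 :=
            hone _ x.2
          have s2 : A (3 - 2) (fun j : Fin (3 - 2) =>
              (![x.1, y.1, z.1] : Fin 3 → ℝ) ⟨2 + j, by omega⟩) = z.1 := hone _ z.2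
          have s3 : (fun j : Fin 2 => (![x.1, y.1, z.1] : Fin 3 → ℝ) ⟨j, by omega⟩)
              = ![x.1, y.1] := by
            funext j
            fin_cases j <;> rfl
          have s4 : (fun j : Fin (3 - 1) => (![x.1, y.1, z.1] : Fin 3 → ℝ) ⟨1 + j, by omega⟩)
              = ![y.1, z.1] := by
            funext j
            fin_cases j <;> rfl
          rw [s1, s4] at e1
          rw [s2, s3] at e2
          exact Subtype.ext (e2.symm.trans e1) }
    have hmul : ∀ x y : E, ((x * y : E) : ℝ) = A 2 ![x.1, y.1] := fun _ _ => rfl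
    have : ContinuousMul E := ⟨by
      refine Continuous.subtype_mk (f := fun p : E × E => A 2 ![p.1.1, p.2.1]) ?_ _
      refine (hcont 2 (by norm_num)).comp_continuous ?_ fun p => hmem p.1.2 p.2.2
      refine continuous_pi fun i => ?_
      fin_cases i
      · exact continuous_subtype_val.comp continuous_fst
      · exact continuous_subtype_val.comp continuous_snd⟩
    have : MulLeftStrictMono E := ⟨fun x y z hyz => by
      have h := hmono 2 (by norm_num) 1 ![x.1, x.1] (hmem x.2 x.2) y.2 z.2 hyz
      have hu : ∀ t : ℝ, Function.update ![x.1, x.1] 1 t = ![x.1, t] := fun t => by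
        funext j
        fin_cases j <;> rfl
      simp only [hu] at h
      exact h⟩
    have : MulRightStrictMono E := ⟨fun x y z hyz => by
      have h := hmono 2 (by norm_num) 0 ![x.1, x.1] (hmem x.2 x.2) y.2 z.2 hyz
      have hu : ∀ t : ℝ, Function.update ![x.1, x.1] 0 t = ![t, x.1] := fun t => by
        funext j
        fin_cases j <;> rfl
      simp only [hu] at h
      exact h⟩
    obtain ⟨f, hf1, hf2, hf3⟩ := exists_additive_embedding' (S := E)
    have hext : ∀ x : E, Function.extend Subtype.val f 0 x.1 = f x := fun x =>
      Subtype.val_injective.extend_apply _ _ _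
    refine ⟨Function.extend Subtype.val f 0, ?_, ?_, ?_⟩
    · rw [continuousOn_iff_continuous_domRestrict]
      exact hf1.congr fun x => (hext x).symm
    · refine hf2.imp (fun h x hx y hy hxy => ?_) (fun h x hx y hy hxy => ?_)
      all_goals
        have ex := hext ⟨x, hx⟩
        have ey := hext ⟨y, hy⟩
        simp only at ex ey
        rw [ex, ey]
        exact h hxy
    · set F := Function.extend Subtype.val f 0
      have hF : ∀ x ∈ E, ∀ y ∈ E, F (A 2 ![x, y]) = F x + F y := fun x hx y hy => by
        have h := hf3 ⟨x, hx⟩ ⟨y, hy⟩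
        rw [← hext, ← hext, ← hext, hmul] at h
        exact h
      intro n hn
      induction n, hn using Nat.le_induction with
      | base =>
        intro x hx
        rw [hone x (hx 0)]
        simp
      | succ n hn ih =>
        intro x hx
        have hlast : A (n + 1 - n) (fun j : Fin (n + 1 - n) =>
            x ⟨n + j, by have := j.isLt; omega⟩) = x (Fin.last n) := by
          have hgen : ∀ m (hm : m = 1) (y : Fin m → ℝ), (∀ i, y i = x (Fin.last n)) →
              A m y = x (Fin.last n) := by
            rintro m rfl y hy
            rw [hone y (hy 0 ▸ hx _), hy]
          refine hgen _ (by omega) _ fun i => congrArg x (Fin.ext ?_)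
          have := i.isLt
          simp only [Fin.val_last]
          omega
        rw [hassoc (n + 1) n hn (Nat.lt_succ_self n) x hx, hlast,
          hF _ (hmaps n hn _ fun j => hx _) _ (hx _), ih _ fun j => hx _, Fin.sum_univ_castSucc]
        rfl
  · rintro ⟨f, hf, hmono | hanti, hA⟩
    · exact associative_of_sum hE hmaps hf hmono hA
    · refine associative_of_sum hE hmaps hf.neg hanti.neg fun n hn x hx => ?_
      simp [hA n hn x hx]
end

section
/- Let E = [a,b] with a < b. A function A : E² → E is continuous, nondecreasing in each variable, associative, satisfies A(b,x) = x for all x ∈ E, and A(x,x) < x for all x in the open interval (a,b), if and only if there exists a continuous strictly decreasing function f : E → [0,+∞] (with values in the extended nonnegative reals) with f(b) = 0 such that A(x,y) = f⁻¹( min( f(x) + f(y), f(a) ) ) for all x,y ∈ E. -/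
/-!
The hard direction constructs the additive generator from iterated square roots.

The interval is treated as a compact connected linear order `E`. A left identity that is the top
element is automatically two-sided (`right_identity`), so `E` becomes an ordered topological monoid
with `1` as its top element and no idempotents besides `1` and the bottom element `z`. Compactness
and the absence of idempotents give the Archimedean property: powers of any `x < 1` get below
every `y > z`. Consequently `v * w = v` with `w < 1` forces `v = z`.

The intermediate value theorem yields a sequence `c` with `z < c 0 < 1` and
`c (k + 1) ^ 2 = c k`, and `c k` tends to `1`. The elements `c k ^ n` depend antitonically on the
dyadic number `n / 2 ^ k`, strictly so until they reach `z`, turn sums of dyadic numbers into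
products, and are dense in `E`. The generator is `f x = inf {n / 2 ^ k | c k ^ n ≤ x}`.
No commutativity is needed; it follows from the representation.

Conversely, a continuous strictly decreasing `f` on a compact interval is a topological embedding,
so every property of `A` can be checked after applying `f`.
-/

open scoped ENNReal

namespace Ling

set_option linter.unusedSectionVars false

open Filter Topology Set

/-! ### Ordered topological monoids without interior idempotents -/

section Order

variable {E : Type*} [LinearOrder E] [TopologicalSpace E] [OrderTopology E] [PreconnectedSpace E]

/-- A left identity that is the top element is a right identity. The point is that
`op z b` is idempotent, hence equal to `z` or `b`. -/
theorem right_identity [DenselyOrdered E] (op : E → E → E) (z b : E) (hzb : z < b)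
    (hz : ∀ x, z ≤ x) (hb : ∀ x, x ≤ b)
    (hcont : Continuous fun p : E × E => op p.1 p.2)
    (hleft : ∀ y x x', x ≤ x' → op x y ≤ op x' y)
    (hassoc : ∀ x y w, op (op x y) w = op x (op y w))
    (hid : ∀ x, op b x = x)
    (hlt : ∀ x, z < x → x < b → op x x < x) (x : E) : op x b = x := by
  have hzz : op z z = z := le_antisymm ((hleft z z b (hz b)).trans_eq (hid z)) (hz _)
  have hcc : op (op z b) (op z b) = op z b := by
    rw [hassoc z b, hid, ← hassoc, hzz]
  have hc : op z b = z ∨ op z b = b := by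
    by_contra! h
    exact (hlt _ (lt_of_le_of_ne (hz _) h.1.symm) (lt_of_le_of_ne (hb _) h.2)).ne hcc
  rcases hc with hc | hc
  · -- `x ↦ op x b` is an idempotent map, and it is onto by the intermediate value theorem.
    obtain ⟨y, hy⟩ : x ∈ range fun y => op y b := by
      refine mem_range_of_exists_le_of_exists_ge
        (hcont.comp (continuous_id.prodMk continuous_const)) ⟨z, ?_⟩ ⟨b, ?_⟩
      · simpa [hc] using hz x
      · simpa [hid] using hb x
    simp only at hy
    rw [← hy, hassoc, hid]
  · -- Here `op z` would be the identity, which is incompatible with `op y y < y`.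
    exfalso
    have hzid : ∀ y, op z y = y := by
      intro y
      obtain ⟨w, hw⟩ : y ∈ range fun w => op z w := by
        refine mem_range_of_exists_le_of_exists_ge
          (hcont.comp (continuous_const.prodMk continuous_id)) ⟨z, ?_⟩ ⟨b, ?_⟩
        · simpa [hzz] using hz y
        · simpa [hc] using hb y
      simp only at hw
      rw [← hw, ← hassoc, hzz]
    obtain ⟨y, hy1, hy2⟩ := exists_between hzb
    have := hleft y z y (hz y)
    rw [hzid] at this
    exact absurd (hlt y hy1 hy2) this.not_gt

variable [CompactSpace E] [Monoid E] [ContinuousMul E] [MulLeftMono E] [MulRightMono E]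

theorem eq_of_idem {z x : E} (hz : ∀ x, z ≤ x) (h1 : ∀ x : E, x ≤ 1)
    (hlt : ∀ x : E, z < x → x < 1 → x * x < x) (h : x * x = x) : x = z ∨ x = 1 := by
  by_contra! h'
  exact (hlt _ (lt_of_le_of_ne (hz _) h'.1.symm) (lt_of_le_of_ne (h1 _) h'.2)).ne h

/-- The Archimedean property: the infimum of the powers of `x` is an idempotent below `x`. -/
theorem exists_pow_lt {z x y : E} (hz : ∀ x, z ≤ x) (h1 : ∀ x : E, x ≤ 1)
    (hlt : ∀ x : E, z < x → x < 1 → x * x < x) (hx : x < 1) (hy : z < y) :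
    ∃ n : ℕ, x ^ n < y := by
  have hanti : Antitone fun n : ℕ => x ^ n := fun m n h => pow_le_pow_right_of_le_one' hx.le h
  obtain ⟨L, -, hL⟩ := (isClosed_closure (s := range fun n : ℕ => x ^ n)).isCompact.exists_isGLB
    (range_nonempty _).closure
  have hL' : IsGLB (range fun n : ℕ => x ^ n) L := (isGLB_iff_of_subset_of_subset_closure subset_closure subset_rfl).2 hL
  have ht := tendsto_atTop_isGLB hanti hL'
  have hLL : L * L = L := by
    refine tendsto_nhds_unique (ht.mul ht) ?_
    have h2 : Tendsto (fun n : ℕ => n + n) atTop atTop :=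
      tendsto_atTop_mono (fun n => Nat.le_add_left n n) tendsto_id
    exact (ht.comp h2).congr fun n => pow_add x n n
  have hLx : L ≤ x := hL'.1 ⟨1, pow_one x⟩
  rcases eq_of_idem hz h1 hlt hLL with h | h
  · exact (ht.eventually_lt_const (h ▸ hy)).exists
  · exact absurd (h ▸ hLx) hx.not_ge

/-- This replaces cancellation: `v = v * w ^ n ≤ w ^ n` for all `n`, so `v` is the bottom
element by the Archimedean property. -/
theorem eq_bot_of_mul_eq {z v w : E} (hz : ∀ x, z ≤ x) (h1 : ∀ x : E, x ≤ 1)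
    (hlt : ∀ x : E, z < x → x < 1 → x * x < x) (hw : w < 1) (h : v * w = v) : v = z := by
  by_contra hv
  obtain ⟨n, hn⟩ := exists_pow_lt hz h1 hlt hw (lt_of_le_of_ne (hz v) (Ne.symm hv))
  have hvn : ∀ n : ℕ, v * w ^ n = v := by
    intro n
    induction n with
    | zero => simp
    | succ n ih => rw [pow_succ, ← mul_assoc, ih, h]
  have : v * w ^ n ≤ w ^ n := mul_le_of_le_one_left' (h1 v)
  rw [hvn] at this
  exact absurd hn this.not_gt

theorem exists_sqrt (h1 : ∀ x : E, x ≤ 1) (y : E) :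
    ∃ x : E, x ^ 2 = y := by
  refine mem_range_of_exists_le_of_exists_ge (continuous_pow 2) ⟨y, ?_⟩ ⟨1, ?_⟩
  · rw [pow_two]
    exact mul_le_of_le_one_left' (h1 y)
  · simpa using h1 y

theorem exists_roots [DenselyOrdered E] {z : E} (h1 : ∀ x : E, x ≤ 1)
    (hz1 : z < 1) : ∃ c : ℕ → E, z < c 0 ∧ c 0 < 1 ∧ ∀ k, c (k + 1) ^ 2 = c k := by
  obtain ⟨e, he, he1⟩ := exists_between hz1
  choose s hs using exists_sqrt h1
  exact ⟨fun k => Nat.rec e (fun _ x => s x) k, he, he1, fun k => hs _⟩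

theorem root_lt_one {c : ℕ → E} (h1 : ∀ x : E, x ≤ 1) (hc0 : c 0 < 1)
    (hc : ∀ k, c (k + 1) ^ 2 = c k) (k : ℕ) : c k < 1 := by
  induction k with
  | zero => exact hc0
  | succ k ih =>
    refine lt_of_le_of_ne (h1 _) fun h => ?_
    have := hc k
    rw [h, one_pow] at this
    exact ih.ne this.symm

/-- The roots `c k` tend to `1`: their supremum is an idempotent above `z`. -/
theorem exists_lt_root {z x : E} {c : ℕ → E} (hz : ∀ x, z ≤ x) (h1 : ∀ x : E, x ≤ 1)
    (hlt : ∀ x : E, z < x → x < 1 → x * x < x) (hcz : z < c 0)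
    (hc : ∀ k, c (k + 1) ^ 2 = c k) (hx : x < 1) : ∃ k, x < c k := by
  have hmono : Monotone c := monotone_nat_of_le_succ fun k => by
    rw [← hc k, pow_two]
    exact mul_le_of_le_one_left' (h1 _)
  obtain ⟨L, -, hL⟩ := (isClosed_closure (s := range c)).isCompact.exists_isLUB
    (range_nonempty _).closure
  have hL' : IsLUB (range c) L := (isLUB_iff_of_subset_of_subset_closure subset_closure subset_rfl).2 hL
  have ht := tendsto_atTop_isLUB hmono hL'
  have hLL : L * L = L := by
    have ht' := (tendsto_add_atTop_iff_nat 1).2 ht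
    refine tendsto_nhds_unique (ht'.mul ht') ?_
    exact ht.congr fun n => by rw [← pow_two, hc]
  rcases eq_of_idem hz h1 hlt hLL with h | h
  · exact absurd (h ▸ hL'.1 ⟨0, rfl⟩) hcz.not_ge
  · exact (ht.eventually_const_lt (h ▸ hx)).exists

theorem root_pow {c : ℕ → E} (hc : ∀ k, c (k + 1) ^ 2 = c k) (k j : ℕ) :
    c (k + j) ^ 2 ^ j = c k := by
  induction j with
  | zero => simp
  | succ j ih => rw [pow_succ', pow_mul, ← add_assoc, hc, ih]

theorem root_pow_eq {c : ℕ → E} (hc : ∀ k, c (k + 1) ^ 2 = c k) (k j n : ℕ) :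
    c k ^ n = c (k + j) ^ (n * 2 ^ j) := by
  rw [mul_comm, pow_mul, root_pow hc]

theorem pow_le_pow_of_dyadic {c : ℕ → E} (h1 : ∀ x : E, x ≤ 1)
    (hc : ∀ k, c (k + 1) ^ 2 = c k) {k j n m : ℕ} (h : m * 2 ^ k ≤ n * 2 ^ j) :
    c k ^ n ≤ c j ^ m := by
  rw [root_pow_eq hc k j, root_pow_eq hc j k, add_comm j k]
  exact pow_le_pow_right_of_le_one' (h1 _) h

/-- The dyadic powers decrease strictly until they reach the bottom element. -/
theorem pow_lt_pow_of_dyadic {z : E} {c : ℕ → E} (hz : ∀ x, z ≤ x) (h1 : ∀ x : E, x ≤ 1)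
    (hlt : ∀ x : E, z < x → x < 1 → x * x < x) (hc0 : c 0 < 1)
    (hc : ∀ k, c (k + 1) ^ 2 = c k) {k j n m : ℕ} (h : m * 2 ^ k < n * 2 ^ j)
    (hm : z < c j ^ m) : c k ^ n < c j ^ m := by
  refine lt_of_le_of_ne (pow_le_pow_of_dyadic h1 hc h.le) fun heq => hm.ne' ?_
  rw [root_pow_eq hc k j, root_pow_eq hc j k, add_comm j k] at heq
  rw [root_pow_eq hc j k, add_comm j k]
  obtain ⟨q, hq⟩ := Nat.exists_eq_add_of_lt h
  rw [hq, add_assoc, pow_add] at heq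
  exact eq_bot_of_mul_eq hz h1 hlt
    (pow_lt_one' (root_lt_one h1 hc0 hc _) q.succ_ne_zero) heq

end Order

/-! ### Dyadic numbers in `ℝ≥0∞` -/

theorem dyadic_eq_coe (k n : ℕ) :
    (n : ℝ≥0∞) / 2 ^ k = (((n : NNReal) / 2 ^ k : NNReal) : ℝ≥0∞) := by
  rw [ENNReal.coe_div (by positivity)]
  simp

theorem dyadic_le_iff {k j n m : ℕ} :
    (n : ℝ≥0∞) / 2 ^ k ≤ (m : ℝ≥0∞) / 2 ^ j ↔ n * 2 ^ j ≤ m * 2 ^ k := by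
  rw [dyadic_eq_coe, dyadic_eq_coe, ENNReal.coe_le_coe,
    div_le_div_iff₀ (by positivity) (by positivity)]
  exact_mod_cast Iff.rfl

theorem dyadic_lt_iff {k j n m : ℕ} :
    (n : ℝ≥0∞) / 2 ^ k < (m : ℝ≥0∞) / 2 ^ j ↔ n * 2 ^ j < m * 2 ^ k := by
  rw [← not_le, dyadic_le_iff, not_le]

theorem dyadic_add (k j n m : ℕ) :
    (n : ℝ≥0∞) / 2 ^ k + (m : ℝ≥0∞) / 2 ^ j
      = ((n * 2 ^ j + m * 2 ^ k : ℕ) : ℝ≥0∞) / 2 ^ (k + j) := by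
  rw [dyadic_eq_coe, dyadic_eq_coe, dyadic_eq_coe, ← ENNReal.coe_add, ENNReal.coe_inj]
  push_cast
  field_simp
  ring

theorem exists_dyadic_btwn {α β : ℝ≥0∞} (h : α < β) :
    ∃ k n : ℕ, α < (n : ℝ≥0∞) / 2 ^ k ∧ (n : ℝ≥0∞) / 2 ^ k < β := by
  obtain ⟨p, hp, hpβ⟩ := ENNReal.lt_iff_exists_nnreal_btwn.1 h
  obtain ⟨q, hpq, hq⟩ := ENNReal.lt_iff_exists_nnreal_btwn.1 hpβ
  have hpq' : (p : ℝ) < q := by exact_mod_cast hpq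
  obtain ⟨k, hk⟩ := exists_pow_lt_of_lt_one (sub_pos.2 hpq') (by norm_num : (1 / 2 : ℝ) < 1)
  have h2 : (0 : ℝ) < 2 ^ k := by positivity
  rw [one_div, inv_pow, inv_lt_iff_one_lt_mul₀ h2] at hk
  have hn1 := Nat.lt_floor_add_one ((p : ℝ) * 2 ^ k)
  have hn2 := Nat.floor_le (a := (p : ℝ) * 2 ^ k) (by positivity)
  refine ⟨k, ⌊(p : ℝ) * 2 ^ k⌋₊ + 1, hp.trans ?_, lt_trans ?_ hq⟩
  · rw [dyadic_eq_coe, ENNReal.coe_lt_coe, lt_div_iff₀ (by positivity), ← NNReal.coe_lt_coe]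
    push_cast
    exact hn1
  · rw [dyadic_eq_coe, ENNReal.coe_lt_coe, div_lt_iff₀ (by positivity), ← NNReal.coe_lt_coe]
    push_cast
    nlinarith

/-! ### The additive generator -/

section Generator

variable {E : Type*} [LinearOrder E] [Monoid E]

/-- The additive generator attached to a sequence `c` of iterated square roots: the infimum of the
dyadic numbers `n / 2 ^ k` with `c k ^ n ≤ x`. It is `⊤` when there are none, which can happen only
at the bottom element. -/
noncomputable def gen (c : ℕ → E) (x : E) : ℝ≥0∞ :=
  ⨅ (k : ℕ) (n : ℕ) (_ : c k ^ n ≤ x), (n : ℝ≥0∞) / 2 ^ k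

theorem gen_le {c : ℕ → E} {x : E} {k n : ℕ} (h : c k ^ n ≤ x) :
    gen c x ≤ (n : ℝ≥0∞) / 2 ^ k :=
  iInf_le_of_le k (iInf_le_of_le n (iInf_le _ h))

theorem le_gen {c : ℕ → E} {x : E} {t : ℝ≥0∞}
    (h : ∀ k n : ℕ, c k ^ n ≤ x → t ≤ (n : ℝ≥0∞) / 2 ^ k) : t ≤ gen c x :=
  le_iInf fun k => le_iInf fun n => le_iInf fun hx => h k n hx

theorem exists_of_gen_lt {c : ℕ → E} {x : E} {t : ℝ≥0∞} (h : gen c x < t) :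
    ∃ k n : ℕ, c k ^ n ≤ x ∧ (n : ℝ≥0∞) / 2 ^ k < t := by
  by_contra! h'
  exact absurd h (le_gen h').not_gt

theorem lt_pow_of_lt_gen {c : ℕ → E} {x : E} {k n : ℕ} (h : (n : ℝ≥0∞) / 2 ^ k < gen c x) :
    x < c k ^ n := by
  by_contra! h'
  exact absurd h (gen_le h').not_gt

theorem gen_anti (c : ℕ → E) : Antitone (gen c) :=
  fun _ _ hxy => le_gen fun _ _ h => gen_le (h.trans hxy)

theorem gen_one (c : ℕ → E) : gen c 1 = 0 := by
  have := gen_le (c := c) (x := 1) (k := 0) (n := 0) (by simp)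
  simpa using this

variable [TopologicalSpace E] [OrderTopology E] [PreconnectedSpace E]
  [CompactSpace E] [ContinuousMul E] [MulLeftMono E] [MulRightMono E]

theorem le_gen_of_lt {c : ℕ → E} (h1 : ∀ x : E, x ≤ 1) (hc : ∀ k, c (k + 1) ^ 2 = c k)
    {x : E} {k n : ℕ} (h : x < c k ^ n) : (n : ℝ≥0∞) / 2 ^ k ≤ gen c x := by
  refine le_gen fun j m hm => ?_
  by_contra! hlt
  exact absurd (pow_le_pow_of_dyadic h1 hc (dyadic_lt_iff.1 hlt).le) (hm.trans_lt h).not_ge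

/-- Density of the dyadic powers. If `c k` is so close to `1` that `x < y * c k`, the first power
of `c k` that is at most `y` exceeds `x`. -/
theorem exists_pow_btwn {z : E} {c : ℕ → E} (hz : ∀ x, z ≤ x) (h1 : ∀ x : E, x ≤ 1)
    (hlt : ∀ x : E, z < x → x < 1 → x * x < x) (hcz : z < c 0) (hc0 : c 0 < 1)
    (hc : ∀ k, c (k + 1) ^ 2 = c k) {x y : E} (hxy : x < y) :
    ∃ k n : ℕ, x < c k ^ n ∧ c k ^ n ≤ y := by
  obtain ⟨k, hk⟩ : ∃ k, x < y * c k := by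
    have hev : ∀ᶠ w in 𝓝 (1 : E), x < y * w :=
      (continuous_const.mul continuous_id).tendsto' (1 : E) y (mul_one y)
        |>.eventually_const_lt hxy
    obtain ⟨l, hl, hl'⟩ := exists_Ioc_subset_of_mem_nhds hev ⟨c 0, hc0⟩
    obtain ⟨k, hk⟩ := exists_lt_root hz h1 hlt hcz hc hl
    exact ⟨k, hl' ⟨hk, h1 _⟩⟩
  have hex : ∃ n : ℕ, c k ^ n ≤ y :=
    (exists_pow_lt hz h1 hlt (root_lt_one h1 hc0 hc k) ((hz x).trans_lt hxy)).imp
      fun _ h => h.le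
  classical
  refine ⟨k, Nat.find hex, ?_, Nat.find_spec hex⟩
  rcases Nat.eq_zero_or_pos (Nat.find hex) with h0 | hpos
  · rw [h0, pow_zero]
    exact hxy.trans_le (h1 y)
  · have hlast := Nat.find_min hex (Nat.sub_lt hpos one_pos)
    rw [not_le] at hlast
    rw [← Nat.sub_add_cancel (Nat.succ_le_of_lt hpos), pow_succ]
    exact hk.trans_le (mul_le_mul_left hlast.le _)

theorem gen_strictAnti [DenselyOrdered E] {z : E} {c : ℕ → E} (hz : ∀ x, z ≤ x)
    (h1 : ∀ x : E, x ≤ 1)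
    (hlt : ∀ x : E, z < x → x < 1 → x * x < x) (hcz : z < c 0) (hc0 : c 0 < 1)
    (hc : ∀ k, c (k + 1) ^ 2 = c k) : StrictAnti (gen c) := by
  intro x y hxy
  obtain ⟨w, hxw, hwy⟩ := exists_between hxy
  obtain ⟨k, n, hk1, hk2⟩ := exists_pow_btwn hz h1 hlt hcz hc0 hc hxw
  obtain ⟨j, m, hj1, hj2⟩ := exists_pow_btwn hz h1 hlt hcz hc0 hc hwy
  refine (gen_le hj2).trans_lt (lt_of_lt_of_le ?_ (le_gen_of_lt h1 hc hk1))
  by_contra! hle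
  exact absurd (pow_le_pow_of_dyadic h1 hc (dyadic_le_iff.1 hle)) (hk2.trans_lt hj1).not_ge

theorem gen_continuous {z : E} {c : ℕ → E} (hz : ∀ x, z ≤ x) (h1 : ∀ x : E, x ≤ 1)
    (hlt : ∀ x : E, z < x → x < 1 → x * x < x) (hc0 : c 0 < 1)
    (hc : ∀ k, c (k + 1) ^ 2 = c k) : Continuous (gen c) := by
  rw [continuous_iff_continuousAt]
  intro x
  refine tendsto_order.2 ⟨fun α hα => ?_, fun β hβ => ?_⟩
  · obtain ⟨k, n, hk1, hk2⟩ := exists_dyadic_btwn hα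
    filter_upwards [Iio_mem_nhds (lt_pow_of_lt_gen hk2)] with y hy
    exact hk1.trans_le (le_gen_of_lt h1 hc hy)
  · obtain ⟨k, n, hx, hn⟩ := exists_of_gen_lt hβ
    obtain ⟨j, m, hj1, hj2⟩ := exists_dyadic_btwn hn
    rcases (hz (c k ^ n)).eq_or_lt with h | h
    · exact Eventually.of_forall fun y => (gen_le (h ▸ hz y)).trans_lt hn
    · filter_upwards [Ioi_mem_nhds
        ((pow_lt_pow_of_dyadic hz h1 hlt hc0 hc (dyadic_lt_iff.1 hj1) h).trans_le hx)] with y hy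
      exact (gen_le (le_of_lt hy)).trans_lt hj2

theorem gen_mul_le {c : ℕ → E} (hc : ∀ k, c (k + 1) ^ 2 = c k) (x y : E) :
    gen c (x * y) ≤ gen c x + gen c y := by
  by_contra! h
  obtain ⟨s, hs, t, ht, hst⟩ : ∃ s, gen c x < s ∧ ∃ t, gen c y < t ∧ s + t < gen c (x * y) := by
    obtain ⟨r, hr, hlt⟩ := ENNReal.lt_iff_exists_add_pos_lt.1 h
    have hne := ENNReal.add_ne_top.1 h.ne_top
    have hr2 : (r : ℝ≥0∞) / 2 ≠ 0 := by simpa using hr.ne'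
    refine ⟨_, ENNReal.lt_add_right hne.1 hr2, _, ENNReal.lt_add_right hne.2 hr2, ?_⟩
    rwa [add_add_add_comm, ENNReal.add_halves]
  obtain ⟨k, n, hx, hn⟩ := exists_of_gen_lt hs
  obtain ⟨j, m, hy, hm⟩ := exists_of_gen_lt ht
  have hle : c (k + j) ^ (n * 2 ^ j + m * 2 ^ k) ≤ x * y := by
    rw [pow_add, ← root_pow_eq hc, add_comm k j, ← root_pow_eq hc]
    exact mul_le_mul' hx hy
  have := gen_le hle
  rw [← dyadic_add] at this
  exact absurd (this.trans (add_le_add hn.le hm.le)) hst.not_ge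

/-- Away from the bottom element no truncation occurs. Were `n / 2 ^ k < gen c x + gen c y` with
`c k ^ n ≤ x * y`, dyadic numbers below `gen c x` and `gen c y` with sum above `n / 2 ^ k` would
give a strictly smaller dyadic power that still dominates `x * y`. -/
theorem add_le_gen_mul {z : E} {c : ℕ → E} (hz : ∀ x, z ≤ x) (h1 : ∀ x : E, x ≤ 1)
    (hlt : ∀ x : E, z < x → x < 1 → x * x < x) (hc0 : c 0 < 1)
    (hc : ∀ k, c (k + 1) ^ 2 = c k) {x y : E} (hxy : z < x * y) :
    gen c x + gen c y ≤ gen c (x * y) := by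
  rcases eq_or_ne (gen c x) 0 with hx0 | hx0
  · rw [hx0, zero_add]
    exact gen_anti c (mul_le_of_le_one_left' (h1 x))
  rcases eq_or_ne (gen c y) 0 with hy0 | hy0
  · rw [hy0, add_zero]
    exact gen_anti c (mul_le_of_le_one_right' (h1 y))
  refine le_gen fun k n hn => ?_
  by_contra! h
  obtain ⟨s, hs, t, ht, hst⟩ := ENNReal.exists_lt_add_of_lt_add h hx0 hy0
  obtain ⟨i, p, hi1, hi2⟩ := exists_dyadic_btwn hs
  obtain ⟨j, q, hj1, hj2⟩ := exists_dyadic_btwn ht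
  have hle : x * y ≤ c (i + j) ^ (p * 2 ^ j + q * 2 ^ i) := by
    rw [pow_add, ← root_pow_eq hc, add_comm i j, ← root_pow_eq hc]
    exact mul_le_mul' (lt_pow_of_lt_gen hi2).le (lt_pow_of_lt_gen hj2).le
  have hsum := hst.trans (ENNReal.add_lt_add hi1 hj1)
  rw [dyadic_add] at hsum
  have hsum' := dyadic_lt_iff.1 hsum
  have hpos : z < c k ^ n := hxy.trans_le (hle.trans (pow_le_pow_of_dyadic h1 hc hsum'.le))
  exact absurd (hn.trans hle) (pow_lt_pow_of_dyadic hz h1 hlt hc0 hc hsum' hpos).not_ge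

theorem gen_mul {z : E} {c : ℕ → E} (hz : ∀ x, z ≤ x) (h1 : ∀ x : E, x ≤ 1)
    (hlt : ∀ x : E, z < x → x < 1 → x * x < x) (hc0 : c 0 < 1)
    (hc : ∀ k, c (k + 1) ^ 2 = c k) (x y : E) :
    gen c (x * y) = min (gen c x + gen c y) (gen c z) := by
  refine le_antisymm (le_min (gen_mul_le hc x y) (gen_anti c (hz _))) ?_
  rcases (hz (x * y)).eq_or_lt with h | h
  · exact (min_le_right _ _).trans_eq (by rw [← h])
  · exact (min_le_left _ _).trans (add_le_gen_mul hz h1 hlt hc0 hc h)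

end Generator

theorem exists_generator {E : Type*} [LinearOrder E] [TopologicalSpace E] [OrderTopology E]
    [PreconnectedSpace E] [CompactSpace E] [DenselyOrdered E] (op : E → E → E) (z b : E)
    (hzb : z < b) (hz : ∀ x, z ≤ x) (hb : ∀ x, x ≤ b)
    (hcont : Continuous fun p : E × E => op p.1 p.2)
    (hleft : ∀ y x x', x ≤ x' → op x y ≤ op x' y)
    (hright : ∀ x y y', y ≤ y' → op x y ≤ op x y')
    (hassoc : ∀ x y w, op (op x y) w = op x (op y w))
    (hid : ∀ x, op b x = x)
    (hlt : ∀ x, z < x → x < b → op x x < x) :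
    ∃ f : E → ℝ≥0∞, Continuous f ∧ StrictAnti f ∧ f b = 0 ∧
      ∀ x y, f (op x y) = min (f x + f y) (f z) := by
  let : Monoid E :=
    { mul := op
      one := b
      mul_assoc := hassoc
      one_mul := hid
      mul_one := right_identity op z b hzb hz hb hcont hleft hassoc hid hlt }
  have : ContinuousMul E := ⟨hcont⟩
  have : MulLeftMono E := ⟨fun x y y' h => hright x y y' h⟩
  have : MulRightMono E := ⟨fun y x x' h => hleft y x x' h⟩
  obtain ⟨c, hcz, hc0, hc⟩ := exists_roots (E := E) hb hzb
  exact ⟨gen c, gen_continuous hz hb hlt hc0 hc, gen_strictAnti hz hb hlt hcz hc0 hc, gen_one c,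
    gen_mul hz hb hlt hc0 hc⟩

/-! ### Passage to the interval, and the converse -/

variable {a b : ℝ} {A : ℝ → ℝ → ℝ}

theorem continuous_restrict_iff
    (hmaps : ∀ x ∈ Icc a b, ∀ y ∈ Icc a b, A x y ∈ Icc a b) :
    ContinuousOn (fun p : ℝ × ℝ => A p.1 p.2) (Icc a b ×ˢ Icc a b) ↔
      Continuous fun p : Icc a b × Icc a b =>
        (⟨A p.1 p.2, hmaps _ p.1.2 _ p.2.2⟩ : Icc a b) := by
  constructor
  · intro h
    refine Continuous.subtype_mk ?_ _
    exact h.comp_continuous (f := fun p : Icc a b × Icc a b => ((p.1 : ℝ), (p.2 : ℝ)))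
      (by fun_prop) fun p => ⟨p.1.2, p.2.2⟩
  · intro h
    rw [continuousOn_iff_continuous_domRestrict]
    have h2 : Continuous fun p : (Icc a b ×ˢ Icc a b : Set (ℝ × ℝ)) =>
        ((⟨p.1.1, p.2.1⟩, ⟨p.1.2, p.2.2⟩) : Icc a b × Icc a b) := by
      fun_prop
    exact continuous_subtype_val.comp (h.comp h2)

theorem of_generator (hab : a < b)
    (hmaps : ∀ x ∈ Icc a b, ∀ y ∈ Icc a b, A x y ∈ Icc a b)
    {f : ℝ → ℝ≥0∞} (hf : ContinuousOn f (Icc a b)) (hanti : StrictAntiOn f (Icc a b))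
    (hfb : f b = 0)
    (hA : ∀ x ∈ Icc a b, ∀ y ∈ Icc a b, f (A x y) = min (f x + f y) (f a)) :
    ContinuousOn (fun p : ℝ × ℝ => A p.1 p.2) (Icc a b ×ˢ Icc a b) ∧
     (∀ y ∈ Icc a b, MonotoneOn (fun x => A x y) (Icc a b)) ∧
     (∀ x ∈ Icc a b, MonotoneOn (fun y => A x y) (Icc a b)) ∧
     (∀ x ∈ Icc a b, ∀ y ∈ Icc a b, ∀ z ∈ Icc a b, A (A x y) z = A x (A y z)) ∧
     (∀ x ∈ Icc a b, A b x = x) ∧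
     (∀ x ∈ Ioo a b, A x x < x) := by
  have ha : a ∈ Icc a b := left_mem_Icc.2 hab.le
  have hb : b ∈ Icc a b := right_mem_Icc.2 hab.le
  have hle : ∀ x ∈ Icc a b, f x ≤ f a := fun x hx => hanti.antitoneOn ha hx hx.1
  -- Truncation at `f a` may be postponed to the end of a sum.
  have htrunc : ∀ s t u : ℝ≥0∞, min (min s u + t) u = min (s + t) u := by
    intro s t u
    rcases le_total s u with h | h
    · rw [min_eq_left h]
    · rw [min_eq_right h, min_eq_right le_self_add,
        min_eq_right (h.trans le_self_add)]
  refine ⟨?_, ?_, ?_, ?_, ?_, ?_⟩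
  · rw [continuous_restrict_iff hmaps]
    -- A continuous injection of a compact space into a Hausdorff space is an embedding.
    have hemb : IsClosedEmbedding ((Icc a b).domRestrict f) :=
      hf.domRestrict.isClosedEmbedding hanti.injOn.injective
    have hfc : Continuous fun x : Icc a b => f x := hf.domRestrict
    rw [hemb.isInducing.continuous_iff]
    have hEq : ((Icc a b).domRestrict f ∘ fun p : Icc a b × Icc a b =>
        (⟨A p.1 p.2, hmaps _ p.1.2 _ p.2.2⟩ : Icc a b))
        = fun p => min (f p.1 + f p.2) (f a) := by
      funext p
      exact hA _ p.1.2 _ p.2.2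
    rw [hEq]
    exact ((hfc.comp continuous_fst).add (hfc.comp continuous_snd)).min continuous_const
  · intro y hy x hx x' hx' hxx'
    refine (hanti.le_iff_ge (hmaps x' hx' y hy) (hmaps x hx y hy)).1 ?_
    rw [hA x hx y hy, hA x' hx' y hy]
    gcongr
    exact hanti.antitoneOn hx hx' hxx'
  · intro x hx y hy y' hy' hyy'
    refine (hanti.le_iff_ge (hmaps x hx y' hy') (hmaps x hx y hy)).1 ?_
    rw [hA x hx y hy, hA x hx y' hy']
    gcongr
    exact hanti.antitoneOn hy hy' hyy'
  · intro x hx y hy z hz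
    have hxy := hmaps x hx y hy
    have hyz := hmaps y hy z hz
    refine hanti.injOn (hmaps _ hxy z hz) (hmaps x hx _ hyz) ?_
    rw [hA _ hxy z hz, hA x hx _ hyz, hA x hx y hy, hA y hy z hz, htrunc,
      add_comm (f x) (min _ _), htrunc, add_assoc, add_comm (f x)]
  · intro x hx
    refine hanti.injOn (hmaps b hb x hx) hx ?_
    rw [hA b hb x hx, hfb, zero_add, min_eq_left (hle x hx)]
  · intro x hx
    have hx' : x ∈ Icc a b := ⟨hx.1.le, hx.2.le⟩
    have hxa : f x < f a := hanti ha hx' hx.1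
    have hx0 : f x ≠ 0 := (hfb ▸ hanti hx' hb hx.2).ne'
    refine (hanti.lt_iff_gt hx' (hmaps x hx' x hx')).1 ?_
    rw [hA x hx' x hx']
    exact lt_min (ENNReal.lt_add_right hxa.ne_top hx0) hxa

end Ling

/-- **Ling's theorem (conjunctive Archimedean semigroups).**
Let `E = [a,b]`, `a < b`. A function `A : E² → E` is continuous, nondecreasing in each
variable, associative, has `b` as a left identity, and satisfies `A(x,x) < x` on `(a,b)`,
iff there is a continuous strictly decreasing `f : E → [0,+∞]` with `f(b) = 0` such that
`A(x,y) = f⁻¹(min(f(x) + f(y), f(a)))` (stated via `f (A x y) = min (f x + f y) (f a)`). -/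
theorem ling_conjunctive_archimedean
    (a b : ℝ) (hab : a < b) (A : ℝ → ℝ → ℝ)
    (hmaps : ∀ x ∈ Set.Icc a b, ∀ y ∈ Set.Icc a b, A x y ∈ Set.Icc a b) :
    (ContinuousOn (fun p : ℝ × ℝ => A p.1 p.2) (Set.Icc a b ×ˢ Set.Icc a b) ∧
     (∀ y ∈ Set.Icc a b, MonotoneOn (fun x => A x y) (Set.Icc a b)) ∧
     (∀ x ∈ Set.Icc a b, MonotoneOn (fun y => A x y) (Set.Icc a b)) ∧
     (∀ x ∈ Set.Icc a b, ∀ y ∈ Set.Icc a b, ∀ z ∈ Set.Icc a b,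
        A (A x y) z = A x (A y z)) ∧
     (∀ x ∈ Set.Icc a b, A b x = x) ∧
     (∀ x ∈ Set.Ioo a b, A x x < x)) ↔
    (∃ f : ℝ → ℝ≥0∞, ContinuousOn f (Set.Icc a b) ∧ StrictAntiOn f (Set.Icc a b) ∧
       f b = 0 ∧
       ∀ x ∈ Set.Icc a b, ∀ y ∈ Set.Icc a b,
         f (A x y) = min (f x + f y) (f a)) := by
  constructor
  · rintro ⟨hcont, hleft, hright, hassoc, hid, hlt⟩
    have : PreconnectedSpace (Set.Icc a b) := Subtype.preconnectedSpace isPreconnected_Icc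
    obtain ⟨f, hf, hanti, hfb, hA⟩ := Ling.exists_generator (E := Set.Icc a b)
      (fun x y => ⟨A x y, hmaps _ x.2 _ y.2⟩)
      ⟨a, Set.left_mem_Icc.2 hab.le⟩ ⟨b, Set.right_mem_Icc.2 hab.le⟩ hab
      (fun x => x.2.1) (fun x => x.2.2)
      ((Ling.continuous_restrict_iff hmaps).1 hcont)
      (fun y x x' h => hleft y y.2 x.2 x'.2 h)
      (fun x y y' h => hright x x.2 y.2 y'.2 h)
      (fun x y w => Subtype.ext (hassoc x x.2 y y.2 w w.2))
      (fun x => Subtype.ext (hid x x.2))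
      (fun x h h' => hlt x ⟨h, h'⟩)
    have hext : ∀ x (hx : x ∈ Set.Icc a b), Set.IccExtend hab.le f x = f ⟨x, hx⟩ :=
      fun x hx => Set.IccExtend_of_mem hab.le f hx
    refine ⟨Set.IccExtend hab.le f, hf.Icc_extend'.continuousOn, ?_, ?_, ?_⟩
    · intro x hx y hy hxy
      rw [hext x hx, hext y hy]
      exact hanti hxy
    · rw [hext b (Set.right_mem_Icc.2 hab.le), hfb]
    · intro x hx y hy
      rw [hext x hx, hext y hy, hext _ (hmaps x hx y hy), hext a (Set.left_mem_Icc.2 hab.le)]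
      exact hA ⟨x, hx⟩ ⟨y, hy⟩
  · rintro ⟨f, hf, hanti, hfb, hA⟩
    exact Ling.of_generator hab hmaps hf hanti hfb hA
end

section
/- Let E = [a,b] with a < b. A function A : E² → E is continuous, nondecreasing in each variable, associative, satisfies A(a,x) = x for all x ∈ E, and A(x,x) > x for all x in the open interval (a,b), if and only if there exists a continuous strictly increasing function f : E → [0,+∞] (with values in the extended nonnegative reals) with f(a) = 0 such that A(x,y) = f⁻¹( min( f(x) + f(y), f(b) ) ) for all x,y ∈ E. -/
open scoped ENNReal

/-!
An operation of the form `f⁻¹ (min (f x + f y) (f b))` inherits monotonicity, associativity and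
the identity from addition capped at `f b`; it is continuous because `f` is a topological
embedding of the compact interval.

Conversely, write `x + y` for `A x y`. The left identity `a` turns out to be a right identity
too (`right_identity`), so `[a, b]` is an ordered topological monoid with zero `a`. The limit of
the multiples `n • x` of an `x > a` is an idempotent above `a`, hence it is `b`
(`tendsto_nsmul`), and therefore only `b` can absorb a positive element; together with the
intermediate value theorem this makes addition strictly increasing below `b`
(`add_lt_add_of_lt_top`). The intermediate value theorem also gives successive halves `e n` of an
interior point, and these tend to `a`. The generator is
`gen e x = sup {k / 2 ^ n | k • e n < x}`. Since `k • e n` depends only on `k / 2 ^ n` and the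
points `k • e n` are dense (`exists_nsmul_btwn`), `gen e` is continuous and strictly increasing,
and additivity of `k • e n` in `k` yields the functional equation (`gen_add`).
Commutativity of `A` is never needed, since all multiples are taken of a single chain of halves.
-/

namespace LingAux

open Filter Topology
open scoped NNReal

set_option linter.unusedSectionVars false

/-! ### The topological semigroup -/

section Semigroup

variable {E : Type*} [LinearOrder E] [TopologicalSpace E] [OrderTopology E] [CompactSpace E]

/-- Order-compactness makes monotone sequences converge, to a limit above all their terms. -/
lemma exists_tendsto_of_monotone {u : ℕ → E} (hu : Monotone u) :
    ∃ L, Tendsto u atTop (𝓝 L) ∧ ∀ n, u n ≤ L := by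
  obtain ⟨L, hL⟩ := (isClosed_closure (s := Set.range u)).isCompact.exists_isLUB
    (Set.range_nonempty u).closure
  have hL' := (isLUB_iff_of_subset_of_subset_closure subset_closure subset_rfl).2 hL.2
  exact ⟨L, tendsto_atTop_isLUB hu hL', fun n => hL'.1 ⟨n, rfl⟩⟩

lemma exists_tendsto_of_antitone {u : ℕ → E} (hu : Antitone u) :
    ∃ L, Tendsto u atTop (𝓝 L) ∧ ∀ n, L ≤ u n := by
  obtain ⟨L, hL⟩ := (isClosed_closure (s := Set.range u)).isCompact.exists_isGLB
    (Set.range_nonempty u).closure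
  have hL' := (isGLB_iff_of_subset_of_subset_closure subset_closure subset_rfl).2 hL.2
  exact ⟨L, tendsto_atTop_isGLB hu hL', fun n => hL'.1 ⟨n, rfl⟩⟩

variable [PreconnectedSpace E]

/-- A bottom element that is a left identity is automatically a right identity.
The map `x ↦ B x z` is idempotent, so it suffices that it is onto, i.e. that `B t z = t`;
otherwise `c = B t z` would be an interior point with `B c c ≤ c`, or `c = z` would force
`B x x = x` at an interior point `x`. -/
lemma right_identity (B : E → E → E) (z t m : E) (hz : ∀ x, z ≤ x) (ht : ∀ x, x ≤ t)
    (hzm : z < m) (hmt : m < t) (hc : Continuous fun x => B x z)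
    (hmono : ∀ y, Monotone fun x => B x y)
    (hassoc : ∀ x y w, B (B x y) w = B x (B y w)) (hid : ∀ x, B z x = x)
    (hlt : ∀ x, z < x → x < t → x < B x x) (x : E) : B x z = x := by
  have hidem : ∀ y, B (B y z) z = B y z := fun y => by rw [hassoc, hid]
  have htop : B t z = t := by
    by_contra hne
    have h1 : B t z < t := lt_of_le_of_ne (ht _) hne
    rcases (hz (B t z)).eq_or_lt with h2 | h2
    · have h3 : B m z = z := le_antisymm ((hmono z (ht m)).trans h2.ge) (hz _)
      have h4 : B m m = m := by
        conv_lhs => rw [← hid m, ← hassoc, hid, h3]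
        exact hid m
      exact (hlt m hzm hmt).ne' h4
    · have h3 := hlt _ h2 h1
      have h4 : B (B t z) (B t z) = B (B (B t z) (B t z)) z := by
        rw [hassoc (B t z) (B t z) z, hidem]
      have h5 : B (B (B t z) (B t z)) z ≤ B t z := hmono z (ht _)
      exact absurd h3 (not_lt.2 (h4.le.trans h5))
  obtain ⟨y, hy⟩ := mem_range_of_exists_le_of_exists_ge hc
    ⟨z, (hid z).le.trans (hz x)⟩ ⟨t, (ht x).trans htop.ge⟩
  simp only at hy
  rw [← hy, hidem]

variable [AddMonoid E] [ContinuousAdd E] [AddLeftMono E] [AddRightMono E]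
  {t : E}

/-- The Archimedean property: the limit of the multiples is an idempotent, hence the top. -/
lemma tendsto_nsmul (h0 : ∀ x : E, 0 ≤ x) (ht : ∀ x : E, x ≤ t)
    (hlt : ∀ x : E, 0 < x → x < t → x < x + x) {x : E} (hx : 0 < x) :
    Tendsto (fun n : ℕ => n • x) atTop (𝓝 t) := by
  obtain ⟨L, hL, hle⟩ := exists_tendsto_of_monotone
    (u := fun n : ℕ => n • x) (fun i j hij => nsmul_le_nsmul_left (h0 x) hij)
  have h2 : Tendsto (fun n : ℕ => n • x + n • x) atTop (𝓝 L) := by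
    have := hL.comp (tendsto_id.const_mul_atTop' (r := 2) (by norm_num))
    refine this.congr fun n => ?_
    simp [two_mul, add_nsmul]
  have hLL : L + L = L := tendsto_nhds_unique (hL.add hL) h2
  have hpos : 0 < L := hx.trans_le (by simpa using hle 1)
  have : L = t := by
    by_contra hne
    exact (hlt L hpos (lt_of_le_of_ne (ht L) hne)).ne' hLL
  exact this ▸ hL

lemma eq_top_of_add_right (h0 : ∀ x : E, 0 ≤ x) (ht : ∀ x : E, x ≤ t)
    (hlt : ∀ x : E, 0 < x → x < t → x < x + x) {u w : E} (hw : 0 < w) (h : u + w = u) :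
    u = t := by
  have h1 : ∀ n : ℕ, u + n • w = u := fun n => by
    induction n with
    | zero => simp
    | succ n ih => rw [succ_nsmul, ← add_assoc, ih, h]
  have h2 : Tendsto (fun n : ℕ => u + n • w) atTop (𝓝 (u + t)) :=
    tendsto_const_nhds.add (tendsto_nsmul h0 ht hlt hw)
  simp only [h1] at h2
  have h3 : u = u + t := tendsto_nhds_unique tendsto_const_nhds h2
  exact le_antisymm (ht u) (h3 ▸ le_add_of_nonneg_left (h0 u))

lemma eq_top_of_add_left (h0 : ∀ x : E, 0 ≤ x) (ht : ∀ x : E, x ≤ t)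
    (hlt : ∀ x : E, 0 < x → x < t → x < x + x) {u w : E} (hw : 0 < w) (h : w + u = u) :
    u = t := by
  have h1 : ∀ n : ℕ, n • w + u = u := fun n => by
    induction n with
    | zero => simp
    | succ n ih => rw [succ_nsmul, add_assoc, h, ih]
  have h2 : Tendsto (fun n : ℕ => n • w + u) atTop (𝓝 (t + u)) :=
    (tendsto_nsmul h0 ht hlt hw).add tendsto_const_nhds
  simp only [h1] at h2
  have h3 : u = t + u := tendsto_nhds_unique tendsto_const_nhds h2
  exact le_antisymm (ht u) (h3 ▸ le_add_of_nonneg_right (h0 u))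

/-- Addition is strictly increasing in its left argument as long as the top is not reached:
if `y < z` then `z = w + y` with `w > 0`, and `w` can only be absorbed by the top. -/
lemma add_lt_add_of_lt_top (h0 : ∀ x : E, 0 ≤ x) (ht : ∀ x : E, x ≤ t)
    (hlt : ∀ x : E, 0 < x → x < t → x < x + x) {x y z : E} (hyz : y < z) (hz : y + x < t) :
    y + x < z + x := by
  refine lt_of_le_of_ne (add_le_add_left hyz.le x) fun heq => ?_
  obtain ⟨w, hw⟩ := mem_range_of_exists_le_of_exists_ge (f := fun w : E => w + y) (c := z)
    (by fun_prop) ⟨0, by simpa using hyz.le⟩ ⟨t, (ht z).trans (le_add_of_nonneg_right (h0 y))⟩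
  simp only at hw
  have hw0 : 0 < w := lt_of_le_of_ne (h0 w) fun h => by
    rw [← h, zero_add] at hw; exact hyz.ne hw
  refine hz.ne (eq_top_of_add_left h0 ht hlt hw0 ?_)
  rw [← add_assoc, hw, heq]

/-- A sequence of successive halves of an interior point. -/
lemma exists_halves (h0 : ∀ x : E, 0 ≤ x) (ht : ∀ x : E, x ≤ t) {c : E}
    (hc0 : 0 < c) (hct : c < t) :
    ∃ e : ℕ → E, (∀ n, 0 < e n) ∧ (∀ n, e n < t) ∧ ∀ n, e (n + 1) + e (n + 1) = e n := by
  have hhalf : ∀ x : E, ∃ y : E, y + y = x := fun x =>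
    mem_range_of_exists_le_of_exists_ge (f := fun y : E => y + y) (by fun_prop)
      ⟨0, by simpa using h0 x⟩ ⟨t, (ht x).trans (le_add_of_nonneg_right (h0 t))⟩
  choose half hh using hhalf
  have hstep : ∀ n, half^[n + 1] c + half^[n + 1] c = half^[n] c := fun n => by
    rw [Function.iterate_succ_apply', hh]
  refine ⟨fun n => half^[n] c, fun n => ?_, fun n => ?_, hstep⟩
  · induction n with
    | zero => exact hc0
    | succ n ih =>
      refine lt_of_le_of_ne (h0 _) fun h => ?_
      simp only at h ih
      have := hstep n
      rw [← h, add_zero] at this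
      exact ih.ne this
  · induction n with
    | zero => exact hct
    | succ n ih =>
      exact (le_add_of_nonneg_right (h0 _)).trans_lt ((hstep n).le.trans_lt ih)

lemma tendsto_halves (h0 : ∀ x : E, 0 ≤ x)
    (hlt : ∀ x : E, 0 < x → x < t → x < x + x) {e : ℕ → E} (het : ∀ n, e n < t)
    (he : ∀ n, e (n + 1) + e (n + 1) = e n) : Tendsto e atTop (𝓝 0) := by
  obtain ⟨L, hL, hle⟩ := exists_tendsto_of_antitone (u := e)
    (antitone_nat_of_succ_le fun n => (le_add_of_nonneg_right (h0 _)).trans (he n).le)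
  have h1 := hL.comp (tendsto_add_atTop_nat 1)
  have hLL : L + L = L := tendsto_nhds_unique (h1.add h1) (hL.congr fun n => (he n).symm)
  have : L = 0 := by
    by_contra hne
    exact (hlt L (lt_of_le_of_ne (h0 L) (Ne.symm hne)) ((hle 0).trans_lt (het 0))).ne' hLL
  exact this ▸ hL

/-! ### Dyadic multiples -/

/-- The dyadic number `k / 2 ^ n`. -/
noncomputable def dy (n k : ℕ) : ℝ≥0 := k / 2 ^ n

lemma dy_shift (n m k : ℕ) : dy (n + m) (2 ^ m * k) = dy n k := by
  unfold dy
  push_cast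
  rw [pow_add]
  field_simp

lemma dy_lt {n i j : ℕ} : dy n i < dy n j ↔ i < j := by
  unfold dy
  rw [div_lt_div_iff_of_pos_right (by positivity)]
  exact Nat.cast_lt

lemma dy_add (n i j : ℕ) : dy n (i + j) = dy n i + dy n j := by
  unfold dy
  push_cast
  rw [add_div]

lemma exists_dy_btwn {u v : ℝ≥0∞} (h : u < v) :
    ∃ n k, u < (dy n k : ℝ≥0∞) ∧ (dy n k : ℝ≥0∞) < v := by
  obtain ⟨p, hup, hpv⟩ := ENNReal.lt_iff_exists_nnreal_btwn.1 h
  obtain ⟨q, hpq, hqv⟩ := ENNReal.lt_iff_exists_nnreal_btwn.1 hpv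
  have hpq' : (p : ℝ) < q := by exact_mod_cast hpq
  obtain ⟨n, hn⟩ := exists_pow_lt_of_lt_one (sub_pos.2 hpq') (by norm_num : (1 / 2 : ℝ) < 1)
  have h2 : (0 : ℝ) < 2 ^ n := by positivity
  have hn' : 1 < ((q : ℝ) - p) * 2 ^ n := by
    rw [one_div, inv_pow, inv_lt_iff_one_lt_mul₀ h2] at hn
    linarith
  refine ⟨n, ⌊(p : ℝ) * 2 ^ n⌋₊ + 1, hup.trans ?_, lt_trans ?_ hqv⟩
  · rw [ENNReal.coe_lt_coe, ← NNReal.coe_lt_coe]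
    simp only [dy]
    push_cast
    rw [lt_div_iff₀ h2]
    exact Nat.lt_floor_add_one _
  · rw [ENNReal.coe_lt_coe, ← NNReal.coe_lt_coe]
    simp only [dy]
    push_cast
    rw [div_lt_iff₀ h2]
    have := Nat.floor_le (show 0 ≤ (p : ℝ) * 2 ^ n by positivity)
    linarith

/-- `k • e n` depends only on the dyadic number `k / 2 ^ n`. -/
lemma nsmul_shift {e : ℕ → E} (he : ∀ n, e (n + 1) + e (n + 1) = e n)
    (n m k : ℕ) : (2 ^ m * k) • e (n + m) = k • e n := by
  induction m with
  | zero => simp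
  | succ m ih =>
    rw [← ih, ← he (n + m), ← two_nsmul, ← mul_nsmul', pow_succ]
    congr 1
    ring

/-- Two dyadic numbers may be brought to a common denominator. -/
lemma common_denominator {e : ℕ → E} (he : ∀ n, e (n + 1) + e (n + 1) = e n)
    (n k m l : ℕ) : ∃ N i j, dy N i = dy n k ∧ dy N j = dy m l ∧
    i • e N = k • e n ∧ j • e N = l • e m :=
  ⟨n + m, 2 ^ m * k, 2 ^ n * l, dy_shift n m k, by rw [add_comm n m]; exact dy_shift m n l,
    nsmul_shift he n m k, by rw [add_comm n m]; exact nsmul_shift he m n l⟩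

lemma dy_lt_of_nsmul_lt {e : ℕ → E} (he : ∀ n, e (n + 1) + e (n + 1) = e n)
    (h0 : ∀ x : E, 0 ≤ x) {n k m l : ℕ} (h : k • e n < l • e m) :
    dy n k < dy m l := by
  obtain ⟨N, i, j, hi, hj, hi', hj'⟩ := common_denominator he n k m l
  rw [← hi, ← hj, dy_lt]
  rw [← hi', ← hj'] at h
  by_contra! hle
  exact absurd h (not_lt.2 (nsmul_le_nsmul_left (h0 _) hle))

/-! ### The additive generator -/

/-- The additive generator attached to a sequence `e` of successive halves: the supremum of
the dyadic numbers `k / 2 ^ n` with `k • e n < x`. The strict inequality gives the right value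
at the top, which may be reached by finitely many summands. -/
noncomputable def gen (e : ℕ → E) (x : E) : ℝ≥0∞ :=
  ⨆ (n : ℕ) (k : ℕ) (_ : k • e n < x), (dy n k : ℝ≥0∞)

lemma le_gen {e : ℕ → E} {x : E} {n k : ℕ} (h : k • e n < x) : (dy n k : ℝ≥0∞) ≤ gen e x :=
  le_iSup_of_le n (le_iSup_of_le k (le_iSup_of_le h le_rfl))

lemma gen_le {e : ℕ → E} {x : E} {c : ℝ≥0∞} (h : ∀ n k, k • e n < x → (dy n k : ℝ≥0∞) ≤ c) :
    gen e x ≤ c :=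
  iSup_le fun n => iSup_le fun k => iSup_le (h n k)

lemma gen_mono (e : ℕ → E) : Monotone (gen e) := fun _ _ hxy =>
  gen_le fun _ _ h => le_gen (h.trans_le hxy)

lemma gen_zero (h0 : ∀ x : E, 0 ≤ x) (e : ℕ → E) : gen e 0 = 0 :=
  le_antisymm (gen_le fun _ _ h => absurd h (not_lt.2 (h0 _))) bot_le

/-- Contrapositive form of `le_gen`. -/
lemma le_nsmul_of_gen_lt {e : ℕ → E} {x : E} {n k : ℕ} (h : gen e x < dy n k) : x ≤ k • e n := by
  by_contra! hlt
  exact absurd h (not_lt.2 (le_gen hlt))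

lemma gen_le_dy {e : ℕ → E} (he : ∀ n, e (n + 1) + e (n + 1) = e n) (h0 : ∀ x : E, 0 ≤ x)
    {x : E} {n k : ℕ} (h : x ≤ k • e n) : gen e x ≤ dy n k :=
  gen_le fun _ _ h' => ENNReal.coe_le_coe.2 (dy_lt_of_nsmul_lt he h0 (h'.trans_le h)).le

/-- Dyadic multiples are dense: if `n` is so large that `x + e n < y`, the first multiple
of `e n` beyond `x` lies below `y`. -/
lemma exists_nsmul_btwn (h0 : ∀ x : E, 0 ≤ x) (ht : ∀ x : E, x ≤ t)
    (hlt : ∀ x : E, 0 < x → x < t → x < x + x) {e : ℕ → E} (he0 : ∀ n, 0 < e n)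
    (het : ∀ n, e n < t) (he : ∀ n, e (n + 1) + e (n + 1) = e n) {x y : E} (hxy : x < y) :
    ∃ n k : ℕ, x < k • e n ∧ k • e n < y := by
  have h1 : Tendsto (fun n => x + e n) atTop (𝓝 (x + 0)) :=
    tendsto_const_nhds.add (tendsto_halves h0 hlt het he)
  rw [add_zero] at h1
  obtain ⟨n, hn⟩ := (h1.eventually (gt_mem_nhds hxy)).exists
  have hex : ∃ k : ℕ, x < k • e n :=
    ((tendsto_nsmul h0 ht hlt (he0 n)).eventually (lt_mem_nhds (hxy.trans_le (ht y)))).exists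
  classical
  refine ⟨n, Nat.find hex, Nat.find_spec hex, lt_of_le_of_lt ?_ hn⟩
  obtain ⟨k, hk⟩ : ∃ k, Nat.find hex = k + 1 := Nat.exists_eq_succ_of_ne_zero fun h => by
    have := Nat.find_spec hex
    rw [h, zero_nsmul] at this
    exact absurd this (not_lt.2 (h0 x))
  have hkx : k • e n ≤ x := not_lt.1 (Nat.find_min hex (by omega))
  rw [hk, succ_nsmul]
  exact add_le_add_left hkx _

lemma gen_strictMono (h0 : ∀ x : E, 0 ≤ x) (ht : ∀ x : E, x ≤ t)
    (hlt : ∀ x : E, 0 < x → x < t → x < x + x) {e : ℕ → E} (he0 : ∀ n, 0 < e n)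
    (het : ∀ n, e n < t) (he : ∀ n, e (n + 1) + e (n + 1) = e n) : StrictMono (gen e) := by
  intro x y hxy
  obtain ⟨n, k, hx, hy⟩ := exists_nsmul_btwn h0 ht hlt he0 het he hxy
  obtain ⟨m, l, hl, hy'⟩ := exists_nsmul_btwn h0 ht hlt he0 het he hy
  calc gen e x ≤ dy n k := gen_le_dy he h0 hx.le
    _ < dy m l := ENNReal.coe_lt_coe.2 (dy_lt_of_nsmul_lt he h0 hl)
    _ ≤ gen e y := le_gen hy'

lemma gen_continuous (h0 : ∀ x : E, 0 ≤ x) (ht : ∀ x : E, x ≤ t)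
    (hlt : ∀ x : E, 0 < x → x < t → x < x + x) {e : ℕ → E} (he0 : ∀ n, 0 < e n)
    (he : ∀ n, e (n + 1) + e (n + 1) = e n) : Continuous (gen e) := by
  refine continuous_iff_continuousAt.2 fun x => tendsto_order.2 ⟨fun c hc => ?_, fun c hc => ?_⟩
  · have : ∃ n k, k • e n < x ∧ c < dy n k := by
      by_contra! hcon
      exact absurd hc (not_lt.2 (gen_le hcon))
    obtain ⟨n, k, hk, hck⟩ := this
    filter_upwards [lt_mem_nhds hk] with y hy
    exact hck.trans_le (le_gen hy)
  · rcases (ht x).eq_or_lt with rfl | hxt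
    · exact Eventually.of_forall fun y => (gen_mono e (ht y)).trans_lt hc
    obtain ⟨m, l, hl, hlc⟩ := exists_dy_btwn hc
    obtain ⟨n, k, hk, hkl⟩ := exists_dy_btwn hl
    have hlt' : x < l • e m := by
      refine lt_of_le_of_ne (le_nsmul_of_gen_lt hl) fun heq => ?_
      have hxk : x ≤ k • e n := le_nsmul_of_gen_lt hk
      -- both multiples equal `x`, so `x` absorbs a positive element
      obtain ⟨N, i, j, hi, hj, hi', hj'⟩ := common_denominator he n k m l
      rw [ENNReal.coe_lt_coe, ← hi, ← hj, dy_lt] at hkl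
      have hle : i • e N + e N ≤ i • e N := by
        rw [← succ_nsmul]
        refine (nsmul_le_nsmul_left (h0 _) (Nat.succ_le_of_lt hkl)).trans ?_
        rw [hj', ← heq, hi']
        exact hxk
      have htop := eq_top_of_add_right h0 ht hlt (he0 N)
        (le_antisymm hle (le_add_of_nonneg_right (h0 _)))
      have : l • e m = t := by
        refine le_antisymm (ht _) ?_
        rw [← hj', ← htop]
        exact nsmul_le_nsmul_left (h0 _) hkl.le
      exact hxt.ne (heq.trans this)
    filter_upwards [gt_mem_nhds hlt'] with y hy
    exact (gen_le_dy he h0 hy.le).trans_lt hlc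

lemma gen_add (h0 : ∀ x : E, 0 ≤ x) (ht : ∀ x : E, x ≤ t)
    (hlt : ∀ x : E, 0 < x → x < t → x < x + x) {e : ℕ → E}
    (he : ∀ n, e (n + 1) + e (n + 1) = e n) (x y : E) :
    gen e (x + y) = min (gen e x + gen e y) (gen e t) := by
  refine le_antisymm (le_min (gen_le fun n k hk => ?_) (gen_mono e (ht _))) ?_
  · by_contra! hcon
    -- room to enlarge both summands to dyadic numbers
    obtain ⟨u, hu, v, hv, huv⟩ : ∃ u, gen e x < u ∧ ∃ v, gen e y < v ∧ u + v ≤ dy n k := by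
      obtain ⟨w, hw, hwk⟩ := ENNReal.lt_iff_exists_add_pos_lt.1 hcon
      have hne : gen e x + gen e y ≠ ⊤ := (hcon.trans ENNReal.coe_lt_top).ne
      have hw2 : ((w / 2 : ℝ≥0) : ℝ≥0∞) ≠ 0 := by
        simpa using hw.ne'
      refine ⟨gen e x + (w / 2 : ℝ≥0), ENNReal.lt_add_right (fun h => hne (by simp [h])) hw2,
        gen e y + (w / 2 : ℝ≥0), ENNReal.lt_add_right (fun h => hne (by simp [h])) hw2, ?_⟩
      rw [add_add_add_comm, ← ENNReal.coe_add, add_halves]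
      exact hwk.le
    obtain ⟨m₁, l₁, h₁, h₁u⟩ := exists_dy_btwn hu
    obtain ⟨m₂, l₂, h₂, h₂v⟩ := exists_dy_btwn hv
    obtain ⟨N, i, j, hi, hj, hi', hj'⟩ := common_denominator he m₁ l₁ m₂ l₂
    have hle : x + y ≤ (i + j) • e N := by
      rw [add_nsmul, hi', hj']
      exact add_le_add (le_nsmul_of_gen_lt h₁) (le_nsmul_of_gen_lt h₂)
    have h3 : dy n k < dy N (i + j) := dy_lt_of_nsmul_lt he h0 (hk.trans_le hle)
    rw [dy_add, hi, hj] at h3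
    have h4 : (dy m₁ l₁ : ℝ≥0∞) + dy m₂ l₂ < dy n k := (ENNReal.add_lt_add h₁u h₂v).trans_le huv
    exact absurd h3 (not_lt.2 (by exact_mod_cast h4.le))
  · rcases (ht (x + y)).eq_or_lt with htop | hxy
    · rw [htop]; exact min_le_right _ _
    refine (min_le_left _ _).trans ?_
    rcases (h0 x).eq_or_lt with rfl | hx
    · simp [gen_zero h0]
    rcases (h0 y).eq_or_lt with rfl | hy
    · simp [gen_zero h0]
    by_contra! hcon
    have hsum : ∀ n k m l : ℕ, k • e n < x → l • e m < y →
        (dy n k : ℝ≥0∞) + dy m l ≤ gen e (x + y) := by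
      intro n k m l hk hl
      obtain ⟨N, i, j, hi, hj, hi', hj'⟩ := common_denominator he n k m l
      have hlt' : (i + j) • e N < x + y := by
        rw [add_nsmul, hi', hj']
        have h1 : k • e n + y ≤ x + y := add_le_add_left hk.le y
        exact (add_le_add_right hl.le _).trans_lt
          (add_lt_add_of_lt_top h0 ht hlt hk (h1.trans_lt hxy))
      have := le_gen hlt'
      rwa [dy_add, hi, hj, ENNReal.coe_add] at this
    have hy' : ∀ m l : ℕ, l • e m < y → gen e x + dy m l ≤ gen e (x + y) := by
      intro m l hl
      have h1 : (dy m l : ℝ≥0∞) ≤ gen e (x + y) := by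
        simpa [dy] using hsum 0 0 m l (by simpa using hx) hl
      rw [← ENNReal.le_sub_iff_add_le_right ENNReal.coe_ne_top h1]
      exact gen_le fun n k hk => (ENNReal.le_sub_iff_add_le_right ENNReal.coe_ne_top h1).2
        (hsum n k m l hk hl)
    have hxle : gen e x ≤ gen e (x + y) := gen_mono e (le_add_of_nonneg_right (h0 y))
    have hxtop : gen e x ≠ ⊤ := fun h => by
      rw [h, top_le_iff] at hxle
      exact absurd hcon (by rw [hxle]; exact not_top_lt)
    refine absurd hcon (not_lt.2 ?_)
    rw [← ENNReal.le_sub_iff_add_le_left hxtop hxle]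
    exact gen_le fun m l hl => (ENNReal.le_sub_iff_add_le_left hxtop hxle).2 (hy' m l hl)

end Semigroup

/-! ### Back to the interval -/

lemma exists_generator {a b : ℝ} (hab : a < b) (B : Set.Icc a b → Set.Icc a b → Set.Icc a b)
    (hc : Continuous fun p : Set.Icc a b × Set.Icc a b => B p.1 p.2)
    (hm1 : ∀ y, Monotone fun x => B x y) (hm2 : ∀ x, Monotone fun y => B x y)
    (hassoc : ∀ x y w, B (B x y) w = B x (B y w))
    (hid : ∀ x, B ⟨a, Set.left_mem_Icc.2 hab.le⟩ x = x)
    (hlt : ∀ x : Set.Icc a b, a < x → x < b → x < B x x) :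
    ∃ f : Set.Icc a b → ℝ≥0∞, Continuous f ∧ StrictMono f ∧
      f ⟨a, Set.left_mem_Icc.2 hab.le⟩ = 0 ∧
      ∀ x y, f (B x y) = min (f x + f y) (f ⟨b, Set.right_mem_Icc.2 hab.le⟩) := by
  set z : Set.Icc a b := ⟨a, Set.left_mem_Icc.2 hab.le⟩ with hz
  set t : Set.Icc a b := ⟨b, Set.right_mem_Icc.2 hab.le⟩ with ht
  let m : Set.Icc a b := ⟨(a + b) / 2, by constructor <;> linarith⟩
  have h0 : ∀ x, z ≤ x := fun x => x.2.1
  have h1 : ∀ x, x ≤ t := fun x => x.2.2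
  have hzm : z < m := Subtype.mk_lt_mk.2 (by linarith)
  have hmt : m < t := Subtype.mk_lt_mk.2 (by linarith)
  have hlt' : ∀ x, z < x → x < t → x < B x x := fun x h h' => hlt x h h'
  have : PreconnectedSpace (Set.Icc a b) := Subtype.preconnectedSpace isPreconnected_Icc
  have hrid : ∀ x, B x z = x := right_identity B z t m h0 h1 hzm hmt
    (hc.comp (by fun_prop : Continuous fun x : Set.Icc a b => (x, z))) hm1 hassoc hid hlt'
  let : Zero (Set.Icc a b) := ⟨z⟩
  let : Add (Set.Icc a b) := ⟨B⟩
  let : AddMonoid (Set.Icc a b) :=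
    { add_assoc := hassoc
      zero_add := hid
      add_zero := hrid
      nsmul := nsmulRec }
  have : ContinuousAdd (Set.Icc a b) := ⟨hc⟩
  have : AddLeftMono (Set.Icc a b) := ⟨fun x _ _ h => hm2 x h⟩
  have : AddRightMono (Set.Icc a b) := ⟨fun y _ _ h => hm1 y h⟩
  obtain ⟨e, he0, het, he⟩ := exists_halves (t := t) h0 h1 hzm hmt
  exact ⟨gen e, gen_continuous h0 h1 hlt' he0 he, gen_strictMono h0 h1 hlt' he0 het he,
    gen_zero h0 e, gen_add h0 h1 hlt' he⟩

/-- The capped sum is associative. -/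
lemma min_add_assoc (p q r c : ℝ≥0∞) :
    min (min (p + q) c + r) c = min (p + min (q + r) c) c := by
  have h1 : min (min (p + q) c + r) c = min (p + q + r) c := by
    rw [← min_add_add_right, min_assoc, min_eq_right (a := c + r) le_self_add]
  have h2 : min (p + min (q + r) c) c = min (p + (q + r)) c := by
    rw [← min_add_add_left, min_assoc, min_eq_right (a := p + c) le_add_self]
  rw [h1, h2, add_assoc]

end LingAux

/-- **Dual Ling theorem (disjunctive Archimedean semigroups).**
Let `E = [a,b]`, `a < b`. A function `A : E² → E` is continuous, nondecreasing in each
variable, associative, has `a` as a left identity, and satisfies `A(x,x) > x` on `(a,b)`,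
iff there is a continuous strictly increasing `f : E → [0,+∞]` with `f(a) = 0` such that
`A(x,y) = f⁻¹(min(f(x) + f(y), f(b)))` (stated via `f (A x y) = min (f x + f y) (f b)`). -/
theorem ling_disjunctive_archimedean
    (a b : ℝ) (hab : a < b) (A : ℝ → ℝ → ℝ)
    (hmaps : ∀ x ∈ Set.Icc a b, ∀ y ∈ Set.Icc a b, A x y ∈ Set.Icc a b) :
    (ContinuousOn (fun p : ℝ × ℝ => A p.1 p.2) (Set.Icc a b ×ˢ Set.Icc a b) ∧
     (∀ y ∈ Set.Icc a b, MonotoneOn (fun x => A x y) (Set.Icc a b)) ∧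
     (∀ x ∈ Set.Icc a b, MonotoneOn (fun y => A x y) (Set.Icc a b)) ∧
     (∀ x ∈ Set.Icc a b, ∀ y ∈ Set.Icc a b, ∀ z ∈ Set.Icc a b,
        A (A x y) z = A x (A y z)) ∧
     (∀ x ∈ Set.Icc a b, A a x = x) ∧
     (∀ x ∈ Set.Ioo a b, x < A x x)) ↔
    (∃ f : ℝ → ℝ≥0∞, ContinuousOn f (Set.Icc a b) ∧ StrictMonoOn f (Set.Icc a b) ∧
       f a = 0 ∧
       ∀ x ∈ Set.Icc a b, ∀ y ∈ Set.Icc a b,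
         f (A x y) = min (f x + f y) (f b)) := by
  have ha : a ∈ Set.Icc a b := Set.left_mem_Icc.2 hab.le
  have hb : b ∈ Set.Icc a b := Set.right_mem_Icc.2 hab.le
  constructor
  · rintro ⟨hc, hm1, hm2, hassoc, hid, hlt⟩
    obtain ⟨f, hf, hfm, hf0, hfA⟩ := LingAux.exists_generator hab
      (fun x y => ⟨A x y, hmaps x x.2 y y.2⟩)
      ((hc.comp_continuous (f := fun p : Set.Icc a b × Set.Icc a b => ((p.1 : ℝ), (p.2 : ℝ)))
        (by fun_prop) fun p => ⟨p.1.2, p.2.2⟩).subtype_mk _)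
      (fun y x x' h => hm1 y y.2 x.2 x'.2 h) (fun x y y' h => hm2 x x.2 y.2 y'.2 h)
      (fun x y w => Subtype.ext (hassoc x x.2 y y.2 w w.2))
      (fun x => Subtype.ext (hid x x.2)) (fun x h h' => hlt x ⟨h, h'⟩)
    have hext : ∀ x (hx : x ∈ Set.Icc a b), Set.IccExtend hab.le f x = f ⟨x, hx⟩ :=
      fun x hx => Set.IccExtend_of_mem hab.le f hx
    refine ⟨Set.IccExtend hab.le f, hf.Icc_extend'.continuousOn, fun x hx y hy hxy => ?_, ?_,
      fun x hx y hy => ?_⟩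
    · rw [hext x hx, hext y hy]
      exact hfm hxy
    · rw [hext a ha, hf0]
    · rw [hext _ (hmaps x hx y hy), hext x hx, hext y hy, hext b hb]
      exact hfA ⟨x, hx⟩ ⟨y, hy⟩
  · rintro ⟨f, hf, hfm, hf0, hfA⟩
    have hfb : ∀ x ∈ Set.Icc a b, f x ≤ f b := fun x hx => hfm.monotoneOn hx hb hx.2
    refine ⟨?_, fun y hy x hx x' hx' h => ?_, fun x hx y hy y' hy' h => ?_,
      fun x hx y hy z hz => ?_, fun x hx => ?_, fun x hx => ?_⟩
    · have hemb : Topology.IsClosedEmbedding ((Set.Icc a b).domRestrict f) :=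
        (continuousOn_iff_continuous_domRestrict.1 hf).isClosedEmbedding
          fun x y h => Subtype.ext (hfm.injOn x.2 y.2 h)
      let B : ↥(Set.Icc a b ×ˢ Set.Icc a b) → Set.Icc a b := fun p =>
        ⟨A p.1.1 p.1.2, hmaps _ p.2.1 _ p.2.2⟩
      have hB : Continuous B := by
        rw [hemb.isInducing.continuous_iff]
        have heq : (Set.Icc a b).domRestrict f ∘ B =
            fun p => min (f p.1.1 + f p.1.2) (f b) := by
          funext p
          exact hfA _ p.2.1 _ p.2.2
        rw [heq]
        have h1 : Continuous fun p : ↥(Set.Icc a b ×ˢ Set.Icc a b) => f p.1.1 :=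
          hf.comp_continuous (by fun_prop) fun p => p.2.1
        have h2 : Continuous fun p : ↥(Set.Icc a b ×ˢ Set.Icc a b) => f p.1.2 :=
          hf.comp_continuous (by fun_prop) fun p => p.2.2
        exact (h1.add h2).min continuous_const
      exact continuousOn_iff_continuous_domRestrict.2 (continuous_subtype_val.comp hB)
    · refine (hfm.le_iff_le (hmaps x hx y hy) (hmaps x' hx' y hy)).1 ?_
      rw [hfA x hx y hy, hfA x' hx' y hy]
      have := hfm.monotoneOn hx hx' h
      gcongr
    · refine (hfm.le_iff_le (hmaps x hx y hy) (hmaps x hx y' hy')).1 ?_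
      rw [hfA x hx y hy, hfA x hx y' hy']
      have := hfm.monotoneOn hy hy' h
      gcongr
    · have hxy := hmaps x hx y hy
      have hyz := hmaps y hy z hz
      refine hfm.injOn (hmaps _ hxy z hz) (hmaps x hx _ hyz) ?_
      rw [hfA _ hxy z hz, hfA x hx _ hyz, hfA x hx y hy, hfA y hy z hz, LingAux.min_add_assoc]
    · refine hfm.injOn (hmaps a ha x hx) hx ?_
      rw [hfA a ha x hx, hf0, zero_add, min_eq_left (hfb x hx)]
    · have hx' := Set.Ioo_subset_Icc_self hx
      refine (hfm.lt_iff_lt hx' (hmaps x hx' x hx')).1 ?_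
      have hxb : f x < f b := hfm hx' hb hx.2
      have hx0 : f x ≠ 0 := by
        have := hfm ha hx' hx.1
        rw [hf0] at this
        exact this.ne'
      rw [hfA x hx' x hx']
      exact lt_min (ENNReal.lt_add_right hxb.ne_top hx0) hxb
end

section
/- Let E be a real interval, finite or infinite. If A : E² → E is continuous, nondecreasing in each variable, idempotent (A(x,x)=x for all x∈E), associative, and has an identity element e ∈ E (i.e., A(e,x)=A(x,e)=x for all x∈E), then A(x,y) = min(x,y) for all x,y ∈ E, or A(x,y) = max(x,y) for all x,y ∈ E. -/
/-! On pairs below the identity `e`, monotonicity and idempotency force `A = min`; on pairs above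
`e` they force `A = max`. So it suffices that `E` lies on one side of `e`. If `a < e < b` in `E`,
associativity and idempotency give `A a (A a b) = A a b = A (A a b) b`, whence `A a b ∈ {a, b}`.
Then `A a ·` on `[e, b]` and `A · b` on `[a, e]` never take the value `e`, so by the intermediate
value theorem `A a b = a` (as `A a e = a < e`) and `A a b = b` (as `A e b = b > e`), which is
absurd. -/

/-- **Czogała–Drewniak theorem (continuous case).**
Let `E` be a real interval. If `A : E² → E` is continuous, nondecreasing in each variable,
idempotent, associative, and has an identity element `e ∈ E`, then `A = min` or `A = max`
on `E²`. -/
theorem czogala_drewniak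
    (E : Set ℝ) (hE : E.OrdConnected) (hEne : E.Nonempty)
    (A : ℝ → ℝ → ℝ)
    (hmaps : ∀ x ∈ E, ∀ y ∈ E, A x y ∈ E)
    (hcont : ContinuousOn (fun p : ℝ × ℝ => A p.1 p.2) (E ×ˢ E))
    (hmono1 : ∀ y ∈ E, MonotoneOn (fun x => A x y) E)
    (hmono2 : ∀ x ∈ E, MonotoneOn (fun y => A x y) E)
    (hidem : ∀ x ∈ E, A x x = x)
    (hassoc : ∀ x ∈ E, ∀ y ∈ E, ∀ z ∈ E, A (A x y) z = A x (A y z))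
    (e : ℝ) (he : e ∈ E) (hident : ∀ x ∈ E, A e x = x ∧ A x e = x) :
    (∀ x ∈ E, ∀ y ∈ E, A x y = min x y) ∨ (∀ x ∈ E, ∀ y ∈ E, A x y = max x y) := by
  have hmin : ∀ x ∈ E, ∀ y ∈ E, x ≤ e → y ≤ e → A x y = min x y := by
    intro x hx y hy hxe hye
    have h1 : A x y ≤ A x e := hmono2 x hx hy he hye
    have h2 : A x y ≤ A e y := hmono1 y hy hx he hxe
    rw [(hident x hx).2] at h1
    rw [(hident y hy).1] at h2
    refine le_antisymm (le_min h1 h2) ?_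
    rcases le_total x y with h | h
    · have h3 : A x x ≤ A x y := hmono2 x hx hx hy h
      rw [hidem x hx] at h3
      rwa [min_eq_left h]
    · have h3 : A y y ≤ A x y := hmono1 y hy hy hx h
      rw [hidem y hy] at h3
      rwa [min_eq_right h]
  have hmax : ∀ x ∈ E, ∀ y ∈ E, e ≤ x → e ≤ y → A x y = max x y := by
    intro x hx y hy hxe hye
    have h1 : A x e ≤ A x y := hmono2 x hx he hy hye
    have h2 : A e y ≤ A x y := hmono1 y hy he hx hxe
    rw [(hident x hx).2] at h1
    rw [(hident y hy).1] at h2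
    refine le_antisymm ?_ (max_le h1 h2)
    rcases le_total x y with h | h
    · have h3 : A x y ≤ A y y := hmono1 y hy hx hy h
      rw [hidem y hy] at h3
      rwa [max_eq_right h]
    · have h3 : A x y ≤ A x x := hmono2 x hx hy hx h
      rw [hidem x hx] at h3
      rwa [max_eq_left h]
  have hsel : ∀ a ∈ E, ∀ b ∈ E, a ≤ e → e ≤ b → A a b = a ∨ A a b = b := by
    intro a ha b hb hae heb
    have hc := hmaps a ha b hb
    rcases le_total (A a b) e with h | h
    · left
      have h1 := hassoc a ha a ha b hb
      rw [hidem a ha, hmin a ha _ hc hae h] at h1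
      have h2 : A a e ≤ A a b := hmono2 a ha he hb heb
      rw [(hident a ha).2] at h2
      rwa [min_eq_left h2] at h1
    · right
      have h1 := hassoc a ha b hb b hb
      rw [hidem b hb, hmax _ hc b hb h heb] at h1
      have h2 : A a b ≤ A e b := hmono1 b hb ha he hae
      rw [(hident b hb).1] at h2
      rw [max_eq_right h2] at h1
      exact h1.symm
  have hside : ∀ a ∈ E, ∀ b ∈ E, a < e → e < b → False := by
    intro a ha b hb hae heb
    rcases hsel a ha b hb hae.le heb.le with h | h
    · have hsub : Set.Icc a e ⊆ E := hE.out ha he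
      have hf : ContinuousOn (fun x => A x b) (Set.Icc a e) :=
        hcont.comp (f := fun x : ℝ => (x, b)) (by fun_prop) (fun x hx => ⟨hsub hx, hb⟩)
      obtain ⟨x, hx, hxe⟩ := intermediate_value_Icc hae.le hf
        (show e ∈ Set.Icc (A a b) (A e b) by
          rw [h, (hident b hb).1]; exact ⟨hae.le, heb.le⟩)
      simp only at hxe
      rcases hsel x (hsub hx) b hb hx.2 heb.le with h' | h'
      · have hxe' : x = e := h'.symm.trans hxe
        rw [hxe', (hident b hb).1] at hxe
        exact heb.ne' hxe
      · exact heb.ne' (h'.symm.trans hxe)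
    · have hsub : Set.Icc e b ⊆ E := hE.out he hb
      have hf : ContinuousOn (fun y => A a y) (Set.Icc e b) :=
        hcont.comp (f := fun y : ℝ => (a, y)) (by fun_prop) (fun y hy => ⟨ha, hsub hy⟩)
      obtain ⟨y, hy, hye⟩ := intermediate_value_Icc heb.le hf
        (show e ∈ Set.Icc (A a e) (A a b) by
          rw [h, (hident a ha).2]; exact ⟨hae.le, heb.le⟩)
      simp only at hye
      rcases hsel a ha y (hsub hy) hae.le hy.1 with h' | h'
      · exact hae.ne (h'.symm.trans hye)
      · have hye' : y = e := h'.symm.trans hye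
        rw [hye', (hident a ha).2] at hye
        exact hae.ne hye
  by_cases hlow : ∀ x ∈ E, x ≤ e
  · exact Or.inl fun x hx y hy => hmin x hx y hy (hlow x hx) (hlow y hy)
  · push Not at hlow
    obtain ⟨b, hb, heb⟩ := hlow
    have hup : ∀ x ∈ E, e ≤ x := fun x hx => not_lt.mp fun hxe => hside x hx b hb hxe heb
    exact Or.inr fun x hx y hy => hmax x hx y hy (hup x hx) (hup y hy)
end
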